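/- arXiv:1912.01283 — 5 statements merged into one kernel-verified Lean document; each statement's English description precedes it below -/
import Mathlib

section
/- Let Ω ⊂ ℝ^N (N ≥ 3) be a bounded open set with C² boundary, W : Ω → [0,∞) continuous, K : Ω × ∂Ω → [0,∞) continuous, and suppose there exist C ≥ 1 and ε > 0 such that for every y ∈ ∂Ω and every β ∈ (0,ε): C⁻¹ ≤ ∫_{Σ_β} W(x) K(x,y) dH^{N−1}(x) ≤ C. Then there exists C₁ ≥ 1 such that for every finite positive Borel measure ν on ∂Ω: C₁⁻¹ ν(∂Ω) ≤ ∫_Ω W(x) (∫_{∂Ω} K(x,y) dν(y)) dx ≤ C₁ ν(∂Ω). -/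
open MeasureTheory Metric Set

/-- `Ω` has `C²` boundary: near each boundary point, `Ω` coincides with the strict
sublevel set of a `C²` function with nonvanishing derivative. -/
def HasC2Boundary {N : ℕ} (Ω : Set (EuclideanSpace ℝ (Fin N))) : Prop :=
  ∀ p ∈ frontier Ω, ∃ (U : Set (EuclideanSpace ℝ (Fin N)))
    (f : EuclideanSpace ℝ (Fin N) → ℝ),
    IsOpen U ∧ p ∈ U ∧ ContDiffOn ℝ 2 f U ∧ (∀ x ∈ U, fderiv ℝ f x ≠ 0) ∧
    Ω ∩ U = {x ∈ U | f x < 0}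

open scoped NNReal ENNReal InnerProductSpace

section Hausdorff

theorem injOn_of_edist_le_mul {X Y : Type*} [MetricSpace X] [MetricSpace Y]
    {φ : X → Y} {T : Set X} {k : ℝ≥0}
    (hφ : ∀ x ∈ T, ∀ z ∈ T, edist x z ≤ k * edist (φ x) (φ z)) : InjOn φ T := by
  intro x hx z hz h
  simpa [h] using hφ x hx z hz

variable {X Y : Type*} [MetricSpace X] [MeasurableSpace X] [BorelSpace X]
  [MetricSpace Y] [MeasurableSpace Y] [BorelSpace Y]

theorem hausdorffMeasure_le_mul_image {φ : X → Y} {T : Set X} {k : ℝ≥0}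
    (hφ : ∀ x ∈ T, ∀ z ∈ T, edist x z ≤ k * edist (φ x) (φ z)) {d : ℝ} (hd : 0 ≤ d) :
    μH[d] T ≤ (k : ℝ≥0∞) ^ d * μH[d] (φ '' T) := by
  rcases T.eq_empty_or_nonempty with rfl | ⟨x₀, hx₀⟩
  · simp
  have : Nonempty X := ⟨x₀⟩
  have hinv := (injOn_of_edist_le_mul hφ).leftInvOn_invFunOn
  have hlip : LipschitzOnWith k (Function.invFunOn φ T) (φ '' T) := by
    rintro _ ⟨x, hx, rfl⟩ _ ⟨z, hz, rfl⟩
    rw [hinv hx, hinv hz]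
    exact hφ x hx z hz
  simpa [hinv.image_image] using hlip.hausdorffMeasure_image_le hd

theorem setLIntegral_comp_le_mul_hausdorffMeasure {φ : X → Y} (hm : Measurable φ) {T : Set X}
    {k : ℝ≥0} (hφ : ∀ x ∈ T, ∀ z ∈ T, edist x z ≤ k * edist (φ x) (φ z)) {d : ℝ} (hd : 0 ≤ d)
    {h : Y → ℝ≥0∞} (hh : Measurable h) :
    ∫⁻ x in T, h (φ x) ∂μH[d] ≤ (k : ℝ≥0∞) ^ d * ∫⁻ y in φ '' T, h y ∂μH[d] := by
  rw [← lintegral_map hh hm, ← smul_eq_mul, ← lintegral_smul_measure]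
  refine lintegral_mono' (Measure.le_iff.2 fun B hB ↦ ?_) le_rfl
  rw [Measure.map_apply hm hB, Measure.restrict_apply (hm hB), Measure.smul_apply, smul_eq_mul,
    Measure.restrict_apply hB, inter_comm B, ← image_inter_preimage, inter_comm]
  exact hausdorffMeasure_le_mul_image (fun x hx z hz ↦ hφ x hx.1 z hz.1) hd

theorem setLIntegral_image_le_mul_hausdorffMeasure {φ : X → Y} (hm : Measurable φ) {T : Set X}
    {k : ℝ≥0} (hφ : LipschitzOnWith k φ T) {d : ℝ} (hd : 0 ≤ d)
    {h : Y → ℝ≥0∞} (hh : Measurable h) :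
    ∫⁻ y in φ '' T, h y ∂μH[d] ≤ (k : ℝ≥0∞) ^ d * ∫⁻ x in T, h (φ x) ∂μH[d] := by
  rw [← lintegral_map hh hm, ← smul_eq_mul, ← lintegral_smul_measure]
  refine lintegral_mono' (Measure.le_iff.2 fun B hB ↦ ?_) le_rfl
  rw [Measure.smul_apply, smul_eq_mul, Measure.map_apply hm hB, Measure.restrict_apply (hm hB),
    Measure.restrict_apply hB, inter_comm B, ← image_inter_preimage, inter_comm (φ ⁻¹' B)]
  exact (hφ.mono inter_subset_left).hausdorffMeasure_image_le hd

end Hausdorff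

section Slices

variable {E : Type*} [NormedAddCommGroup E] [InnerProductSpace ℝ E]

/-- A `1`-Lipschitz function that grows at rate at least `1/2` in the direction `e` is, together
with the orthogonal projection along `e`, a bi-Lipschitz chart. -/
theorem dist_le_mul_of_growth {e : E} (he : ‖e‖ = 1) {δ : E → ℝ} (hδ : LipschitzWith 1 δ)
    {S : Set E} (hS : ∀ x ∈ S, ∀ z ∈ S, 0 ≤ ⟪e, x - z⟫_ℝ →
      δ z + ⟪e, x - z⟫_ℝ / 2 ≤ δ (z + ⟪e, x - z⟫_ℝ • e)) {x z : E} (hx : x ∈ S) (hz : z ∈ S) :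
    dist x z ≤ 3 * dist ((ℝ ∙ e)ᗮ.orthogonalProjectionOnto x)
      ((ℝ ∙ e)ᗮ.orthogonalProjectionOnto z) + 2 * dist (δ x) (δ z) := by
  wlog h0 : 0 ≤ ⟪e, x - z⟫_ℝ generalizing x z
  · have := this hz hx (by rw [← neg_sub, inner_neg_right]; linarith)
    rwa [dist_comm x, dist_comm (δ x), dist_comm ((ℝ ∙ e)ᗮ.orthogonalProjectionOnto x)]
  set t := ⟪e, x - z⟫_ℝ with ht
  have hgrow := hS x hx z hz h0
  have hpr : dist ((ℝ ∙ e)ᗮ.orthogonalProjectionOnto x)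
      ((ℝ ∙ e)ᗮ.orthogonalProjectionOnto z) = ‖x - z - t • e‖ := by
    rw [dist_eq_norm, ← map_sub, ← Submodule.norm_coe, ← Submodule.starProjection_apply,
      Submodule.starProjection_orthogonal_val, Submodule.starProjection_unit_singleton ℝ he]
  have h1 : dist (δ (z + t • e)) (δ x) ≤ ‖x - z - t • e‖ := by
    have := hδ.dist_le_mul (z + t • e) x
    rw [NNReal.coe_one, one_mul, dist_comm (z + t • e), dist_eq_norm x] at this
    rwa [sub_sub]
  have h2 : ‖x - z‖ ≤ ‖x - z - t • e‖ + t := by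
    calc ‖x - z‖ = ‖(x - z - t • e) + t • e‖ := by rw [sub_add_cancel]
      _ ≤ _ := norm_add_le _ _
      _ = _ := by rw [norm_smul, he, mul_one, Real.norm_of_nonneg h0]
  rw [hpr, dist_eq_norm]
  rw [Real.dist_eq] at h1 ⊢
  have h3 := (abs_le.1 h1).2
  have h4 := le_abs_self (δ x - δ z)
  linarith

variable [FiniteDimensional ℝ E] [MeasurableSpace E] [BorelSpace E]

/-- Under the growth condition of `dist_le_mul_of_growth`, the integral of `g` over `S` is
comparable, uniformly in `g`, to the integral over `β` of a measurable function of `β` that is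
comparable to the integral of `g` over the level set `δ = β` in `S`. -/
theorem exists_slice_comparison {e : E} (he : ‖e‖ = 1) {δ : E → ℝ} (hδ : LipschitzWith 1 δ)
    {S : Set E} (hSm : MeasurableSet S) (hS : ∀ x ∈ S, ∀ z ∈ S, 0 ≤ ⟪e, x - z⟫_ℝ →
      δ z + ⟪e, x - z⟫_ℝ / 2 ≤ δ (z + ⟪e, x - z⟫_ℝ • e)) :
    ∃ c : ℝ≥0, ∀ g : E → ℝ≥0∞, Measurable g → ∃ G : ℝ → ℝ≥0∞, Measurable G ∧
      ∫⁻ x in S, g x ≤ c * ∫⁻ β, G β ∧ ∫⁻ β, G β ≤ c * ∫⁻ x in S, g x ∧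
      ∀ β, G β ≤ c * ∫⁻ x in S ∩ {x | δ x = β}, g x ∂μH[(Module.finrank ℝ E : ℝ) - 1] ∧
        ∫⁻ x in S ∩ {x | δ x = β}, g x ∂μH[(Module.finrank ℝ E : ℝ) - 1] ≤ c * G β := by
  have he0 : e ≠ 0 := by rintro rfl; simp at he
  let F := (ℝ ∙ e)ᗮ
  let pr : E → F := fun x ↦ F.orthogonalProjectionOnto x
  let Φ : E → F × ℝ := fun x ↦ (pr x, δ x)
  have hfin1 : Module.finrank ℝ F + 1 = Module.finrank ℝ E := by
    have := Submodule.finrank_add_finrank_orthogonal (ℝ ∙ e)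
    rw [finrank_span_singleton he0] at this
    rw [← this, add_comm]
  have hfinR : (Module.finrank ℝ E : ℝ) - 1 = Module.finrank ℝ F := by
    rw [← hfin1]; push_cast; ring
  have hfin2 : Module.finrank ℝ (F × ℝ) = Module.finrank ℝ E := by
    rw [Module.finrank_prod, Module.finrank_self, hfin1]
  rw [hfinR]
  have hprc : Continuous pr := F.orthogonalProjectionOnto.continuous
  have hprl : LipschitzWith 1 pr := by
    refine LipschitzWith.of_dist_le_mul fun x z ↦ ?_
    rw [dist_eq_norm, dist_eq_norm, ← map_sub, NNReal.coe_one, one_mul]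
    exact F.norm_orthogonalProjectionOnto_apply_le _
  have hΦl : LipschitzWith 1 Φ := by simpa using hprl.prodMk hδ
  have hΦm : Measurable Φ := hΦl.continuous.measurable
  have hanti : ∀ x ∈ S, ∀ z ∈ S, edist x z ≤ (5 : ℝ≥0) * edist (Φ x) (Φ z) := by
    intro x hx z hz
    have h := dist_le_mul_of_growth he hδ hS hx hz
    rw [edist_nndist, edist_nndist, ← ENNReal.coe_mul, ENNReal.coe_le_coe, ← NNReal.coe_le_coe]
    push_cast
    rw [Prod.dist_eq]
    have h1 := le_max_left (dist (Φ x).1 (Φ z).1) (dist (Φ x).2 (Φ z).2)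
    have h2 := le_max_right (dist (Φ x).1 (Φ z).1) (dist (Φ x).2 (Φ z).2)
    change dist x z ≤ 3 * dist (Φ x).1 (Φ z).1 + 2 * dist (Φ x).2 (Φ z).2 at h
    linarith
  have hantiβ : ∀ β, ∀ x ∈ S ∩ {x | δ x = β}, ∀ z ∈ S ∩ {x | δ x = β},
      edist x z ≤ (5 : ℝ≥0) * edist (pr x) (pr z) := by
    rintro β x ⟨hx, hxβ⟩ z ⟨hz, hzβ⟩
    have h := hanti x hx z hz
    have h' : edist (Φ x) (Φ z) = edist (pr x) (pr z) := by
      rw [Prod.edist_eq]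
      simp only [Φ, hxβ.out, hzβ.out, edist_self, max_eq_left (zero_le)]
    rwa [h'] at h
  have hinj : InjOn Φ S := injOn_of_edist_le_mul hanti
  have hSΦ : MeasurableSet (Φ '' S) :=
    hSm.image_of_continuousOn_injOn hΦl.continuous.continuousOn hinj
  let m : Measure (F × ℝ) := (μH[Module.finrank ℝ F] : Measure F).prod volume
  let μ : Measure E := μH[Module.finrank ℝ E]
  let mH : Measure (F × ℝ) := μH[Module.finrank ℝ (F × ℝ)]
  have e1 := Measure.isAddLeftInvariant_eq_smul m mH
  have e2 := Measure.isAddLeftInvariant_eq_smul mH m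
  have e3 := Measure.isAddLeftInvariant_eq_smul (volume : Measure E) μ
  have e4 := Measure.isAddLeftInvariant_eq_smul μ (volume : Measure E)
  set a1 := m.addHaarScalarFactor mH
  set a2 := mH.addHaarScalarFactor m
  set a3 := (volume : Measure E).addHaarScalarFactor μ
  set a4 := μ.addHaarScalarFactor (volume : Measure E)
  let k : ℝ≥0 := 5 ^ (Module.finrank ℝ E)
  let l : ℝ≥0 := 5 ^ (Module.finrank ℝ F)
  refine ⟨a3 * k * a2 + a1 * a4 + l + 1, fun g hg ↦ ?_⟩
  have hemb : MeasurableEmbedding (S.domRestrict Φ) :=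
    hΦl.continuous.continuousOn.measurableEmbedding hSm hinj
  let h : F × ℝ → ℝ≥0∞ := Function.extend (S.domRestrict Φ) (S.domRestrict g) 0
  have hh : Measurable h :=
    hemb.measurable_extend (hg.comp measurable_subtype_coe) measurable_const
  have hhΦ : ∀ x ∈ S, h (Φ x) = g x := fun x hx ↦
    hemb.injective.extend_apply (S.domRestrict g) 0 ⟨x, hx⟩
  have hh0 : ∀ w, w ∉ Φ '' S → h w = 0 := fun w hw ↦
    Function.extend_apply' _ _ _ fun ⟨x, hx⟩ ↦ hw ⟨x, x.2, hx⟩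
  have himage : ∫⁻ w in Φ '' S, h w ∂mH = ∫⁻ w, h w ∂mH := by
    rw [← lintegral_indicator hSΦ, indicator_eq_self.2 fun w hw ↦ not_not.1 (mt (hh0 w) hw)]
  have hsection : ∀ β, pr '' (S ∩ {x | δ x = β}) = (fun v ↦ (v, β)) ⁻¹' (Φ '' S) := by
    intro β
    ext v
    constructor
    · rintro ⟨x, ⟨hx, hxβ⟩, rfl⟩
      exact ⟨x, hx, Prod.ext rfl hxβ⟩
    · rintro ⟨x, hx, hxv⟩
      exact ⟨x, ⟨hx, congrArg Prod.snd hxv⟩, congrArg Prod.fst hxv⟩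
  have hsectionm : ∀ β, MeasurableSet (pr '' (S ∩ {x | δ x = β})) := fun β ↦ by
    rw [hsection]
    exact measurable_prodMk_right hSΦ
  have himageβ : ∀ β, ∫⁻ v in pr '' (S ∩ {x | δ x = β}), h (v, β) ∂μH[Module.finrank ℝ F]
      = ∫⁻ v, h (v, β) ∂μH[Module.finrank ℝ F] := by
    intro β
    rw [← lintegral_indicator (hsectionm β), indicator_eq_self.2 fun v hv ↦ ?_]
    rw [hsection]
    exact not_not.1 (mt (hh0 (v, β)) hv)
  have hpull : ∫⁻ x in S, h (Φ x) ∂μ = ∫⁻ x in S, g x ∂μ := setLIntegral_congr_fun hSm hhΦ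
  have hpullβ : ∀ β, ∫⁻ x in S ∩ {x | δ x = β}, h (pr x, β) ∂μH[Module.finrank ℝ F]
      = ∫⁻ x in S ∩ {x | δ x = β}, g x ∂μH[Module.finrank ℝ F] := by
    intro β
    refine setLIntegral_congr_fun
      (hSm.inter (hδ.continuous.measurable (measurableSet_singleton β))) ?_
    rintro x ⟨hx, hxβ⟩
    rw [← hhΦ x hx]
    simp only [Φ, hxβ.out]
  have hfub : ∫⁻ w, h w ∂m = ∫⁻ β, ∫⁻ v, h (v, β) ∂μH[Module.finrank ℝ F] :=
    lintegral_prod_symm _ hh.aemeasurable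
  refine ⟨fun β ↦ ∫⁻ v, h (v, β) ∂μH[Module.finrank ℝ F], hh.lintegral_prod_left', ?_, ?_, ?_⟩
  · rw [← hfub]
    calc ∫⁻ x in S, g x = a3 * ∫⁻ x in S, h (Φ x) ∂μ := by
          rw [hpull, e3, Measure.restrict_smul, lintegral_smul_measure]; rfl
      _ ≤ a3 * (((5 : ℝ≥0) : ℝ≥0∞) ^ (Module.finrank ℝ E : ℝ) * ∫⁻ w in Φ '' S, h w ∂mH) := by
          gcongr
          simpa only [mH, hfin2] using
            setLIntegral_comp_le_mul_hausdorffMeasure hΦm hanti (Nat.cast_nonneg _) hh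
      _ = (a3 * k * a2 : ℝ≥0) * ∫⁻ w, h w ∂m := by
          rw [himage, e2, lintegral_smul_measure, ENNReal.rpow_natCast,
            ENNReal.smul_def, smul_eq_mul]
          simp only [k]
          push_cast
          ring
      _ ≤ _ := by
          gcongr
          rw [add_assoc, add_assoc]
          exact le_self_add
  · rw [← hfub]
    calc ∫⁻ w, h w ∂m = a1 * ∫⁻ w in Φ '' S, h w ∂mH := by
          rw [himage, e1, lintegral_smul_measure]; rfl
      _ ≤ a1 * (((1 : ℝ≥0) : ℝ≥0∞) ^ (Module.finrank ℝ E : ℝ) * ∫⁻ x in S, h (Φ x) ∂μ) := by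
          gcongr
          simpa only [mH, hfin2] using setLIntegral_image_le_mul_hausdorffMeasure hΦm
            (hΦl.lipschitzOnWith (s := S)) (Nat.cast_nonneg _) hh
      _ = (a1 * a4 : ℝ≥0) * ∫⁻ x in S, g x := by
          rw [hpull, e4, Measure.restrict_smul, lintegral_smul_measure,
            ENNReal.smul_def, smul_eq_mul, ENNReal.coe_one, ENNReal.one_rpow, one_mul,
            ENNReal.coe_mul, mul_assoc]
      _ ≤ _ := by
          gcongr
          rw [add_assoc, add_right_comm]
          exact le_add_self
  · intro β
    have hhβ : Measurable fun v ↦ h (v, β) := hh.comp measurable_prodMk_right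
    constructor
    · calc ∫⁻ v, h (v, β) ∂μH[Module.finrank ℝ F]
          ≤ ((1 : ℝ≥0) : ℝ≥0∞) ^ (Module.finrank ℝ F : ℝ) *
            ∫⁻ x in S ∩ {x | δ x = β}, h (pr x, β) ∂μH[Module.finrank ℝ F] := by
            rw [← himageβ]
            exact setLIntegral_image_le_mul_hausdorffMeasure hprc.measurable
              hprl.lipschitzOnWith (Nat.cast_nonneg _) hhβ
        _ = (1 : ℝ≥0) * ∫⁻ x in S ∩ {x | δ x = β}, g x ∂μH[Module.finrank ℝ F] := by
            rw [hpullβ, ENNReal.coe_one, ENNReal.one_rpow]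
        _ ≤ _ := by
            gcongr
            exact le_add_self
    · calc ∫⁻ x in S ∩ {x | δ x = β}, g x ∂μH[Module.finrank ℝ F]
          ≤ ((5 : ℝ≥0) : ℝ≥0∞) ^ (Module.finrank ℝ F : ℝ) *
            ∫⁻ v in pr '' (S ∩ {x | δ x = β}), h (v, β) ∂μH[Module.finrank ℝ F] := by
            rw [← hpullβ]
            exact setLIntegral_comp_le_mul_hausdorffMeasure hprc.measurable (hantiβ β)
              (Nat.cast_nonneg _) hhβ
        _ = l * ∫⁻ v, h (v, β) ∂μH[Module.finrank ℝ F] := by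
            rw [himageβ, ENNReal.rpow_natCast]
            simp only [l]
            push_cast
            rfl
        _ ≤ _ := by
            gcongr
            rw [add_right_comm]
            exact le_add_self

end Slices

section Distance

variable {E : Type*} [NormedAddCommGroup E] [InnerProductSpace ℝ E] [FiniteDimensional ℝ E]

theorem infDist_frontier_le_dist {Ω : Set E} {x y : E} (hx : x ∈ Ω) (hy : y ∉ Ω) :
    infDist x (frontier Ω) ≤ dist x y := by
  obtain ⟨z, hz, hxz⟩ := exists_mem_frontier_infDist_compl_eq_dist hx
    (fun h ↦ hy (h ▸ mem_univ y))
  exact (infDist_le_dist_of_mem hz).trans (hxz ▸ infDist_le_dist_of_mem hy)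

/-- Near a boundary point at which `Ω` is locally the sublevel set of a function with nonzero
strict derivative, the distance to the boundary grows at rate at least `1/2` in the direction
of the inner normal at that point. -/
theorem exists_direction_growth_infDist_frontier {Ω U : Set E} (hΩ : IsOpen Ω) {p : E}
    (hp : p ∈ frontier Ω) (hU : IsOpen U) (hpU : p ∈ U) {f : E → ℝ} {f' : E →L[ℝ] ℝ}
    (hf : HasStrictFDerivAt f f' p) (hf' : f' ≠ 0) (hΩU : Ω ∩ U = {x ∈ U | f x < 0}) :
    ∃ e : E, ‖e‖ = 1 ∧ ∃ ρ > 0, ∀ z ∈ Ω ∩ ball p ρ, ∀ t ∈ Icc 0 (2 * ρ),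
      infDist z (frontier Ω) + t / 2 ≤ infDist (z + t • e) (frontier Ω) := by
  have hL : 0 < ‖f'‖ := norm_pos_iff.2 hf'
  set v := (InnerProductSpace.toDual ℝ E).symm f' with hv
  have hvn : ‖v‖ = ‖f'‖ := LinearIsometryEquiv.norm_map _ _
  have hv' : ∀ w, f' w = ⟪v, w⟫_ℝ := fun w ↦ by simp [hv]
  let e := -(‖v‖⁻¹ • v)
  have hv0 : 0 < ‖v‖ := hvn ▸ hL
  have he : ‖e‖ = 1 := by
    simp only [e, norm_neg, norm_smul, norm_inv, norm_norm]
    exact inv_mul_cancel₀ hv0.ne'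
  have hfe : f' e = -‖f'‖ := by
    rw [hv', ← hvn]
    simp only [e, inner_neg_right, inner_smul_right, real_inner_self_eq_norm_sq]
    field_simp
  have hev := hf.isLittleO.bound (show (0:ℝ) < ‖f'‖ / 3 by positivity)
  rw [Filter.eventually_iff, Metric.mem_nhds_iff] at hev
  obtain ⟨r₁, hr₁, hball⟩ := hev
  obtain ⟨r₂, hr₂, hUball⟩ := Metric.isOpen_iff.1 hU p hpU
  let ρ := min r₁ r₂ / 10
  have hρ : 0 < ρ := by positivity
  have hρ1 : 10 * ρ ≤ r₁ := by simp only [ρ]; linarith [min_le_left r₁ r₂]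
  have hρ2 : 10 * ρ ≤ r₂ := by simp only [ρ]; linarith [min_le_right r₁ r₂]
  refine ⟨e, he, ρ, hρ, ?_⟩
  rintro z ⟨hz, hzp⟩ t ⟨ht0, ht⟩
  rw [mem_ball] at hzp
  have hte : ‖t • e‖ = t := by rw [norm_smul, he, mul_one, Real.norm_of_nonneg ht0]
  obtain ⟨q, hq, hqd⟩ := isClosed_frontier.exists_infDist_eq_dist ⟨p, hp⟩ (z + t • e)
  have hzt : dist (z + t • e) p ≤ dist z p + t := by
    calc dist (z + t • e) p ≤ dist (z + t • e) z + dist z p := dist_triangle _ _ _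
      _ = dist z p + t := by rw [dist_eq_norm, add_sub_cancel_left, hte, add_comm]
  have hqz : dist (z + t • e) q ≤ dist (z + t • e) p := hqd ▸ infDist_le_dist_of_mem hp
  have hqp : dist q p < 6 * ρ := by
    have := dist_triangle_left q p (z + t • e)
    linarith
  have hqΩ : q ∉ Ω := fun h ↦ by
    rw [hΩ.frontier_eq] at hq
    exact hq.2 h
  have hout : ∀ y ∈ ball p (10 * ρ), y ∉ Ω ↔ 0 ≤ f y := by
    intro y hy
    have hyU : y ∈ U := hUball (ball_subset_ball hρ2 hy)
    have : y ∈ Ω ∩ U ↔ y ∈ {x ∈ U | f x < 0} := by rw [hΩU]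
    simp only [mem_inter_iff, hyU, and_true, mem_sep_iff, true_and] at this
    rw [this, not_lt]
  have hqball : q ∈ ball p (10 * ρ) := by rw [mem_ball]; linarith
  have hfq : 0 ≤ f q := (hout q hqball).1 hqΩ
  have hcone : ∀ w : E, ‖w‖ ≤ t / 2 → q - t • e + w ∉ Ω := by
    intro w hw
    have hnorm : ‖w - t • e‖ ≤ 3 / 2 * t := by
      have := norm_sub_le w (t • e)
      linarith
    have hyball : q - t • e + w ∈ ball p (10 * ρ) := by
      have h1 : q - t • e + w = q + (w - t • e) := by abel
      have h2 : dist (q + (w - t • e)) q = ‖w - t • e‖ := by simp [dist_eq_norm]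
      have := dist_triangle (q + (w - t • e)) q p
      rw [mem_ball, h1]
      linarith
    refine (hout _ hyball).2 ?_
    have hpair : (q - t • e + w, q) ∈ ball (p, p) r₁ := by
      rw [← ball_prod_same]
      exact ⟨ball_subset_ball hρ1 hyball, ball_subset_ball hρ1 hqball⟩
    have hb := hball hpair
    simp only [mem_ofPred_eq] at hb
    have h3 : q - t • e + w - q = w - t • e := by abel
    rw [h3, map_sub, map_smul, hfe, Real.norm_eq_abs, smul_eq_mul] at hb
    have h4 := (abs_le.1 hb).1
    have h5 : -(‖f'‖ * (t / 2)) ≤ f' w := by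
      have := (abs_le.1 (Real.norm_eq_abs (f' w) ▸ f'.le_opNorm w)).1
      have := mul_le_mul_of_nonneg_left hw hL.le
      linarith
    have h6 := mul_le_mul_of_nonneg_left hnorm (show 0 ≤ ‖f'‖ / 3 by positivity)
    linarith
  rw [hqd]
  set u := z + t • e - q with hu
  have hdu : dist (z + t • e) q = ‖u‖ := dist_eq_norm _ _
  have hzu : z = q - t • e + u := by rw [hu]; abel
  have hut : t / 2 < ‖u‖ := by
    by_contra! h
    exact hcone u h (hzu ▸ hz)
  have hu0 : 0 < ‖u‖ := by linarith
  have hw : ‖(t / 2 / ‖u‖) • u‖ = t / 2 := by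
    rw [norm_smul, Real.norm_of_nonneg (by positivity)]
    field_simp
  have hle := infDist_frontier_le_dist hz (hcone _ hw.le)
  have hd : dist z (q - t • e + (t / 2 / ‖u‖) • u) = ‖u‖ - t / 2 := by
    have h1 : z - (q - t • e + (t / 2 / ‖u‖) • u) = (1 - t / 2 / ‖u‖) • u := by
      rw [sub_smul, one_smul]
      nth_rw 1 [hzu]
      abel
    have h2 : 0 ≤ 1 - t / 2 / ‖u‖ := by
      rw [sub_nonneg, div_le_one hu0]
      exact hut.le
    rw [dist_eq_norm, h1, norm_smul, Real.norm_of_nonneg h2]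
    field_simp
  rw [hdu]
  linarith

end Distance

section Collar

variable {E : Type*} [NormedAddCommGroup E] [InnerProductSpace ℝ E] [FiniteDimensional ℝ E]
  [MeasurableSpace E] [BorelSpace E]

/-- Integrals over a collar of the boundary are controlled, up to constants independent of the
integrand, by the integrals over the level sets of the distance to the boundary. -/
theorem exists_collar_comparison {Ω : Set E} (hΩ : IsOpen Ω) (hb : Bornology.IsBounded Ω)
    (hne : (frontier Ω).Nonempty)
    (hgrow : ∀ p ∈ frontier Ω, ∃ e : E, ‖e‖ = 1 ∧ ∃ ρ > 0, ∀ z ∈ Ω ∩ ball p ρ,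
      ∀ t ∈ Icc 0 (2 * ρ),
      infDist z (frontier Ω) + t / 2 ≤ infDist (z + t • e) (frontier Ω))
    {ε : ℝ} (hε : 0 < ε) :
    ∃ η : ℝ, 0 < η ∧ η ≤ ε ∧ ∃ c : ℝ≥0, ∀ g : E → ℝ≥0∞, Measurable g → ∀ A B : ℝ≥0∞,
      (∀ β ∈ Ioo 0 η,
        A ≤ ∫⁻ x in {x ∈ Ω | infDist x (frontier Ω) = β}, g x ∂μH[(Module.finrank ℝ E : ℝ) - 1] ∧
        ∫⁻ x in {x ∈ Ω | infDist x (frontier Ω) = β}, g x ∂μH[(Module.finrank ℝ E : ℝ) - 1]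
          ≤ B) →
      A * ENNReal.ofReal η ≤ c * ∫⁻ x in Ω, g x ∧
      ∫⁻ x in {x ∈ Ω | infDist x (frontier Ω) < η}, g x ≤ c * (B * ENNReal.ofReal η) := by
  choose! e he ρ hρ hgr using hgrow
  have hcomp : IsCompact (frontier Ω) :=
    isCompact_of_isClosed_isBounded isClosed_frontier
      (hb.closure.subset frontier_subset_closure)
  obtain ⟨t, htf, hcover⟩ := hcomp.elim_nhds_subcover (fun p ↦ ball p (ρ p))
    fun p hp ↦ ball_mem_nhds p (hρ p hp)
  obtain ⟨η₀, hη₀, hthick⟩ := hcomp.exists_thickening_subset_open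
    (isOpen_biUnion fun p _ ↦ isOpen_ball) hcover
  have hη : 0 < min η₀ ε := lt_min hη₀ hε
  refine ⟨min η₀ ε, hη, min_le_right _ _, ?_⟩
  have hη_le : min η₀ ε ≤ η₀ := min_le_left _ _
  set η := min η₀ ε
  let δ : E → ℝ := fun x ↦ infDist x (frontier Ω)
  have hδ : LipschitzWith 1 δ := lipschitz_infDist_pt _
  have hδpos : ∀ x ∈ Ω, 0 < δ x := fun x hx ↦
    (isClosed_frontier.notMem_iff_infDist_pos hne).1 fun h ↦ by
      rw [hΩ.frontier_eq] at h
      exact h.2 hx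
  let V : t → Set E := fun p ↦ Ω ∩ ball p.1 (ρ p) ∩ {x | δ x < η}
  have hVΩ : ∀ p, V p ⊆ Ω := fun p x hx ↦ hx.1.1
  have hVm : ∀ p, MeasurableSet (V p) := fun p ↦
    ((hΩ.inter isOpen_ball).inter (isOpen_lt hδ.continuous continuous_const)).measurableSet
  have hVcover : ∀ x ∈ Ω, δ x < η → ∃ p, x ∈ V p := by
    intro x hx hxη
    have := hthick ((mem_thickening_iff_infDist_lt hne).2 (hxη.trans_le hη_le))
    obtain ⟨p, hp, hxp⟩ := mem_iUnion₂.1 this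
    exact ⟨⟨p, hp⟩, ⟨hx, hxp⟩, hxη⟩
  have hslice : ∀ p : t, _ := fun p ↦ by
    refine exists_slice_comparison (he p (htf p p.2)) hδ (hVm p) fun x hx z hz h0 ↦ ?_
    refine hgr p (htf p p.2) z hz.1 _ ⟨h0, ?_⟩
    calc _ ≤ ‖e p‖ * ‖x - z‖ := real_inner_le_norm _ _
      _ = dist x z := by rw [he p (htf p p.2), one_mul, dist_eq_norm]
      _ ≤ dist x p + dist z p := dist_triangle_right _ _ _
      _ ≤ 2 * ρ p := by
        have h1 := mem_ball.1 hx.1.2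
        have h2 := mem_ball.1 hz.1.2
        linarith
  choose c hc using hslice
  refine ⟨∑ p, c p * c p, fun g hg A B hAB ↦ ?_⟩
  choose G hGm hG1 hG2 hG3 using fun p ↦ hc p g hg
  rw [ENNReal.ofNNReal_finsetSum, Finset.sum_mul, Finset.sum_mul]
  constructor
  · have hpt : ∀ β ∈ Ioo 0 η, A ≤ ∑ p, c p * G p β := by
      intro β hβ
      calc A ≤ _ := (hAB β hβ).1
        _ ≤ ∫⁻ x in ⋃ p, V p ∩ {x | δ x = β}, g x ∂μH[(Module.finrank ℝ E : ℝ) - 1] := by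
          refine lintegral_mono_set ?_
          rintro x ⟨hx, hxβ⟩
          obtain ⟨p, hp⟩ := hVcover x hx (hxβ.trans_lt hβ.2)
          exact mem_iUnion.2 ⟨p, hp, hxβ⟩
        _ ≤ ∑ p, ∫⁻ x in V p ∩ {x | δ x = β}, g x ∂μH[(Module.finrank ℝ E : ℝ) - 1] := by
          rw [← tsum_fintype (L := .unconditional _)]
          exact lintegral_iUnion_le _ _
        _ ≤ _ := Finset.sum_le_sum fun p _ ↦ (hG3 p β).2
    calc A * ENNReal.ofReal η = ∫⁻ _ in Ioo 0 η, A := by simp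
      _ ≤ ∫⁻ β in Ioo 0 η, ∑ p, c p * G p β := setLIntegral_mono' measurableSet_Ioo hpt
      _ ≤ ∫⁻ β, ∑ p, c p * G p β := setLIntegral_le_lintegral _ _
      _ = ∑ p, c p * ∫⁻ β, G p β := by
        rw [lintegral_finsetSum _ fun p _ ↦ (hGm p).const_mul _]
        exact Finset.sum_congr rfl fun p _ ↦ lintegral_const_mul _ (hGm p)
      _ ≤ _ := by
        refine Finset.sum_le_sum fun p _ ↦ ?_
        rw [ENNReal.coe_mul, mul_assoc]
        gcongr
        exact (hG2 p).trans (by gcongr; exact hVΩ p)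
  · have hpt : ∀ p β, G p β ≤ (Ioo 0 η).indicator (fun _ ↦ c p * B) β := by
      intro p β
      refine (hG3 p β).1.trans ?_
      by_cases hβ : β ∈ Ioo 0 η
      · rw [indicator_of_mem hβ]
        gcongr
        refine (lintegral_mono_set ?_).trans (hAB β hβ).2
        exact fun x hx ↦ ⟨hVΩ p hx.1, hx.2⟩
      · have hempty : V p ∩ {x | δ x = β} = ∅ := by
          rw [eq_empty_iff_forall_notMem]
          rintro x ⟨hx, rfl⟩
          exact hβ ⟨hδpos x (hVΩ p hx), hx.2⟩
        simp [hempty]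
    calc ∫⁻ x in {x ∈ Ω | δ x < η}, g x ≤ ∫⁻ x in ⋃ p, V p, g x :=
          lintegral_mono_set fun x hx ↦ mem_iUnion.2 (hVcover x hx.1 hx.2)
      _ ≤ ∑ p, ∫⁻ x in V p, g x := by
          rw [← tsum_fintype (L := .unconditional _)]
          exact lintegral_iUnion_le _ _
      _ ≤ _ := by
          refine Finset.sum_le_sum fun p _ ↦ (hG1 p).trans ?_
          rw [ENNReal.coe_mul, mul_assoc]
          gcongr
          calc ∫⁻ β, G p β ≤ ∫⁻ β, (Ioo 0 η).indicator (fun _ ↦ c p * B) β :=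
                lintegral_mono (hpt p)
            _ = _ := by
                rw [lintegral_indicator measurableSet_Ioo, setLIntegral_const, Real.volume_Ioo,
                  sub_zero, mul_assoc]

end Collar

theorem HasC2Boundary.exists_direction_growth {N : ℕ} {Ω : Set (EuclideanSpace ℝ (Fin N))}
    (h : HasC2Boundary Ω) (hΩ : IsOpen Ω) {p : EuclideanSpace ℝ (Fin N)} (hp : p ∈ frontier Ω) :
    ∃ e : EuclideanSpace ℝ (Fin N), ‖e‖ = 1 ∧ ∃ ρ > 0, ∀ z ∈ Ω ∩ ball p ρ,
      ∀ t ∈ Icc 0 (2 * ρ),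
      infDist z (frontier Ω) + t / 2 ≤ infDist (z + t • e) (frontier Ω) := by
  obtain ⟨U, f, hU, hpU, hf, hf', hΩU⟩ := h p hp
  exact exists_direction_growth_infDist_frontier hΩ hp hU hpU
    ((hf.contDiffAt (hU.mem_nhds hpU)).hasStrictFDerivAt (by norm_num)) (hf' p hpU) hΩU

/-- Level-set bounds on a nonnegative continuous kernel, uniform in the boundary point, yield
uniform bounds on its integral over the whole domain. -/
theorem exists_uniform_lintegral_bounds {N : ℕ} {Ω : Set (EuclideanSpace ℝ (Fin N))}
    (hΩ : IsOpen Ω) (hb : Bornology.IsBounded Ω) (hΩ2 : HasC2Boundary Ω)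
    {k : EuclideanSpace ℝ (Fin N) → EuclideanSpace ℝ (Fin N) → ℝ}
    (hk : ContinuousOn (Function.uncurry k) (Ω ×ˢ frontier Ω))
    {C ε : ℝ} (hC : 1 ≤ C) (hε : 0 < ε)
    (hbound : ∀ y ∈ frontier Ω, ∀ β ∈ Ioo (0:ℝ) ε,
      ENNReal.ofReal C⁻¹ ≤
        (∫⁻ x in {x ∈ Ω | infDist x (frontier Ω) = β},
          ENNReal.ofReal (k x y) ∂(μH[(N:ℝ) - 1])) ∧
      (∫⁻ x in {x ∈ Ω | infDist x (frontier Ω) = β},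
          ENNReal.ofReal (k x y) ∂(μH[(N:ℝ) - 1])) ≤ ENNReal.ofReal C) :
    ∃ C₁ : ℝ, 1 ≤ C₁ ∧ ∀ y ∈ frontier Ω,
      ENNReal.ofReal C₁⁻¹ ≤ ∫⁻ x in Ω, ENNReal.ofReal (k x y) ∧
      ∫⁻ x in Ω, ENNReal.ofReal (k x y) ≤ ENNReal.ofReal C₁ := by
  rcases (frontier Ω).eq_empty_or_nonempty with hempty | hne
  · exact ⟨1, le_rfl, by simp [hempty]⟩
  have hC0 : 0 < C := by linarith
  obtain ⟨η, hη, hηε, c, hc⟩ := exists_collar_comparison hΩ hb hne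
    (fun p hp ↦ hΩ2.exists_direction_growth hΩ hp) hε
  rw [finrank_euclideanSpace_fin] at hc
  have hδc : Continuous fun x ↦ infDist x (frontier Ω) := continuous_infDist_pt _
  let Q := {x ∈ Ω | η ≤ infDist x (frontier Ω)}
  have hQ : IsCompact Q := by
    have hQeq : Q = closure Ω ∩ {x | η ≤ infDist x (frontier Ω)} := by
      ext x
      refine ⟨fun hx ↦ ⟨subset_closure hx.1, hx.2⟩, fun ⟨hx, hxη⟩ ↦ ⟨?_, hxη⟩⟩
      by_contra hxΩ
      have hxf : x ∈ frontier Ω := by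
        rw [hΩ.frontier_eq]
        exact ⟨hx, hxΩ⟩
      rw [mem_ofPred_eq, infDist_zero_of_mem hxf] at hxη
      linarith
    rw [hQeq]
    exact hb.isCompact_closure.inter_right (isClosed_le continuous_const hδc)
  have hfc : IsCompact (frontier Ω) :=
    isCompact_of_isClosed_isBounded isClosed_frontier
      (hb.closure.subset frontier_subset_closure)
  obtain ⟨M, hM⟩ := (hQ.prod hfc).exists_bound_of_continuousOn
    (hk.mono (prod_mono (fun x hx ↦ hx.1) le_rfl))
  let D : ℝ≥0∞ := ENNReal.ofReal M * volume Q + c * (ENNReal.ofReal C * ENNReal.ofReal η)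
  have hD : D ≠ ⊤ := by
    refine ENNReal.add_ne_top.2 ⟨ENNReal.mul_ne_top ENNReal.ofReal_ne_top hQ.measure_ne_top, ?_⟩
    exact ENNReal.mul_ne_top ENNReal.coe_ne_top
      (ENNReal.mul_ne_top ENNReal.ofReal_ne_top ENNReal.ofReal_ne_top)
  let r : ℝ := C * (c + 1) / η
  have hr : 0 < r := by positivity
  refine ⟨1 + D.toReal + r, by linarith [D.toReal_nonneg], fun y hy ↦ ?_⟩
  let g : EuclideanSpace ℝ (Fin N) → ℝ≥0∞ := Ω.indicator fun x ↦ ENNReal.ofReal (k x y)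
  have hky : ContinuousOn (fun x ↦ ENNReal.ofReal (k x y)) Ω :=
    ENNReal.continuous_ofReal.comp_continuousOn
      (hk.comp (f := fun x ↦ (x, y)) (by fun_prop) fun x hx ↦ ⟨hx, hy⟩)
  have hg : Measurable g := by
    classical
    simp only [g, ← piecewise_eq_indicator]
    exact hky.measurable_piecewise continuousOn_const hΩ.measurableSet
  have hgeq : ∀ (μ : Measure (EuclideanSpace ℝ (Fin N))) (s : Set (EuclideanSpace ℝ (Fin N))),
      MeasurableSet s → s ⊆ Ω → ∫⁻ x in s, g x ∂μ = ∫⁻ x in s, ENNReal.ofReal (k x y) ∂μ :=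
    fun μ s hs hsΩ ↦ setLIntegral_congr_fun hs fun x hx ↦ indicator_of_mem (hsΩ hx) _
  have hlevel : ∀ β, MeasurableSet {x ∈ Ω | infDist x (frontier Ω) = β} := fun β ↦
    hΩ.measurableSet.inter (hδc.measurable (measurableSet_singleton β))
  have hcollar : MeasurableSet {x ∈ Ω | infDist x (frontier Ω) < η} :=
    hΩ.measurableSet.inter (hδc.measurable measurableSet_Iio)
  obtain ⟨hlow, hup⟩ := hc g hg (ENNReal.ofReal C⁻¹) (ENNReal.ofReal C) fun β hβ ↦ by
    rw [hgeq _ _ (hlevel β) (sep_subset _ _)]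
    exact hbound y hy β ⟨hβ.1, hβ.2.trans_le hηε⟩
  rw [hgeq _ _ hΩ.measurableSet le_rfl] at hlow
  rw [hgeq _ _ hcollar (sep_subset _ _)] at hup
  constructor
  · have h1 : ENNReal.ofReal r⁻¹ ≤ ∫⁻ x in Ω, ENNReal.ofReal (k x y) := by
      have h2 : r⁻¹ = C⁻¹ * η / (c + 1) := by
        simp only [r]
        field_simp
      have h3 : ENNReal.ofReal ((c : ℝ) + 1) = c + 1 := by
        rw [ENNReal.ofReal_add c.coe_nonneg zero_le_one, ENNReal.ofReal_coe_nnreal,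
          ENNReal.ofReal_one]
      rw [h2, ENNReal.ofReal_div_of_pos (by positivity), h3,
        ENNReal.ofReal_mul (inv_nonneg.2 hC0.le)]
      refine ENNReal.div_le_of_le_mul' (hlow.trans ?_)
      gcongr
      exact le_self_add
    refine le_trans (ENNReal.ofReal_le_ofReal ?_) h1
    gcongr
    linarith [D.toReal_nonneg]
  · calc ∫⁻ x in Ω, ENNReal.ofReal (k x y)
        ≤ ∫⁻ x in Q ∪ {x ∈ Ω | infDist x (frontier Ω) < η}, ENNReal.ofReal (k x y) :=
          lintegral_mono_set fun x hx ↦ (le_or_gt η (infDist x (frontier Ω))).imp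
            (fun h ↦ ⟨hx, h⟩) (fun h ↦ ⟨hx, h⟩)
      _ ≤ (∫⁻ x in Q, ENNReal.ofReal (k x y)) +
          ∫⁻ x in {x ∈ Ω | infDist x (frontier Ω) < η}, ENNReal.ofReal (k x y) :=
          lintegral_union_le _ _ _
      _ ≤ D := by
          refine add_le_add ?_ hup
          rw [← setLIntegral_const]
          exact setLIntegral_mono' hQ.measurableSet fun x hx ↦
            ENNReal.ofReal_le_ofReal ((le_abs_self _).trans (hM (x, y) ⟨hx, hy⟩))
      _ = ENNReal.ofReal D.toReal := (ENNReal.ofReal_toReal hD).symm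
      _ ≤ _ := ENNReal.ofReal_le_ofReal (by linarith)

theorem stmt1 {N : ℕ} (hN : 3 ≤ N) (Ω : Set (EuclideanSpace ℝ (Fin N)))
    (hΩo : IsOpen Ω) (hΩb : Bornology.IsBounded Ω) (hΩ2 : HasC2Boundary Ω)
    (W : EuclideanSpace ℝ (Fin N) → ℝ)
    (K : EuclideanSpace ℝ (Fin N) → EuclideanSpace ℝ (Fin N) → ℝ)
    (hWc : ContinuousOn W Ω)
    (hKc : ContinuousOn (Function.uncurry K) (Ω ×ˢ frontier Ω))
    (hWnn : ∀ x ∈ Ω, 0 ≤ W x)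
    (hKnn : ∀ x ∈ Ω, ∀ y ∈ frontier Ω, 0 ≤ K x y)
    (C ε : ℝ) (hC : 1 ≤ C) (hε : 0 < ε)
    (hbound : ∀ y ∈ frontier Ω, ∀ β ∈ Set.Ioo (0:ℝ) ε,
      ENNReal.ofReal C⁻¹ ≤
        (∫⁻ x in {x ∈ Ω | Metric.infDist x (frontier Ω) = β},
          ENNReal.ofReal (W x * K x y) ∂(μH[(N:ℝ) - 1])) ∧
      (∫⁻ x in {x ∈ Ω | Metric.infDist x (frontier Ω) = β},
          ENNReal.ofReal (W x * K x y) ∂(μH[(N:ℝ) - 1])) ≤ ENNReal.ofReal C) :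
    ∃ C₁ : ℝ, 1 ≤ C₁ ∧
      ∀ ν : Measure (EuclideanSpace ℝ (Fin N)), IsFiniteMeasure ν →
        ν (frontier Ω)ᶜ = 0 →
        ENNReal.ofReal C₁⁻¹ * ν (frontier Ω) ≤
          (∫⁻ x in Ω, ENNReal.ofReal (W x) *
            (∫⁻ y in frontier Ω, ENNReal.ofReal (K x y) ∂ν) ∂volume) ∧
        (∫⁻ x in Ω, ENNReal.ofReal (W x) *
            (∫⁻ y in frontier Ω, ENNReal.ofReal (K x y) ∂ν) ∂volume) ≤
          ENNReal.ofReal C₁ * ν (frontier Ω) := by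
  have hk : ContinuousOn (Function.uncurry fun x y ↦ W x * K x y) (Ω ×ˢ frontier Ω) :=
    (hWc.comp continuousOn_fst fun z hz ↦ hz.1).mul hKc
  obtain ⟨C₁, hC₁, hC₁b⟩ := exists_uniform_lintegral_bounds hΩo hΩb hΩ2 hk hC hε hbound
  refine ⟨C₁, hC₁, fun ν hν _ ↦ ?_⟩
  have hfm : MeasurableSet (frontier Ω) := isClosed_frontier.measurableSet
  have hswap : ∫⁻ x in Ω, ENNReal.ofReal (W x) *
      (∫⁻ y in frontier Ω, ENNReal.ofReal (K x y) ∂ν) =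
      ∫⁻ y in frontier Ω, ∫⁻ x in Ω, ENNReal.ofReal (W x * K x y) ∂volume ∂ν := by
    have hinner : ∀ x ∈ Ω, ENNReal.ofReal (W x) *
        (∫⁻ y in frontier Ω, ENNReal.ofReal (K x y) ∂ν) =
        ∫⁻ y in frontier Ω, ENNReal.ofReal (W x * K x y) ∂ν := by
      intro x hx
      rw [← lintegral_const_mul' _ _ ENNReal.ofReal_ne_top]
      simp only [ENNReal.ofReal_mul (hWnn x hx)]
    rw [setLIntegral_congr_fun hΩo.measurableSet hinner]
    refine lintegral_lintegral_swap ?_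
    rw [Measure.prod_restrict]
    exact (ENNReal.continuous_ofReal.comp_continuousOn hk).aemeasurable
      (hΩo.measurableSet.prod hfm)
  rw [hswap]
  constructor
  · rw [← setLIntegral_const]
    exact setLIntegral_mono' hfm fun y hy ↦ (hC₁b y hy).1
  · rw [← setLIntegral_const]
    exact setLIntegral_mono' hfm fun y hy ↦ (hC₁b y hy).2
end

section
/- Let Ω ⊂ ℝ^N (N ≥ 3) be a bounded open set with C² boundary, W : Ω → [0,∞) and K : Ω × ∂Ω → [0,∞) Borel measurable, and C ≥ 1, ε > 0 such that: (a) C⁻¹ ≤ ∫_{Σ_β} W(x) K(x,y) dH^{N−1}(x) ≤ C for all y ∈ ∂Ω and β ∈ (0,ε); (b) for every r > 0, sup_{y ∈ ∂Ω} ∫_{Σ_β ∖ B_r(y)} W(x) K(x,y) dH^{N−1}(x) → 0 as β → 0⁺. For a finite positive Borel measure ν on ∂Ω set u_ν(x) := ∫_{∂Ω} K(x,y) dν(y), and let σ_β(ν) be the Borel measure on ℝ^N defined by σ_β(ν)(A) := ∫_{A ∩ Σ_β} W u_ν dH^{N−1}. If β_n → 0⁺ and the measures σ_{β_n}(ν)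 converge weakly to a finite measure μ on ℝ^N, then μ is concentrated on ∂Ω, and the measure ν′ := μ restricted to ∂Ω satisfies: ν ≪ ν′, ν′ ≪ ν, and C⁻¹ ≤ dν′/dν ≤ C ν-almost everywhere. -/
open MeasureTheory Metric Set Filter Topology

/-- The measure `σ_β(ν)` on `ℝ^N`: `σ_β(ν)(A) = ∫_{A ∩ Σ_β} W·u_ν dH^{N-1}`, where
`u_ν(x) = ∫_{∂Ω} K(x,y) dν(y)` and `Σ_β = {x ∈ Ω : dist(x,∂Ω) = β}`. -/
noncomputable def sigmaMeas {N : ℕ} (Ω : Set (EuclideanSpace ℝ (Fin N)))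
    (W : EuclideanSpace ℝ (Fin N) → ℝ)
    (K : EuclideanSpace ℝ (Fin N) → EuclideanSpace ℝ (Fin N) → ℝ)
    (ν : Measure (EuclideanSpace ℝ (Fin N))) (β : ℝ) :
    Measure (EuclideanSpace ℝ (Fin N)) :=
  ((μH[(N:ℝ) - 1]).restrict {x ∈ Ω | Metric.infDist x (frontier Ω) = β}).withDensity
    (fun x => ENNReal.ofReal (W x) * ∫⁻ y in frontier Ω, ENNReal.ofReal (K x y) ∂ν)

/-- A bounded set all of whose chords make a definite angle with a fixed unit vector `e` is a
Lipschitz graph over `eᗮ`, so it has finite Hausdorff measure in codimension one. -/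
lemma hausdorffMeasure_lt_top_of_abs_inner_le {E : Type*} [NormedAddCommGroup E]
    [InnerProductSpace ℝ E] [FiniteDimensional ℝ E] [MeasurableSpace E] [BorelSpace E]
    {e : E} (he : ‖e‖ = 1) {s : Set E} (hs : Bornology.IsBounded s)
    (hcone : ∀ x ∈ s, ∀ y ∈ s, |inner ℝ e (x - y)| ≤ ‖x - y‖ / 2) :
    μH[(Module.finrank ℝ E : ℝ) - 1] s < ⊤ := by
  set P := (ℝ ∙ e)ᗮ.orthogonalProjectionOnto
  have hdim : (Module.finrank ℝ (ℝ ∙ e)ᗮ : ℝ) = (Module.finrank ℝ E : ℝ) - 1 := by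
    have h1 := (ℝ ∙ e).finrank_add_finrank_orthogonal
    rw [finrank_span_singleton (norm_ne_zero_iff.1 (by simp [he]))] at h1
    rw [← h1]
    push_cast
    ring
  have hd : 0 ≤ (Module.finrank ℝ E : ℝ) - 1 := hdim ▸ Nat.cast_nonneg _
  have hanti : AntilipschitzWith 2 fun x : s => P x := by
    refine AntilipschitzWith.of_le_mul_dist fun x y => ?_
    rw [Subtype.dist_eq, dist_eq_norm, dist_eq_norm, ← map_sub]
    have hdecomp := (ℝ ∙ e).starProjection_add_starProjection_orthogonal ((x : E) - y)
    rw [Submodule.starProjection_unit_singleton ℝ he] at hdecomp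
    have htri := norm_add_le (inner ℝ e ((x : E) - y) • e)
      ((ℝ ∙ e)ᗮ.starProjection ((x : E) - y))
    rw [hdecomp, norm_smul, he, mul_one, Real.norm_eq_abs] at htri
    have hnorm : ‖(ℝ ∙ e)ᗮ.starProjection ((x : E) - y)‖ = ‖P ((x : E) - y)‖ := rfl
    rw [hnorm] at htri
    have := hcone x x.2 y y.2
    push_cast
    linarith
  have hle := hanti.le_hausdorffMeasure_image hd univ
  rw [← (isometry_subtype_coe (s := s)).hausdorffMeasure_image (Or.inl hd), image_univ,
    Subtype.range_coe] at hle
  refine hle.trans_lt (ENNReal.mul_lt_top (ENNReal.rpow_lt_top_of_nonneg hd (by simp)) ?_)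
  rw [← hdim]
  have hbdd : Bornology.IsBounded ((fun x : s => P x) '' univ) := by
    have : (fun x : s => P x) '' univ = P '' s := by
      ext z; simp
    rw [this]
    exact P.lipschitz.isBounded_image hs
  exact hbdd.measure_lt_top

/-- A positive level set of the distance to a closed set has finite `(N-1)`-dimensional Hausdorff
measure in bounded regions. -/
lemma hausdorffMeasure_infDist_level_lt_top {E : Type*} [NormedAddCommGroup E]
    [InnerProductSpace ℝ E] [FiniteDimensional ℝ E] [MeasurableSpace E] [BorelSpace E]
    {F : Set E} (hF : IsClosed F) {s : Set E} (hs : Bornology.IsBounded s) {β : ℝ} (hβ : 0 < β)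
    (hlevel : ∀ x ∈ s, infDist x F = β) :
    μH[(Module.finrank ℝ E : ℝ) - 1] s < ⊤ := by
  rcases F.eq_empty_or_nonempty with rfl | hne
  · have : s = ∅ := by
      refine eq_empty_of_forall_notMem fun x hx => hβ.ne ?_
      simpa using hlevel x hx
    simp [this]
  have hproper : ProperSpace E := FiniteDimensional.proper ℝ E
  choose p hpF hp using fun x : E => hF.exists_infDist_eq_dist hne x
  obtain ⟨t, ht1, htf, htc⟩ := (isCompact_sphere (0 : E) 1).finite_cover_balls
    (show (0 : ℝ) < 1 / 4 by norm_num)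
  obtain ⟨c, -, hcf, hcc⟩ := (hs.isCompact_closure).finite_cover_balls
    (show 0 < β / 4 by positivity)
  set n : E → E := fun x => β⁻¹ • (x - p x) with hn
  have hxp : ∀ x ∈ s, ‖x - p x‖ = β := fun x hx => by
    rw [← dist_eq_norm, ← hp, hlevel x hx]
  have hn1 : ∀ x ∈ s, ‖n x‖ = 1 := fun x hx => by
    rw [hn, norm_smul, hxp x hx, Real.norm_eq_abs, abs_of_pos (inv_pos.2 hβ),
      inv_mul_cancel₀ hβ.ne']
  have hball : ∀ x ∈ s, ∀ y ∈ s, 2 * β * inner ℝ (n x) (x - y) ≤ ‖x - y‖ ^ 2 := by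
    intro x hx y hy
    have h1 : β ≤ ‖y - p x‖ := by
      rw [← hlevel y hy, ← dist_eq_norm]
      exact infDist_le_dist_of_mem (hpF x)
    have h2 : y - p x = (x - p x) - (x - y) := by abel
    have h3 := norm_sub_sq_real (x - p x) (x - y)
    rw [← h2, hxp x hx] at h3
    have h4 : inner ℝ (x - p x) (x - y) = β * inner ℝ (n x) (x - y) := by
      rw [hn, real_inner_smul_left, mul_inv_cancel_left₀ hβ.ne']
    rw [h4] at h3
    nlinarith
  have hcover : s ⊆ ⋃ e ∈ t, ⋃ z ∈ c, {x ∈ s | n x ∈ ball e (1 / 4) ∧ x ∈ ball z (β / 4)} := by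
    intro x hx
    have h1 := htc (show n x ∈ sphere (0 : E) 1 by simpa using hn1 x hx)
    have h2 := hcc (subset_closure hx)
    simp only [mem_iUnion] at h1 h2 ⊢
    obtain ⟨e, he, hxe⟩ := h1
    obtain ⟨z, hz, hxz⟩ := h2
    exact ⟨e, he, z, hz, hx, hxe, hxz⟩
  refine (measure_mono hcover).trans_lt ((measure_biUnion_lt_top htf fun e he => ?_))
  refine measure_biUnion_lt_top hcf fun z _ => ?_
  refine hausdorffMeasure_lt_top_of_abs_inner_le (e := e) (by simpa using ht1 he)
    (hs.subset (sep_subset _ _)) ?_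
  have hone : ∀ x ∈ s, ∀ y ∈ s, dist (n x) e < 1 / 4 → dist x z < β / 4 → dist y z < β / 4 →
      inner ℝ e (x - y) ≤ ‖x - y‖ / 2 := by
    intro x hx y hy hxe hxz hyz
    have h1 : ‖x - y‖ ≤ β / 2 := by
      rw [← dist_eq_norm]
      linarith [dist_triangle_right x y z]
    have h2 : inner ℝ (e - n x) (x - y) ≤ 1 / 4 * ‖x - y‖ := by
      refine (real_inner_le_norm _ _).trans ?_
      gcongr
      rw [← dist_eq_norm, dist_comm]
      exact hxe.le
    have h3 : inner ℝ (n x) (x - y) ≤ ‖x - y‖ / 4 := by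
      have := hball x hx y hy
      have h5 : ‖x - y‖ ^ 2 ≤ β / 2 * ‖x - y‖ := by
        rw [sq]; gcongr
      have h6 : (2 * β) * inner ℝ (n x) (x - y) ≤ (2 * β) * (‖x - y‖ / 4) := by linarith
      exact le_of_mul_le_mul_left h6 (by positivity)
    rw [inner_sub_left] at h2
    linarith
  rintro x ⟨hx, hxe, hxz⟩ y ⟨hy, hye, hyz⟩
  have h1 := hone x hx y hy hxe hxz hyz
  have h2 := hone y hy x hx hye hyz hxz
  rw [← neg_sub x y, inner_neg_right, norm_neg] at h2
  exact abs_le.2 ⟨by linarith, h1⟩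

/-- To compare two finite measures it suffices to compare one on closed sets with the other on
their thickenings. -/
lemma measure_le_of_forall_isClosed_le_thickening {X : Type*} [PseudoMetricSpace X]
    [MeasurableSpace X] [BorelSpace X] {μ ν : Measure X} [IsFiniteMeasure μ] [IsFiniteMeasure ν]
    (h : ∀ F, IsClosed F → ∀ r : ℝ, 0 < r → μ F ≤ ν (thickening r F)) : μ ≤ ν := by
  refine Measure.le_iff.2 fun A hA => ?_
  rw [hA.measure_eq_iSup_isClosed_of_ne_top (measure_ne_top μ A)]
  refine iSup₂_le fun F hFA => iSup_le fun hF => le_trans ?_ (measure_mono hFA)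
  refine ge_of_tendsto
    (tendsto_measure_thickening_of_isClosed ⟨1, one_pos, measure_ne_top ν _⟩ hF) ?_
  filter_upwards [self_mem_nhdsWithin] with r hr using h F hF r hr

/-- Convergence against bounded continuous real functions gives convergence of the Lebesgue
integrals of bounded continuous `ℝ≥0`-valued functions. -/
lemma tendsto_lintegral_of_forall_tendsto_integral {X ι : Type*} [TopologicalSpace X]
    [MeasurableSpace X] [OpensMeasurableSpace X] {l : Filter ι} {σ : ι → Measure X}
    {μ : Measure X} [IsFiniteMeasure μ] (hfin : ∀ᶠ i in l, IsFiniteMeasure (σ i))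
    (hconv : ∀ f : X → ℝ, Continuous f → (∃ M, ∀ x, |f x| ≤ M) →
      Tendsto (fun i => ∫ x, f x ∂(σ i)) l (𝓝 (∫ x, f x ∂μ)))
    (g : BoundedContinuousFunction X NNReal) :
    Tendsto (fun i => ∫⁻ x, g x ∂(σ i)) l (𝓝 (∫⁻ x, g x ∂μ)) := by
  have hreal : ∀ τ : Measure X, IsFiniteMeasure τ →
      ENNReal.ofReal (∫ x, (g x : ℝ) ∂τ) = ∫⁻ x, g x ∂τ := fun τ _ => by
    rw [← BoundedContinuousFunction.toReal_lintegral_coe_eq_integral,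
      ENNReal.ofReal_toReal (g.lintegral_lt_top_of_nnreal τ).ne]
  have hlim := ENNReal.tendsto_ofReal (hconv (fun x => (g x : ℝ))
    (NNReal.continuous_coe.comp g.continuous)
    ⟨nndist g 0, fun x => by simpa using NNReal.coe_le_coe.2 (BoundedContinuousFunction.NNReal.upper_bound g x)⟩)
  rw [hreal μ inferInstance] at hlim
  exact hlim.congr' (hfin.mono fun i hi => hreal _ hi)

lemma lintegral_thickenedIndicator_le_measure {X : Type*} [PseudoEMetricSpace X]
    [MeasurableSpace X] [OpensMeasurableSpace X] (τ : Measure X) {r : ℝ} (hr : 0 < r)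
    (A : Set X) : ∫⁻ x, thickenedIndicator hr A x ∂τ ≤ τ (thickening r A) := by
  rw [← lintegral_indicator_one isOpen_thickening.measurableSet]
  refine lintegral_mono fun x => ?_
  by_cases hx : x ∈ thickening r A
  · simpa [hx] using thickenedIndicator_le_one hr A x
  · simp [hx, thickenedIndicator_zero hr A hx]

lemma withDensity_lintegral_apply {X : Type*} [MeasurableSpace X] {ρ ν : Measure X} [SFinite ρ]
    [SFinite ν] {k : X → X → ENNReal} (hk : Measurable (Function.uncurry k))
    {G : Set X} (hG : MeasurableSet G) :
    ρ.withDensity (fun x => ∫⁻ y, k x y ∂ν) G = ∫⁻ y, ∫⁻ x in G, k x y ∂ρ ∂ν := by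
  rw [withDensity_apply _ hG, lintegral_lintegral_swap hk.aemeasurable]

section KernelMeasure

variable {X : Type*} [PseudoMetricSpace X] [MeasurableSpace X] [OpensMeasurableSpace X]
  {ρ ν : Measure X} [SFinite ρ] [SFinite ν] {k : X → X → ENNReal}

/-- If the kernels `k · y` have mass at most `c`, and mass at most `s` away from `y`, then the
mixture puts on `G` at most `c` times the `ν`-mass of a neighbourhood of `G`, up to `s`. -/
lemma withDensity_lintegral_apply_le (hk : Measurable (Function.uncurry k)) {c s : ENNReal} {r : ℝ}
    (hc : ∀ᵐ y ∂ν, ∫⁻ x, k x y ∂ρ ≤ c) (hs : ∀ᵐ y ∂ν, ∫⁻ x in (ball y r)ᶜ, k x y ∂ρ ≤ s)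
    {G : Set X} (hG : MeasurableSet G) :
    ρ.withDensity (fun x => ∫⁻ y, k x y ∂ν) G ≤ c * ν (thickening r G) + s * ν univ := by
  rw [withDensity_lintegral_apply hk hG]
  calc ∫⁻ y, ∫⁻ x in G, k x y ∂ρ ∂ν
      ≤ ∫⁻ y, (thickening r G).indicator (fun _ => c) y + s ∂ν := by
        refine lintegral_mono_ae ?_
        filter_upwards [hc, hs] with y hcy hsy
        by_cases hy : y ∈ thickening r G
        · rw [indicator_of_mem hy]
          exact ((setLIntegral_le_lintegral _ _).trans hcy).trans le_self_add
        · rw [indicator_of_notMem hy, zero_add]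
          have hsub : G ⊆ (ball y r)ᶜ := fun x hx hxy =>
            hy (mem_thickening_iff.2 ⟨x, hx, by rwa [dist_comm]⟩)
          exact (lintegral_mono_set hsub).trans hsy
    _ = c * ν (thickening r G) + s * ν univ := by
        rw [lintegral_add_right _ measurable_const, lintegral_const,
          lintegral_indicator_const isOpen_thickening.measurableSet]

/-- If the kernels `k · y` have mass at least `c`, and mass at most `s` away from `y`, then the
mixture puts on a neighbourhood of `F` at least `c` times the `ν`-mass of `F`, up to `s`. -/
lemma le_withDensity_lintegral_apply (hk : Measurable (Function.uncurry k)) {c s : ENNReal} {r : ℝ}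
    (hc : ∀ᵐ y ∂ν, c ≤ ∫⁻ x, k x y ∂ρ) (hs : ∀ᵐ y ∂ν, ∫⁻ x in (ball y r)ᶜ, k x y ∂ρ ≤ s)
    {F : Set X} (hF : MeasurableSet F) :
    c * ν F ≤ ρ.withDensity (fun x => ∫⁻ y, k x y ∂ν) (thickening r F) + s * ν univ := by
  have hT : MeasurableSet (thickening r F) := isOpen_thickening.measurableSet
  rw [withDensity_lintegral_apply hk hT]
  calc c * ν F = ∫⁻ y, F.indicator (fun _ => c) y ∂ν := (lintegral_indicator_const hF c).symm
    _ ≤ ∫⁻ y, (∫⁻ x in thickening r F, k x y ∂ρ) + s ∂ν := by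
        refine lintegral_mono_ae ?_
        filter_upwards [hc, hs] with y hcy hsy
        by_cases hy : y ∈ F
        · rw [indicator_of_mem hy]
          refine hcy.trans ?_
          rw [← lintegral_add_compl _ (measurableSet_ball (x := y) (ε := r))]
          refine add_le_add (lintegral_mono_set fun x hx => ?_) hsy
          exact mem_thickening_iff.2 ⟨y, hy, hx⟩
        · simp [hy]
    _ = _ := by rw [lintegral_add_right _ measurable_const, lintegral_const]

end KernelMeasure

/-- Two-sided comparison of `ν` with a weak limit of kernel mixtures over `ν` whose kernels have
mass between `c₁` and `c₂` and concentrate at the diagonal. -/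
lemma smul_le_and_le_smul_of_tendsto_withDensity_lintegral {X : Type*} [PseudoMetricSpace X]
    [MeasurableSpace X] [BorelSpace X] {ρ : ℕ → Measure X} {ν μ : Measure X}
    [IsFiniteMeasure ν] [IsFiniteMeasure μ] {k : X → X → ENNReal}
    (hk : Measurable (Function.uncurry k)) {c₁ c₂ : ENNReal} (hc₁ : c₁ ≠ ⊤) (hc₂ : c₂ ≠ ⊤)
    (hρ : ∀ n, SFinite (ρ n))
    (hlb : ∀ᶠ n in atTop, ∀ᵐ y ∂ν, c₁ ≤ ∫⁻ x, k x y ∂(ρ n))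
    (hub : ∀ᶠ n in atTop, ∀ᵐ y ∂ν, ∫⁻ x, k x y ∂(ρ n) ≤ c₂)
    (hdecay : ∀ r : ℝ, 0 < r → ∃ s : ℕ → ENNReal, Tendsto s atTop (𝓝 0) ∧
      ∀ n, ∀ᵐ y ∂ν, ∫⁻ x in (ball y r)ᶜ, k x y ∂(ρ n) ≤ s n)
    (hconv : ∀ f : X → ℝ, Continuous f → (∃ M, ∀ x, |f x| ≤ M) →
      Tendsto (fun n => ∫ x, f x ∂((ρ n).withDensity fun x => ∫⁻ y, k x y ∂ν)) atTop
        (𝓝 (∫ x, f x ∂μ))) :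
    c₁ • ν ≤ μ ∧ μ ≤ c₂ • ν := by
  have hfin : ∀ᶠ n in atTop,
      IsFiniteMeasure ((ρ n).withDensity fun x => ∫⁻ y, k x y ∂ν) := by
    filter_upwards [hub] with n hn
    refine ⟨?_⟩
    rw [withDensity_lintegral_apply hk MeasurableSet.univ]
    simp only [Measure.restrict_univ]
    refine (lintegral_mono_ae hn).trans_lt ?_
    rw [lintegral_const]
    exact ENNReal.mul_lt_top hc₂.lt_top (measure_lt_top _ _)
  have hlim := tendsto_lintegral_of_forall_tendsto_integral hfin hconv
  have hsmul : ∀ s : ℕ → ENNReal, Tendsto s atTop (𝓝 0) →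
      Tendsto (fun n => s n * ν univ) atTop (𝓝 0) := fun s hs => by
    simpa using ENNReal.Tendsto.mul_const hs (Or.inr (measure_ne_top ν univ))
  have hfin₁ : IsFiniteMeasure (c₁ • ν) := ν.smul_finite hc₁
  have hfin₂ : IsFiniteMeasure (c₂ • ν) := ν.smul_finite hc₂
  refine ⟨measure_le_of_forall_isClosed_le_thickening fun F hF r hr => ?_,
    measure_le_of_forall_isClosed_le_thickening fun F hF r hr => ?_⟩
  all_goals
    have hr2 : 0 < r / 2 := half_pos hr
    obtain ⟨s, hs, hsn⟩ := hdecay (r / 2) hr2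
    have hthick : thickening (r / 2) (thickening (r / 2) F) ⊆ thickening r F := by
      simpa using thickening_thickening_subset (r / 2) (r / 2) F
  · have hT : MeasurableSet (thickening (r / 2) F) := isOpen_thickening.measurableSet
    refine le_trans ?_ ((lintegral_thickenedIndicator_le_measure μ hr2
      (thickening (r / 2) F)).trans (measure_mono hthick))
    have hlim' := (hlim (thickenedIndicator hr2 (thickening (r / 2) F))).add (hsmul s hs)
    rw [add_zero] at hlim'
    refine ge_of_tendsto hlim' ?_
    filter_upwards [hlb] with n hn
    rw [Measure.smul_apply, smul_eq_mul]
    refine (le_withDensity_lintegral_apply hk hn (hsn n) hF.measurableSet).trans ?_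
    gcongr
    exact measure_le_lintegral_thickenedIndicator _ hT hr2
  · refine (measure_le_lintegral_thickenedIndicator μ hF.measurableSet hr2).trans ?_
    have hlim' := (hsmul s hs).const_add (c₂ * ν (thickening r F))
    rw [add_zero] at hlim'
    rw [Measure.smul_apply, smul_eq_mul]
    refine le_of_tendsto_of_tendsto (hlim (thickenedIndicator hr2 F)) hlim' ?_
    filter_upwards [hub] with n hn
    refine (lintegral_thickenedIndicator_le_measure _ hr2 F).trans ?_
    refine (withDensity_lintegral_apply_le hk hn (hsn n)
      isOpen_thickening.measurableSet).trans ?_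
    gcongr

lemma sigmaMeas_eq_withDensity {N : ℕ} {Ω : Set (EuclideanSpace ℝ (Fin N))} (hΩo : IsOpen Ω)
    {W : EuclideanSpace ℝ (Fin N) → ℝ}
    {K : EuclideanSpace ℝ (Fin N) → EuclideanSpace ℝ (Fin N) → ℝ}
    (hKm : Measurable (Function.uncurry K)) (hWnn : ∀ x ∈ Ω, 0 ≤ W x)
    {ν : Measure (EuclideanSpace ℝ (Fin N))} (hν : ν (frontier Ω)ᶜ = 0) (b : ℝ) :
    sigmaMeas Ω W K ν b =
      ((μH[(N:ℝ) - 1]).restrict {x ∈ Ω | infDist x (frontier Ω) = b}).withDensity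
        fun x => ∫⁻ y, ENNReal.ofReal (W x * K x y) ∂ν := by
  have hmeas : MeasurableSet {x ∈ Ω | infDist x (frontier Ω) = b} :=
    hΩo.measurableSet.inter (measurableSet_eq_fun (continuous_infDist_pt _).measurable
      measurable_const)
  rw [sigmaMeas, Measure.restrict_eq_self_of_ae_mem (ae_iff.2 hν)]
  refine withDensity_congr_ae ?_
  filter_upwards [ae_restrict_mem hmeas] with x hx
  simp only [ENNReal.ofReal_mul (hWnn x hx.1)]
  exact (lintegral_const_mul _ (hKm.comp measurable_prodMk_left).ennreal_ofReal).symm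

theorem stmt2 {N : ℕ} (hN : 3 ≤ N) (Ω : Set (EuclideanSpace ℝ (Fin N)))
    (hΩo : IsOpen Ω) (hΩb : Bornology.IsBounded Ω) (hΩ2 : HasC2Boundary Ω)
    (W : EuclideanSpace ℝ (Fin N) → ℝ)
    (K : EuclideanSpace ℝ (Fin N) → EuclideanSpace ℝ (Fin N) → ℝ)
    (hWm : Measurable W) (hKm : Measurable (Function.uncurry K))
    (hWnn : ∀ x ∈ Ω, 0 ≤ W x)
    (hKnn : ∀ x ∈ Ω, ∀ y ∈ frontier Ω, 0 ≤ K x y)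
    (C ε : ℝ) (hC : 1 ≤ C) (hε : 0 < ε)
    -- (a): uniform two-sided single-kernel bound
    (hbound : ∀ y ∈ frontier Ω, ∀ β ∈ Set.Ioo (0:ℝ) ε,
      ENNReal.ofReal C⁻¹ ≤
        (∫⁻ x in {x ∈ Ω | Metric.infDist x (frontier Ω) = β},
          ENNReal.ofReal (W x * K x y) ∂(μH[(N:ℝ) - 1])) ∧
      (∫⁻ x in {x ∈ Ω | Metric.infDist x (frontier Ω) = β},
          ENNReal.ofReal (W x * K x y) ∂(μH[(N:ℝ) - 1])) ≤ ENNReal.ofReal C)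
    -- (b): uniform decay away from the singularity
    (hdecay : ∀ r : ℝ, 0 < r →
      Tendsto (fun β : ℝ => ⨆ y ∈ frontier Ω,
          ∫⁻ x in {x ∈ Ω | Metric.infDist x (frontier Ω) = β} \ Metric.ball y r,
            ENNReal.ofReal (W x * K x y) ∂(μH[(N:ℝ) - 1]))
        (𝓝[>] (0:ℝ)) (𝓝 0))
    (ν : Measure (EuclideanSpace ℝ (Fin N))) [IsFiniteMeasure ν]
    (hν : ν (frontier Ω)ᶜ = 0)
    (β : ℕ → ℝ) (hβpos : ∀ n, 0 < β n) (hβ : Tendsto β atTop (𝓝 0))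
    (μ : Measure (EuclideanSpace ℝ (Fin N))) [IsFiniteMeasure μ]
    -- weak convergence of `σ_{β_n}(ν)` to `μ`, tested against bounded continuous functions
    (hconv : ∀ f : EuclideanSpace ℝ (Fin N) → ℝ, Continuous f → (∃ M, ∀ x, |f x| ≤ M) →
      Tendsto (fun n => ∫ x, f x ∂(sigmaMeas Ω W K ν (β n))) atTop (𝓝 (∫ x, f x ∂μ))) :
    μ (frontier Ω)ᶜ = 0 ∧
      ν ≪ μ.restrict (frontier Ω) ∧ μ.restrict (frontier Ω) ≪ ν ∧
      ∀ᵐ x ∂ν, ENNReal.ofReal C⁻¹ ≤ (μ.restrict (frontier Ω)).rnDeriv ν x ∧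
        (μ.restrict (frontier Ω)).rnDeriv ν x ≤ ENNReal.ofReal C := by
  have hSfin : ∀ n, SFinite ((μH[(N:ℝ) - 1]).restrict
      {x ∈ Ω | infDist x (frontier Ω) = β n}) := by
    intro n
    have hlt := hausdorffMeasure_infDist_level_lt_top (F := frontier Ω) isClosed_frontier
      (s := {x ∈ Ω | infDist x (frontier Ω) = β n}) (hΩb.subset (sep_subset _ _)) (hβpos n)
      fun x hx => hx.2
    rw [finrank_euclideanSpace_fin] at hlt
    have : IsFiniteMeasure ((μH[(N:ℝ) - 1]).restrict
        {x ∈ Ω | infDist x (frontier Ω) = β n}) := ⟨by simpa using hlt⟩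
    infer_instance
  have hνmem : ∀ᵐ y ∂ν, y ∈ frontier Ω := ae_iff.2 hν
  have hβε : ∀ᶠ n in atTop, β n ∈ Ioo 0 ε :=
    (hβ.eventually_lt_const hε).mono fun n hn => ⟨hβpos n, hn⟩
  have hβgt : Tendsto β atTop (𝓝[>] 0) :=
    tendsto_nhdsWithin_iff.2 ⟨hβ, Eventually.of_forall hβpos⟩
  have hk : Measurable (Function.uncurry fun x y => ENNReal.ofReal (W x * K x y)) :=
    ((hWm.comp measurable_fst).mul hKm).ennreal_ofReal
  simp only [sigmaMeas_eq_withDensity hΩo hKm hWnn hν] at hconv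
  obtain ⟨hlow, hup⟩ := smul_le_and_le_smul_of_tendsto_withDensity_lintegral hk
    (c₁ := ENNReal.ofReal C⁻¹) (c₂ := ENNReal.ofReal C) ENNReal.ofReal_ne_top
    ENNReal.ofReal_ne_top hSfin
    (hβε.mono fun n hn => hνmem.mono fun y hy => (hbound y hy _ hn).1)
    (hβε.mono fun n hn => hνmem.mono fun y hy => (hbound y hy _ hn).2)
    (fun r hr => ⟨_, (hdecay r hr).comp hβgt, fun n => hνmem.mono fun y hy => by
      rw [Measure.restrict_restrict measurableSet_ball.compl, inter_comm, ← sdiff_eq]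
      exact le_iSup₂ (f := fun y (_ : y ∈ frontier Ω) =>
        ∫⁻ x in {x ∈ Ω | infDist x (frontier Ω) = β n} \ ball y r,
          ENNReal.ofReal (W x * K x y) ∂(μH[(N:ℝ) - 1])) y hy⟩)
    hconv
  have hCpos : ENNReal.ofReal C⁻¹ ≠ 0 := by
    rw [Ne, ENNReal.ofReal_eq_zero, not_le]
    positivity
  have hμν : μ ≪ ν := (Measure.absolutelyContinuous_of_le hup).trans
    Measure.smul_absolutelyContinuous
  have hνμ : ν ≪ μ := (Measure.absolutelyContinuous_smul hCpos).trans
    (Measure.absolutelyContinuous_of_le hlow)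
  have hμc : μ (frontier Ω)ᶜ = 0 := hμν hν
  rw [Measure.restrict_eq_self_of_ae_mem (ae_iff.2 hμc)]
  refine ⟨hμc, hνμ, hμν, ?_⟩
  have := Measure.haveLebesgueDecomposition_of_sigmaFinite μ ν
  have h1 : (fun _ => ENNReal.ofReal C⁻¹) ≤ᵐ[ν] μ.rnDeriv ν :=
    ae_le_of_forall_setLIntegral_le_of_sigmaFinite measurable_const fun s _ _ => by
      rw [setLIntegral_const, Measure.setLIntegral_rnDeriv hμν]
      exact hlow s
  have h2 : μ.rnDeriv ν ≤ᵐ[ν] fun _ => ENNReal.ofReal C :=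
    ae_le_of_forall_setLIntegral_le_of_sigmaFinite (μ.measurable_rnDeriv ν) fun s _ _ => by
      rw [setLIntegral_const, Measure.setLIntegral_rnDeriv hμν]
      exact hup s
  exact h1.and h2
end

section
/- Let Ω ⊂ ℝ^N (N ≥ 3) be a bounded open set with C² boundary, Φ : Ω → (0,∞) continuous, Φ₀ : Ω → (0,∞) with c_*⁻¹ δ(x) ≤ Φ₀(x) ≤ c_* δ(x) for all x ∈ Ω and some c_* ≥ 1, and G : {(x,y) ∈ Ω × Ω : x ≠ y} → (0,∞) Borel measurable. Assume: (i) there exist a ≥ 2, c₀ ≥ 1, β₁ > 0 such that c₀⁻¹ |x−y|^{2−N} Φ(y) ≤ Φ(x) G(x,y) ≤ c₀ |x−y|^{2−N} Φ(y) whenever β ∈ (0,β₁), x ∈ Σ_β, y ∈ Ω and 0 < |x−y| < aβ; (ii) for every b > 0 there is C(b) ≥ 1 such that G(x,y) ≥ C(b)⁻¹ |x−y|^{2−N} whenever x,y ∈ Ω satisfy 0 < |x−y| ≤ b⁻¹ min(δ(x),δ(y)). Then there exists c > 0 such that for every positive Borel measure τ on Ω with ∫_Ω Φ dτ < ∞: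 c⁻¹ ∫_Ω Φ dτ ≤ ∫_Ω (Φ(x)/Φ₀(x)) (∫_Ω G(x,y) dτ(y)) dx. -/
open MeasureTheory Metric Set

open Topology

/-- Near a boundary point of a `C²` domain there are interior points `z` whose distance to the
boundary exceeds half of their distance to that point. -/
lemma HasC2Boundary.exists_nontangential_point {N : ℕ} {Ω : Set (EuclideanSpace ℝ (Fin N))}
    (hΩo : IsOpen Ω) (hΩ2 : HasC2Boundary Ω) {p : EuclideanSpace ℝ (Fin N)}
    (hp : p ∈ frontier Ω) {ε : ℝ} (hε : 0 < ε) :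
    ∃ z ∈ Ω, dist z p < ε ∧ dist z p < 2 * infDist z (frontier Ω) := by
  obtain ⟨U, f, hU, hpU, hf, hf', hΩU⟩ := hΩ2 p hp
  have hlt : ∀ x ∈ U, (x ∈ Ω ↔ f x < 0) := fun x hx => by
    have h : x ∈ Ω ∩ U ↔ x ∈ {x ∈ U | f x < 0} := by rw [hΩU]
    simpa [hx] using h
  have hnonneg : ∀ q ∈ frontier Ω, q ∈ U → 0 ≤ f q := fun q hq hqU => by
    by_contra! h
    exact (hΩo.frontier_eq ▸ hq).2 ((hlt q hqU).2 h)
  have hdiff : DifferentiableAt ℝ f p :=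
    ((hf.contDiffAt (hU.mem_nhds hpU)).differentiableAt (by norm_num))
  have hfp : f p ≤ 0 := by
    by_contra! h
    have hev : ∀ᶠ x in 𝓝 p, x ∈ U ∧ 0 < f x :=
      (hU.eventually_mem hpU).and (hdiff.continuousAt.eventually (lt_mem_nhds h))
    obtain ⟨x, ⟨hxU, hx⟩, hxΩ⟩ := mem_closure_iff_nhds.1 hp.1 _ hev
    exact absurd ((hlt x hxU).1 hxΩ) hx.not_gt
  set L := fderiv ℝ f p with hL
  have hLpos : 0 < ‖L‖ := norm_pos_iff.2 (hf' p hpU)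
  obtain ⟨v, hv1, hLv⟩ : ∃ v, ‖v‖ < 1 ∧ 3 / 4 * ‖L‖ < L v := by
    obtain ⟨v, hv, hLv⟩ := L.exists_lt_apply_of_lt_opNorm (show 3 / 4 * ‖L‖ < ‖L‖ by linarith)
    rcases le_total 0 (L v) with h | h
    · exact ⟨v, hv, by rwa [Real.norm_of_nonneg h] at hLv⟩
    · exact ⟨-v, by simpa using hv, by
        rw [map_neg]; rwa [Real.norm_of_nonpos h] at hLv⟩
  have hlin : ∀ᶠ x in 𝓝 p, x ∈ U ∧ ‖f x - f p - L (x - p)‖ ≤ ‖L‖ / 100 * ‖x - p‖ :=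
    (hU.eventually_mem hpU).and (hdiff.hasFDerivAt.isLittleO.def (by positivity))
  obtain ⟨r, hr, hball⟩ := Metric.eventually_nhds_iff.1 hlin
  obtain ⟨t, ht, htr, htε⟩ : ∃ t : ℝ, 0 < t ∧ 2 * t < r ∧ t < ε :=
    ⟨min (r / 4) (ε / 2), by positivity,
      by linarith [min_le_left (r / 4) (ε / 2)], by linarith [min_le_right (r / 4) (ε / 2)]⟩
  have hzp : dist (p - t • v) p ≤ t := by
    rw [dist_eq_norm, sub_sub_cancel_left, norm_neg, norm_smul, Real.norm_of_nonneg ht.le]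
    nlinarith
  have hneg : ∀ q, dist (p - t • v) q < 3 / 5 * t → q ∈ U ∧ f q < 0 := fun q hq => by
    have hqp : dist q p ≤ 8 / 5 * t := by
      linarith [dist_triangle q (p - t • v) p, dist_comm q (p - t • v)]
    obtain ⟨hqU, hqf⟩ := hball (show dist q p < r by linarith)
    refine ⟨hqU, ?_⟩
    have hsplit : L (q - p) = L (q - (p - t • v)) - t * L v := by
      simp only [map_sub, map_smul, smul_eq_mul]; ring
    have hb : L (q - (p - t • v)) ≤ ‖L‖ * (3 / 5 * t) := by
      refine (le_abs_self _).trans ((L.le_opNorm _).trans ?_)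
      rw [← dist_eq_norm, dist_comm]
      gcongr
    rw [← dist_eq_norm q p] at hqf
    have h1 := (le_abs_self _).trans hqf
    have h2 : ‖L‖ / 100 * dist q p ≤ ‖L‖ / 100 * (8 / 5 * t) := by gcongr
    have h3 : t * (3 / 4 * ‖L‖) < t * L v := by gcongr
    nlinarith [mul_pos hLpos ht]
  refine ⟨p - t • v, ?_, hzp.trans_lt htε, ?_⟩
  · obtain ⟨h1, h2⟩ := hneg (p - t • v) (by rw [dist_self]; positivity)
    exact (hlt _ h1).2 h2
  · have : 3 / 5 * t ≤ infDist (p - t • v) (frontier Ω) := by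
      refine (le_infDist ⟨p, hp⟩).2 fun {q} hq => ?_
      by_contra! h
      obtain ⟨h1, h2⟩ := hneg q h
      exact absurd h2 (hnonneg q hq h1).not_gt
    linarith

/-- A measure for which some a.e. positive function has finite integral is s-finite. -/
lemma MeasureTheory.sFinite_of_lintegral_ne_top {α : Type*} [MeasurableSpace α] {μ : Measure α}
    {f : α → ENNReal} (hf : AEMeasurable f μ) (hpos : ∀ᵐ x ∂μ, f x ≠ 0)
    (htop : ∀ᵐ x ∂μ, f x ≠ ⊤) (hint : ∫⁻ x, f x ∂μ ≠ ⊤) : SFinite μ := by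
  have := isFiniteMeasure_withDensity hint
  rw [← withDensity_inv_same₀ hf hpos htop]
  infer_instance

/-- A pointwise lower bound of a kernel near `(z, p)` yields a lower bound of its integral in the
first variable, uniformly for the second variable near `p`. -/
lemma exists_nhds_lintegral_ge {E : Type*} [TopologicalSpace E] [MeasurableSpace E] [BorelSpace E]
    [T1Space E] {μ : Measure E} [μ.IsOpenPosMeasure] [NullSingletonClass μ]
    {Ω : Set E} {Φ : E → ℝ} {K : E → E → ℝ} {z p : E} {k : ℝ} (hk : 0 < k)
    (hΦ : ∀ y ∈ Ω, 0 ≤ Φ y)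
    (h : ∀ᶠ q in 𝓝 (z, p), q.1 ∈ Ω ∧ (q.2 ∈ Ω → q.1 ≠ q.2 → k * Φ q.2 ≤ K q.1 q.2)) :
    ∃ V ∈ 𝓝 p, ∃ c : ℝ, 0 < c ∧ ∀ y ∈ V, y ∈ Ω →
      ENNReal.ofReal c * ENNReal.ofReal (Φ y) ≤ ∫⁻ x in Ω, ENNReal.ofReal (K x y) ∂μ := by
  obtain ⟨A, V, hAo, hA, hVo, hV, hAV⟩ := mem_nhds_prod_iff'.1 h
  have hμ : 0 < μ A := hAo.measure_pos μ ⟨z, hA⟩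
  obtain ⟨m, hm, hmA⟩ : ∃ m : ℝ, 0 < m ∧ ENNReal.ofReal m ≤ μ A := by
    obtain ⟨m, hm, hmA⟩ := ENNReal.lt_iff_exists_nnreal_btwn.1 hμ
    exact ⟨m, by exact_mod_cast hm, by simpa using hmA.le⟩
  refine ⟨V, hVo.mem_nhds hV, m * k, by positivity, fun y hy hyΩ => ?_⟩
  calc ENNReal.ofReal (m * k) * ENNReal.ofReal (Φ y)
      = ENNReal.ofReal (k * Φ y) * ENNReal.ofReal m := by
        rw [← ENNReal.ofReal_mul (by positivity),
          ← ENNReal.ofReal_mul (mul_nonneg hk.le (hΦ y hyΩ))]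
        ring_nf
    _ ≤ ENNReal.ofReal (k * Φ y) * μ (A \ {y}) := by
        rw [measure_sdiff_null (measure_singleton y)]
        gcongr
    _ = ∫⁻ _ in A \ {y}, ENNReal.ofReal (k * Φ y) ∂μ := (setLIntegral_const _ _).symm
    _ ≤ ∫⁻ x in A \ {y}, ENNReal.ofReal (K x y) ∂μ := by
        refine setLIntegral_mono' (hAo.measurableSet.diff (measurableSet_singleton y))
          fun x hx => ENNReal.ofReal_le_ofReal ?_
        exact (hAV (mk_mem_prod hx.1 hy)).2 hyΩ hx.2
    _ ≤ ∫⁻ x in Ω, ENNReal.ofReal (K x y) ∂μ :=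
        lintegral_mono_set fun x hx => (hAV (mk_mem_prod hx.1 hy)).1

theorem stmt3 {N : ℕ} (hN : 3 ≤ N) (Ω : Set (EuclideanSpace ℝ (Fin N)))
    (hΩo : IsOpen Ω) (hΩb : Bornology.IsBounded Ω) (hΩ2 : HasC2Boundary Ω)
    (Φ Φ₀ : EuclideanSpace ℝ (Fin N) → ℝ)
    (G : EuclideanSpace ℝ (Fin N) → EuclideanSpace ℝ (Fin N) → ℝ)
    (hΦc : ContinuousOn Φ Ω) (hΦpos : ∀ x ∈ Ω, 0 < Φ x)
    (cs : ℝ) (hcs : 1 ≤ cs)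
    (hΦ₀ : ∀ x ∈ Ω, cs⁻¹ * Metric.infDist x (frontier Ω) ≤ Φ₀ x ∧
      Φ₀ x ≤ cs * Metric.infDist x (frontier Ω))
    (hΦ₀pos : ∀ x ∈ Ω, 0 < Φ₀ x)
    (hGm : Measurable (Function.uncurry G))
    (hGpos : ∀ x ∈ Ω, ∀ y ∈ Ω, x ≠ y → 0 < G x y)
    (a c₀ β₁ : ℝ) (ha : 2 ≤ a) (hc₀ : 1 ≤ c₀) (hβ₁ : 0 < β₁)
    -- (i): two-sided boundary Green estimate near the diagonal
    (hG1 : ∀ β ∈ Set.Ioo (0:ℝ) β₁, ∀ x ∈ Ω, Metric.infDist x (frontier Ω) = β →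
      ∀ y ∈ Ω, 0 < dist x y → dist x y < a * β →
        c₀⁻¹ * dist x y ^ ((2:ℝ) - N) * Φ y ≤ Φ x * G x y ∧
        Φ x * G x y ≤ c₀ * dist x y ^ ((2:ℝ) - N) * Φ y)
    -- (ii): interior lower Green estimate
    (hG2 : ∀ b : ℝ, 0 < b → ∃ Cb : ℝ, 1 ≤ Cb ∧ ∀ x ∈ Ω, ∀ y ∈ Ω,
      0 < dist x y →
      dist x y ≤ b⁻¹ * min (Metric.infDist x (frontier Ω)) (Metric.infDist y (frontier Ω)) →
      Cb⁻¹ * dist x y ^ ((2:ℝ) - N) ≤ G x y) :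
    ∃ c : ℝ, 0 < c ∧ ∀ τ : Measure (EuclideanSpace ℝ (Fin N)), τ Ωᶜ = 0 →
      (∫⁻ x in Ω, ENNReal.ofReal (Φ x) ∂τ) < ⊤ →
      ENNReal.ofReal c⁻¹ * (∫⁻ x in Ω, ENNReal.ofReal (Φ x) ∂τ) ≤
        ∫⁻ x in Ω, ENNReal.ofReal (Φ x / Φ₀ x) *
          (∫⁻ y in Ω, ENNReal.ofReal (G x y) ∂τ) ∂volume := by
  set δ : EuclideanSpace ℝ (Fin N) → ℝ := fun x => infDist x (frontier Ω) with hδ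
  have hδc : Continuous δ := continuous_infDist_pt _
  have hδpos : ∀ x ∈ Ω, 0 < δ x := fun x hx =>
    pos_of_mul_pos_right ((hΦ₀pos x hx).trans_le (hΦ₀ x hx).2) (by positivity)
  have hcs0 : 0 < cs := by positivity
  have hc₀0 : 0 < c₀ := by positivity
  obtain ⟨D, hD, hDΩ⟩ : ∃ D : ℝ, 0 < D ∧ ∀ x ∈ Ω, ∀ y ∈ Ω, dist x y ≤ D :=
    ⟨max 1 (diam Ω), by positivity, fun x hx y hy =>
      (dist_le_diam_of_mem hΩb hx hy).trans (le_max_right _ _)⟩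
  have hexp : (2 : ℝ) - N ≤ 0 := by
    have : (3 : ℝ) ≤ N := by exact_mod_cast hN
    linarith
  have hpow : ∀ x ∈ Ω, ∀ y ∈ Ω, x ≠ y → D ^ ((2 : ℝ) - N) ≤ dist x y ^ ((2 : ℝ) - N) :=
    fun x hx y hy hxy =>
      Real.rpow_le_rpow_of_nonpos (dist_pos.2 hxy) (hDΩ x hx y hy) hexp
  have hDpow : 0 < D ^ ((2 : ℝ) - N) := Real.rpow_pos_of_pos hD _
  set w : EuclideanSpace ℝ (Fin N) → ℝ := fun x => Φ x / (cs * δ x) with hw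
  have hlocal : ∀ p ∈ closure Ω, ∃ z, ∃ k : ℝ, 0 < k ∧ ∀ᶠ q in 𝓝 (z, p), q.1 ∈ Ω ∧
      (q.2 ∈ Ω → q.1 ≠ q.2 → k * Φ q.2 ≤ w q.1 * G q.1 q.2) := by
    intro p hp
    by_cases hpΩ : p ∈ Ω
    · obtain ⟨C, hC1, hC⟩ := hG2 1 one_pos
      have hC0 : 0 < C := by positivity
      have hΦp := hΦpos p hpΩ
      have hδp := hδpos p hpΩ
      have hΦat : ContinuousAt Φ p := hΦc.continuousAt (hΩo.mem_nhds hpΩ)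
      refine ⟨p, (Φ p / 2) / (cs * (2 * δ p)) * (C⁻¹ * D ^ ((2 : ℝ) - N)) / (2 * Φ p),
        by positivity, ?_⟩
      have e1 : ∀ᶠ q in 𝓝 (p, p), q.1 ∈ Ω := continuousAt_fst.eventually (hΩo.mem_nhds hpΩ)
      have e2 : ∀ᶠ q in 𝓝 (p, p), Φ p / 2 < Φ q.1 :=
        (hΦat.comp_of_eq continuousAt_fst rfl).eventually (lt_mem_nhds (half_lt_self hΦp))
      have e3 : ∀ᶠ q in 𝓝 (p, p), Φ q.2 < 2 * Φ p :=
        (hΦat.comp_of_eq continuousAt_snd rfl).eventually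
          (gt_mem_nhds (show Φ p < 2 * Φ p by linarith))
      have e4 : ∀ᶠ q in 𝓝 (p, p), δ q.1 < 2 * δ p :=
        (isOpen_lt (hδc.comp continuous_fst) continuous_const).eventually_mem
          (show δ p < 2 * δ p by linarith)
      have e5 : ∀ᶠ q in 𝓝 (p, p), dist q.1 q.2 < min (δ q.1) (δ q.2) :=
        (isOpen_lt continuous_dist
          ((hδc.comp continuous_fst).min (hδc.comp continuous_snd))).eventually_mem
          (by simpa using hδp)
      filter_upwards [e1, e2, e3, e4, e5] with q h1 h2 h3 h4 h5
      refine ⟨h1, fun hq2 hne => ?_⟩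
      have hδq := hδpos _ h1
      have hG : C⁻¹ * D ^ ((2 : ℝ) - N) ≤ G q.1 q.2 :=
        (mul_le_mul_of_nonneg_left (hpow _ h1 _ hq2 hne) (by positivity)).trans
          (hC _ h1 _ hq2 (dist_pos.2 hne) (by simpa using h5.le))
      calc _ ≤ (Φ p / 2) / (cs * (2 * δ p)) * (C⁻¹ * D ^ ((2 : ℝ) - N)) / (2 * Φ p)
              * (2 * Φ p) := by gcongr
        _ = (Φ p / 2) / (cs * (2 * δ p)) * (C⁻¹ * D ^ ((2 : ℝ) - N)) := by
              rw [div_mul_cancel₀ _ (by positivity)]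
        _ ≤ w q.1 * G q.1 q.2 := by
              have := hΦpos _ h1
              simp only [hw]
              gcongr
    · have hpf : p ∈ frontier Ω := hΩo.frontier_eq ▸ ⟨hp, hpΩ⟩
      obtain ⟨z, hz, hzβ, hzδ⟩ := hΩ2.exists_nontangential_point hΩo hpf hβ₁
      refine ⟨z, c₀⁻¹ * D ^ ((2 : ℝ) - N) / (cs * β₁), by positivity, ?_⟩
      have e1 : ∀ᶠ q in 𝓝 (z, p), q.1 ∈ Ω := continuousAt_fst.eventually (hΩo.mem_nhds hz)
      have e2 : ∀ᶠ q in 𝓝 (z, p), δ q.1 < β₁ :=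
        (isOpen_lt (hδc.comp continuous_fst) continuous_const).eventually_mem
          (show δ z < β₁ from (infDist_le_dist_of_mem hpf).trans_lt hzβ)
      have e3 : ∀ᶠ q in 𝓝 (z, p), dist q.1 q.2 < 2 * δ q.1 :=
        (isOpen_lt continuous_dist
          (continuous_const.mul (hδc.comp continuous_fst))).eventually_mem hzδ
      filter_upwards [e1, e2, e3] with q h1 h2 h3
      refine ⟨h1, fun hq2 hne => ?_⟩
      have hδq := hδpos _ h1
      have hΦq := hΦpos _ hq2
      have hG := (hG1 (δ q.1) ⟨hδq, h2⟩ _ h1 rfl _ hq2 (dist_pos.2 hne)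
        (h3.trans_le (by gcongr))).1
      have hG' : c₀⁻¹ * D ^ ((2 : ℝ) - N) * Φ q.2 ≤ Φ q.1 * G q.1 q.2 := by
        refine le_trans (mul_le_mul_of_nonneg_right ?_ hΦq.le) hG
        exact mul_le_mul_of_nonneg_left (hpow _ h1 _ hq2 hne) (by positivity)
      calc _ = c₀⁻¹ * D ^ ((2 : ℝ) - N) * Φ q.2 / (cs * β₁) := by ring
        _ ≤ Φ q.1 * G q.1 q.2 / (cs * δ q.1) := by
              have : 0 ≤ Φ q.1 * G q.1 q.2 := le_trans (by positivity) hG'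
              gcongr
        _ = w q.1 * G q.1 q.2 := by simp only [hw]; ring
  have : Nonempty (Fin N) := ⟨⟨0, by omega⟩⟩
  obtain ⟨c, hc, hcΩ⟩ : ∃ c : ℝ, 0 < c ∧ ∀ y ∈ closure Ω, y ∈ Ω →
      ENNReal.ofReal c * ENNReal.ofReal (Φ y) ≤ ∫⁻ x in Ω, ENNReal.ofReal (w x * G x y) := by
    refine hΩb.isCompact_closure.induction_on (p := fun s => ∃ c : ℝ, 0 < c ∧ ∀ y ∈ s, y ∈ Ω →
      ENNReal.ofReal c * ENNReal.ofReal (Φ y) ≤ ∫⁻ x in Ω, ENNReal.ofReal (w x * G x y))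
      ⟨1, one_pos, by simp⟩ ?_ ?_ ?_
    · rintro s t hst ⟨c, hc, h⟩
      exact ⟨c, hc, fun y hy => h y (hst hy)⟩
    · rintro s t ⟨c, hc, h⟩ ⟨d, hd, h'⟩
      refine ⟨min c d, lt_min hc hd, ?_⟩
      rintro y (hy | hy) hyΩ
      · exact le_trans (by gcongr; exact min_le_left _ _) (h y hy hyΩ)
      · exact le_trans (by gcongr; exact min_le_right _ _) (h' y hy hyΩ)
    · intro p hp
      obtain ⟨z, k, hk, h⟩ := hlocal p hp
      obtain ⟨V, hV, hVc⟩ := exists_nhds_lintegral_ge (μ := volume)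
        (K := fun x y => w x * G x y) hk (fun y hy => (hΦpos y hy).le) h
      exact ⟨V, mem_nhdsWithin_of_mem_nhds hV, hVc⟩
  refine ⟨c⁻¹, inv_pos.2 hc, fun τ _ hτ => ?_⟩
  rw [inv_inv]
  have hΩm : MeasurableSet Ω := hΩo.measurableSet
  have hΦm : AEMeasurable (fun x => ENNReal.ofReal (Φ x)) (τ.restrict Ω) :=
    (hΦc.aemeasurable hΩm).ennreal_ofReal
  have hsf : SFinite (τ.restrict Ω) := sFinite_of_lintegral_ne_top hΦm
    ((ae_restrict_iff' hΩm).2 (.of_forall fun x hx => by simpa using hΦpos x hx))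
    (.of_forall fun _ => ENNReal.ofReal_ne_top) hτ.ne
  have hwm : AEMeasurable w (volume.restrict Ω) :=
    (hΦc.div (hδc.const_mul cs).continuousOn
      fun x hx => (mul_pos hcs0 (hδpos x hx)).ne').aemeasurable hΩm
  have hKm : AEMeasurable (Function.uncurry fun x y => ENNReal.ofReal (w x * G x y))
      ((volume.restrict Ω).prod (τ.restrict Ω)) :=
    (hwm.comp_fst.mul hGm.aemeasurable).ennreal_ofReal
  calc ENNReal.ofReal c * ∫⁻ y in Ω, ENNReal.ofReal (Φ y) ∂τ
      = ∫⁻ y in Ω, ENNReal.ofReal c * ENNReal.ofReal (Φ y) ∂τ :=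
        (lintegral_const_mul' _ _ ENNReal.ofReal_ne_top).symm
    _ ≤ ∫⁻ y in Ω, (∫⁻ x in Ω, ENNReal.ofReal (w x * G x y)) ∂τ :=
        setLIntegral_mono' hΩm fun y hy => hcΩ y (subset_closure hy) hy
    _ = ∫⁻ x in Ω, (∫⁻ y in Ω, ENNReal.ofReal (w x * G x y) ∂τ) :=
        (lintegral_lintegral_swap hKm).symm
    _ ≤ _ := by
        refine setLIntegral_mono' hΩm fun x hx => ?_
        rw [← lintegral_const_mul' _ _ ENNReal.ofReal_ne_top]
        refine lintegral_mono fun y => ?_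
        have hΦx := hΦpos x hx
        have hδx := hδpos x hx
        have hΦ₀x := hΦ₀pos x hx
        rw [ENNReal.ofReal_mul (by positivity)]
        gcongr
        exact div_le_div_of_nonneg_left hΦx.le hΦ₀x (hΦ₀ x hx).2
end

section
/- Let Ω ⊂ ℝ^N (N ≥ 3) be a bounded open set with C² boundary. Let α, α* be real numbers with 0 < α − 1/2 < α* ≤ α, let Φ : Ω → (0,∞) be continuous with c₁⁻¹ δ(x)^α ≤ Φ(x) ≤ c₁ δ(x)^{α*} for all x with δ(x) < β₁ (some c₁ ≥ 1, β₁ > 0), let Φ₀ : Ω → (0,∞) satisfy c_*⁻¹ δ ≤ Φ₀ ≤ c_* δ, and let G : {(x,y) ∈ Ω × Ω : x ≠ y} → (0,∞) be Borel measurable and symmetric. Assume there exist a ≥ 2 and c₀ ≥ 1 such that for all β ∈ (0,β₁) and x ∈ Σ_β: (i) Φ(x) G(x,y) ≤ c₀ |x−y|^{2−N} Φ(y) for all y ∈ Ω with 0 < |x−y| < aβ; (ii) Φ(x) G(x,y) ≤ c₀ β^{2α*} |x−y|^{2−N−2α} Φ(y) for all y ∈ Ω with |x−y| ≥ aβ;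 and in addition (iii) for every b > 0 there is C(b) with G(x,y) ≤ C(b) |x−y|^{2−N} whenever 0 < |x−y| ≤ b⁻¹ min(δ(x),δ(y)); (iv) for every r > 0 there is C(r) with G(x,y) ≤ C(r) Φ(x) whenever δ(y) ≥ r and δ(x) < r/2. Then there exists c′ > 0 such that for every positive Borel measure τ on Ω with ∫_Ω Φ dτ < ∞: ∫_Ω (Φ(x)/Φ₀(x)) (∫_Ω G(x,y) dτ(y)) dx ≤ c′ ∫_Ω Φ dτ. -/
open MeasureTheory Metric Set

/-- If the sublevel sets of `g` satisfy `μ {0 < g ≤ s} ≤ C s ^ p`, then `g ^ (-q)` is integrable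
for `q < p`, with a bound depending on `p` and `q` only. -/
lemma exists_setLIntegral_rpow_neg_le {p q : ℝ} (hq : 0 ≤ q) (hpq : q < p) :
    ∃ K : ℝ, 0 < K ∧ ∀ {X : Type} [MeasurableSpace X] (μ : Measure X) (g : X → ℝ) (C R : ℝ),
      Measurable g → 0 ≤ C → 0 < R →
      (∀ s, 0 < s → s ≤ R → μ {x | 0 < g x ∧ g x ≤ s} ≤ ENNReal.ofReal (C * s ^ p)) →
      ∫⁻ x in {x | 0 < g x ∧ g x ≤ R}, ENNReal.ofReal (g x ^ (-q)) ∂μ ≤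
        ENNReal.ofReal (K * C * R ^ (p - q)) := by
  set ρ : ℝ := (1 / 2 : ℝ) ^ (p - q) with hρ
  have hρ0 : 0 < ρ := by positivity
  have hρ1 : ρ < 1 := Real.rpow_lt_one (by norm_num) (by norm_num) (by linarith)
  refine ⟨2 ^ q * (1 - ρ)⁻¹, mul_pos (by positivity) (inv_pos.2 (by linarith)), ?_⟩
  intro X _ μ g C R hg hC hR h
  set A : ℕ → Set X := fun n => {x | R * (1 / 2) ^ (n + 1) < g x ∧ g x ≤ R * (1 / 2) ^ n} with hA
  have hsub : {x | 0 < g x ∧ g x ≤ R} ⊆ ⋃ n, A n := by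
    rintro x ⟨h0, h1⟩
    obtain ⟨n, hn1, hn2⟩ := exists_nat_pow_near_of_lt_one (x := g x / R) (y := (1 / 2 : ℝ))
      (by positivity) ((div_le_one hR).2 h1) (by norm_num) (by norm_num)
    refine mem_iUnion.2 ⟨n, ?_, ?_⟩
    · rw [lt_div_iff₀ hR] at hn1; linarith
    · rw [div_le_iff₀ hR] at hn2; linarith
  have hterm : ∀ n, ∫⁻ x in A n, ENNReal.ofReal (g x ^ (-q)) ∂μ ≤
      ENNReal.ofReal (C * R ^ (p - q) * 2 ^ q * ρ ^ n) := by
    intro n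
    have hs : 0 < R * (1 / 2) ^ n := by positivity
    have hs' : 0 < R * (1 / 2) ^ (n + 1) := by positivity
    have hsR : R * (1 / 2) ^ n ≤ R :=
      mul_le_of_le_one_right hR.le (pow_le_one₀ (by norm_num) (by norm_num))
    calc ∫⁻ x in A n, ENNReal.ofReal (g x ^ (-q)) ∂μ
        ≤ ∫⁻ x in A n, ENNReal.ofReal ((R * (1 / 2) ^ (n + 1)) ^ (-q)) ∂μ := by
          refine setLIntegral_mono measurable_const fun x hx => ENNReal.ofReal_le_ofReal ?_
          exact Real.rpow_le_rpow_of_nonpos hs' hx.1.le (by linarith)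
      _ = ENNReal.ofReal ((R * (1 / 2) ^ (n + 1)) ^ (-q)) * μ (A n) := by
          rw [setLIntegral_const]
      _ ≤ ENNReal.ofReal ((R * (1 / 2) ^ (n + 1)) ^ (-q)) *
            ENNReal.ofReal (C * (R * (1 / 2) ^ n) ^ p) := by
          gcongr
          refine le_trans (measure_mono ?_) (h _ hs hsR)
          exact fun x hx => ⟨hs'.trans hx.1, hx.2⟩
      _ = ENNReal.ofReal (C * R ^ (p - q) * 2 ^ q * ρ ^ n) := by
          rw [← ENNReal.ofReal_mul (by positivity)]
          congr 1
          have e1 : R * (1 / 2 : ℝ) ^ (n + 1) = (R * (1 / 2) ^ n) / 2 := by ring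
          have e2 : ρ ^ n = ((1 / 2 : ℝ) ^ n) ^ (p - q) := by
            rw [hρ, ← Real.rpow_natCast, ← Real.rpow_mul (by norm_num), mul_comm,
              Real.rpow_mul (by norm_num), Real.rpow_natCast]
          rw [e1, Real.div_rpow hs.le (by norm_num), Real.rpow_neg (by norm_num : (0 : ℝ) ≤ 2),
            div_inv_eq_mul, e2]
          have e3 : R ^ (p - q) * ((1 / 2 : ℝ) ^ n) ^ (p - q) =
              (R * (1 / 2) ^ n) ^ (-q) * (R * (1 / 2) ^ n) ^ p := by
            rw [← Real.mul_rpow hR.le (by positivity), ← Real.rpow_add hs]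
            congr 1; ring
          linear_combination (-C * 2 ^ q) * e3
  calc ∫⁻ x in {x | 0 < g x ∧ g x ≤ R}, ENNReal.ofReal (g x ^ (-q)) ∂μ
      ≤ ∫⁻ x in ⋃ n, A n, ENNReal.ofReal (g x ^ (-q)) ∂μ := lintegral_mono_set hsub
    _ ≤ ∑' n, ∫⁻ x in A n, ENNReal.ofReal (g x ^ (-q)) ∂μ := lintegral_iUnion_le _ _
    _ ≤ ∑' n, ENNReal.ofReal (C * R ^ (p - q) * 2 ^ q * ρ ^ n) := ENNReal.tsum_le_tsum hterm
    _ = ENNReal.ofReal (∑' n, C * R ^ (p - q) * 2 ^ q * ρ ^ n) :=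
        (ENNReal.ofReal_tsum_of_nonneg (fun n => by positivity)
          ((summable_geometric_of_lt_one hρ0.le hρ1).mul_left _)).symm
    _ = ENNReal.ofReal (2 ^ q * (1 - ρ)⁻¹ * C * R ^ (p - q)) := by
        rw [tsum_mul_left, tsum_geometric_of_lt_one hρ0.le hρ1]
        congr 1; ring

/-- A set meeting every line of direction `v` in a set of diameter less than `l` has volume
`O(l r ^ (N - 1))` in balls of radius `r`, by packing disjoint translates. -/
lemma volume_inter_ball_le_of_line_diam {N : ℕ} {S : Set (EuclideanSpace ℝ (Fin N))}
    (hS : MeasurableSet S) {v : EuclideanSpace ℝ (Fin N)} (hv : ‖v‖ = 1) {l : ℝ} (hl : 0 < l)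
    (hline : ∀ x ∈ S, ∀ s : ℝ, x + s • v ∈ S → |s| < l)
    (y : EuclideanSpace ℝ (Fin N)) {r : ℝ} (hr : 0 < r) :
    volume (S ∩ ball y r) ≤ ENNReal.ofReal
      (2 ^ N * (volume (ball (0 : EuclideanSpace ℝ (Fin N)) 1)).toReal * l * r ^ ((N : ℝ) - 1)) := by
  set V := (volume (ball (0 : EuclideanSpace ℝ (Fin N)) 1)).toReal with hV
  set K : ℕ := ⌊r / l⌋₊ with hK
  have hK1 : (K : ℝ) * l ≤ r := (le_div_iff₀ hl).1 (Nat.floor_le (by positivity))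
  have hK2 : r / l ≤ (K + 1 : ℕ) := by
    push_cast; exact (Nat.lt_floor_add_one _).le
  set T : ℕ → Set (EuclideanSpace ℝ (Fin N)) :=
    fun k => (fun x => x + ((k : ℝ) * l) • v) ⁻¹' (S ∩ ball y r) with hT
  have hTm : ∀ k, MeasurableSet (T k) := fun k =>
    (measurable_add_const _) (hS.inter measurableSet_ball)
  have hTv : ∀ k, volume (T k) = volume (S ∩ ball y r) := fun k =>
    measure_preimage_add_right _ _ _
  have hdisj : (↑(Finset.range (K + 1)) : Set ℕ).PairwiseDisjoint T := by
    intro j _ k _ hjk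
    refine Set.disjoint_left.2 fun x hj hk => ?_
    have h1 := hline _ hj.1 (((k : ℝ) - j) * l) (by
      have : x + ((j : ℝ) * l) • v + (((k : ℝ) - j) * l) • v = x + ((k : ℝ) * l) • v := by
        module
      rw [this]; exact hk.1)
    rw [abs_mul, abs_of_pos hl] at h1
    have h2 : |(k : ℝ) - j| < 1 := by
      by_contra! h; nlinarith
    have h3 : |(k : ℤ) - j| < 1 := by exact_mod_cast h2
    rw [Int.abs_lt_one_iff] at h3
    exact hjk (by lia)
  have hsub : (⋃ k ∈ Finset.range (K + 1), T k) ⊆ ball y (2 * r) := by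
    intro x hx
    simp only [mem_iUnion, Finset.mem_range] at hx
    obtain ⟨k, hk, hx⟩ := hx
    have h1 : dist (x + ((k : ℝ) * l) • v) y < r := hx.2
    have h2 : dist x (x + ((k : ℝ) * l) • v) = k * l := by
      rw [dist_self_add_right, norm_smul, hv, mul_one, Real.norm_eq_abs, abs_of_nonneg]
      positivity
    have h3 : (k : ℝ) ≤ K := by exact_mod_cast Nat.lt_succ_iff.1 hk
    have h4 : (k : ℝ) * l ≤ K * l := by gcongr
    have := dist_triangle x (x + ((k : ℝ) * l) • v) y
    rw [mem_ball]; linarith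
  have hsum : ((K + 1 : ℕ) : ENNReal) * volume (S ∩ ball y r) ≤
      ENNReal.ofReal ((2 * r) ^ N * V) := by
    calc ((K + 1 : ℕ) : ENNReal) * volume (S ∩ ball y r)
        = ∑ k ∈ Finset.range (K + 1), volume (T k) := by
          rw [Finset.sum_congr rfl fun k _ => hTv k, Finset.sum_const, Finset.card_range,
            nsmul_eq_mul]
      _ = volume (⋃ k ∈ Finset.range (K + 1), T k) :=
          (measure_biUnion_finset hdisj fun k _ => hTm k).symm
      _ ≤ volume (ball y (2 * r)) := measure_mono hsub
      _ = ENNReal.ofReal ((2 * r) ^ N * V) := by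
          rw [Measure.addHaar_ball_of_pos _ _ (by positivity), finrank_euclideanSpace_fin,
            ENNReal.ofReal_mul (by positivity), hV, ENNReal.ofReal_toReal measure_ball_lt_top.ne]
  calc volume (S ∩ ball y r)
      = ENNReal.ofReal (l / r) * (ENNReal.ofReal (r / l) * volume (S ∩ ball y r)) := by
        rw [← mul_assoc, ← ENNReal.ofReal_mul (by positivity)]
        have : l / r * (r / l) = 1 := by field_simp
        rw [this]; simp
    _ ≤ ENNReal.ofReal (l / r) * (((K + 1 : ℕ) : ENNReal) * volume (S ∩ ball y r)) := by
        gcongr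
        rw [← ENNReal.ofReal_natCast]
        exact ENNReal.ofReal_le_ofReal hK2
    _ ≤ ENNReal.ofReal (l / r) * ENNReal.ofReal ((2 * r) ^ N * V) := by gcongr
    _ = ENNReal.ofReal (2 ^ N * V * l * r ^ ((N : ℝ) - 1)) := by
        rw [← ENNReal.ofReal_mul (by positivity), Real.rpow_sub_one hr.ne', Real.rpow_natCast,
          mul_pow]
        congr 1; ring

/-- The zero set of a function strictly differentiable at `p` with nonzero derivative has, near
`p`, thickenings whose volume is linear in the thickness. -/
lemma exists_volume_thickening_le_of_hasStrictFDerivAt {N : ℕ}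
    {f : EuclideanSpace ℝ (Fin N) → ℝ} {f' : EuclideanSpace ℝ (Fin N) →L[ℝ] ℝ}
    {p : EuclideanSpace ℝ (Fin N)} (hf : HasStrictFDerivAt f f' p) (hf' : f' ≠ 0) :
    ∃ W ∈ nhds p, ∃ C : ℝ, 0 ≤ C ∧ ∀ S ⊆ W, (∀ x ∈ S, f x = 0) →
      ∀ y : EuclideanSpace ℝ (Fin N), ∀ t r : ℝ, 0 < t → 0 < r →
        volume (thickening t S ∩ ball y r) ≤ ENNReal.ofReal (C * t * r ^ ((N : ℝ) - 1)) := by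
  obtain ⟨v, hv, hm⟩ : ∃ v, ‖v‖ = 1 ∧ 0 < f' v := by
    obtain ⟨w, hw⟩ : ∃ w, f' w ≠ 0 := by
      by_contra! h; exact hf' (ContinuousLinearMap.ext h)
    have hw0 : w ≠ 0 := by rintro rfl; simp at hw
    have hn : 0 < ‖w‖ := norm_pos_iff.2 hw0
    rcases lt_or_gt_of_ne hw with h | h
    · refine ⟨(-‖w‖⁻¹) • w, by simp [norm_smul, hn.ne'], ?_⟩
      rw [map_smul, smul_eq_mul]
      exact mul_pos_of_neg_of_neg (by simpa using hw0) h
    · refine ⟨(‖w‖⁻¹) • w, by simp [norm_smul, hn.ne'], ?_⟩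
      rw [map_smul, smul_eq_mul]; positivity
  set m := f' v with hmdef
  obtain ⟨W, hW, hlin⟩ := hf.approximates_deriv_on_nhds (c := (m / 2).toNNReal)
    (Or.inr (by simpa using hm))
  set L : ℝ := 2 / m * (m + 2 * ‖f'‖) + 1 with hL
  have hL0 : 0 < L := by positivity
  refine ⟨W, hW, 2 ^ N * (volume (ball (0 : EuclideanSpace ℝ (Fin N)) 1)).toReal * L,
    by positivity, ?_⟩
  intro S hSW hS0 y t r ht hr
  have := volume_inter_ball_le_of_line_diam (S := thickening t S) isOpen_thickening.measurableSet
    hv (l := L * t) (by positivity) ?_ y hr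
  · simpa only [mul_assoc] using this
  intro x hx s hxs
  obtain ⟨q, hqS, hq⟩ := mem_thickening_iff.1 hx
  obtain ⟨q', hqS', hq'⟩ := mem_thickening_iff.1 hxs
  have h1 := hlin q' (hSW hqS') q (hSW hqS)
  rw [hS0 q hqS, hS0 q' hqS', sub_zero, zero_sub, norm_neg] at h1
  rw [Real.coe_toNNReal _ (by positivity)] at h1
  set e := (q' - q) - s • v with he
  have he2 : ‖e‖ ≤ 2 * t := by
    have : e = (x - q) - (x + s • v - q') := by rw [he]; abel
    rw [this]
    rw [dist_eq_norm] at hq hq'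
    linarith [norm_sub_le (x - q) (x + s • v - q')]
  have hqq : q' - q = s • v + e := by rw [he]; abel
  have h2 : ‖q' - q‖ ≤ |s| + 2 * t := by
    rw [hqq]
    have := norm_add_le (s • v) e
    rw [norm_smul, hv, mul_one, Real.norm_eq_abs] at this
    linarith
  have h3 : |s| * m ≤ ‖f' (q' - q)‖ + ‖f'‖ * (2 * t) := by
    have h4 : s * m = f' (q' - q) - f' e := by
      rw [hqq, map_add, map_smul, smul_eq_mul]; ring
    have h5 : |s * m| ≤ ‖f' (q' - q)‖ + ‖f' e‖ := by
      rw [h4]; exact norm_sub_le (f' (q' - q)) (f' e)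
    rw [abs_mul, abs_of_pos hm] at h5
    have h6 : ‖f' e‖ ≤ ‖f'‖ * (2 * t) := (f'.le_opNorm e).trans (by gcongr)
    linarith
  have h7 : |s| * m ≤ 2 * (m + 2 * ‖f'‖) * t := by nlinarith
  have h8 : |s| ≤ 2 / m * (m + 2 * ‖f'‖) * t := by
    rw [← le_div_iff₀ hm] at h7
    calc |s| ≤ _ := h7
      _ = _ := by ring
  rw [hL]; nlinarith

/-- In a bounded open set with `C²` boundary, the volume of a boundary layer of width `t` inside a
ball of radius `r` is at most a constant times `t r ^ (N - 1)`. -/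
lemma HasC2Boundary.exists_volume_thickening_le {N : ℕ} {Ω : Set (EuclideanSpace ℝ (Fin N))}
    (hΩo : IsOpen Ω) (hΩb : Bornology.IsBounded Ω) (hΩ2 : HasC2Boundary Ω) :
    ∃ C : ℝ, 0 ≤ C ∧ ∀ y : EuclideanSpace ℝ (Fin N), ∀ t r : ℝ, 0 < t → 0 < r →
      volume (thickening t (frontier Ω) ∩ ball y r) ≤
        ENNReal.ofReal (C * t * r ^ ((N : ℝ) - 1)) := by
  have hcomp : IsCompact (frontier Ω) :=
    hΩb.isCompact_closure.of_isClosed_subset isClosed_frontier frontier_subset_closure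
  refine hcomp.induction_on (p := fun S => ∃ C : ℝ, 0 ≤ C ∧ ∀ y : EuclideanSpace ℝ (Fin N),
    ∀ t r : ℝ, 0 < t → 0 < r → volume (thickening t S ∩ ball y r) ≤
        ENNReal.ofReal (C * t * r ^ ((N : ℝ) - 1))) ?_ ?_ ?_ ?_
  · exact ⟨0, le_rfl, by simp⟩
  · rintro S T hST ⟨C, hC, h⟩
    refine ⟨C, hC, fun y t r ht hr => (measure_mono ?_).trans (h y t r ht hr)⟩
    exact inter_subset_inter_left _ (thickening_subset_of_subset t hST)
  · rintro S T ⟨C, hC, h⟩ ⟨D, hD, h'⟩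
    refine ⟨C + D, by positivity, fun y t r ht hr => ?_⟩
    rw [thickening_union, union_inter_distrib_right]
    refine (measure_union_le _ _).trans ((add_le_add (h y t r ht hr) (h' y t r ht hr)).trans ?_)
    rw [← ENNReal.ofReal_add (by positivity) (by positivity)]
    exact ENNReal.ofReal_le_ofReal (by linarith)
  · intro p hp
    obtain ⟨U, f, hUo, hpU, hfC, hfd, hUf⟩ := hΩ2 p hp
    have hstrict : HasStrictFDerivAt f (fderiv ℝ f p) p :=
      (hfC.contDiffAt (hUo.mem_nhds hpU)).hasStrictFDerivAt (by norm_num)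
    obtain ⟨W, hW, C, hC, h⟩ :=
      exists_volume_thickening_le_of_hasStrictFDerivAt hstrict (hfd p hpU)
    refine ⟨frontier Ω ∩ (U ∩ W), ?_, C, hC, h _ (fun x hx => hx.2.2) ?_⟩
    · exact inter_mem_nhdsWithin _ (Filter.inter_mem (hUo.mem_nhds hpU) hW)
    rintro x ⟨hxf, hxU, -⟩
    have hxnot : x ∉ Ω := by
      rw [hΩo.frontier_eq] at hxf; exact hxf.2
    have hge : 0 ≤ f x := by
      by_contra! hlt
      have : x ∈ Ω ∩ U := by rw [hUf]; exact ⟨hxU, hlt⟩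
      exact hxnot this.1
    have hle : f x ≤ 0 := by
      by_contra! hlt
      have hcont : ContinuousAt f x := hfC.continuousOn.continuousAt (hUo.mem_nhds hxU)
      have hnear := Filter.inter_mem (hcont.eventually (lt_mem_nhds hlt)) (hUo.mem_nhds hxU)
      obtain ⟨z, ⟨hz1, hz2⟩, hz3⟩ :=
        mem_closure_iff_nhds.1 (frontier_subset_closure hxf) _ hnear
      have : z ∈ {x ∈ U | f x < 0} := by rw [← hUf]; exact ⟨hz3, hz2⟩
      exact absurd this.2 (not_lt.2 (le_of_lt hz1))
    exact le_antisymm hle hge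

lemma exists_setLIntegral_dist_rpow_neg_le {N : ℕ} {q : ℝ} (hq : 0 ≤ q) (hqN : q < N) {D : ℝ}
    (hD : 0 < D) :
    ∃ K : ℝ, 0 < K ∧ ∀ y : EuclideanSpace ℝ (Fin N),
      ∫⁻ x in {x | 0 < dist x y ∧ dist x y ≤ D}, ENNReal.ofReal (dist x y ^ (-q)) ≤
        ENNReal.ofReal K := by
  obtain ⟨K, hK, h⟩ := exists_setLIntegral_rpow_neg_le hq hqN
  set V := (volume (ball (0 : EuclideanSpace ℝ (Fin N)) 1)).toReal with hV
  refine ⟨K * V * D ^ ((N : ℝ) - q) + 1, by positivity, fun y => ?_⟩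
  refine (h volume (fun x => dist x y) V D (by fun_prop) (by positivity) hD ?_).trans
    (ENNReal.ofReal_le_ofReal (by linarith))
  intro s hs _
  calc volume {x | 0 < dist x y ∧ dist x y ≤ s} ≤ volume (closedBall y s) :=
        measure_mono fun x hx => hx.2
    _ = ENNReal.ofReal (V * s ^ (N : ℝ)) := by
        rw [Measure.addHaar_closedBall _ _ hs.le, finrank_euclideanSpace_fin,
          ENNReal.ofReal_mul (by positivity), hV, ENNReal.ofReal_toReal measure_ball_lt_top.ne,
          Real.rpow_natCast, mul_comm]

/-- Integrability of a kernel singular both at the point `y` and along the set `F`, in the region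
where `F` is closer than `y`, when thickenings of `F` have linear volume growth. -/
lemma exists_setLIntegral_infDist_rpow_neg_mul_dist_rpow_neg_le {N : ℕ}
    {F : Set (EuclideanSpace ℝ (Fin N))} (hF : F.Nonempty) {C : ℝ} (hC : 0 ≤ C)
    (hvol : ∀ y : EuclideanSpace ℝ (Fin N), ∀ t r : ℝ, 0 < t → 0 < r →
      volume (thickening t F ∩ ball y r) ≤ ENNReal.ofReal (C * t * r ^ ((N : ℝ) - 1)))
    {γ q : ℝ} (hγ : 0 ≤ γ) (hγ1 : γ < 1) (hq : 0 ≤ q) (hqN : q < N - γ) {D : ℝ} (hD : 0 < D) :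
    ∃ K : ℝ, 0 < K ∧ ∀ y : EuclideanSpace ℝ (Fin N),
      ∫⁻ x in {x | 0 < dist x y ∧ dist x y ≤ D} ∩ {x | 0 < infDist x F ∧ infDist x F ≤ dist x y},
        ENNReal.ofReal (infDist x F ^ (-γ)) * ENNReal.ofReal (dist x y ^ (-q)) ≤
        ENNReal.ofReal K := by
  obtain ⟨K₁, hK₁, h₁⟩ := exists_setLIntegral_rpow_neg_le hγ hγ1
  obtain ⟨K₂, hK₂, h₂⟩ := exists_setLIntegral_rpow_neg_le hq hqN
  have hδ : Measurable fun x : EuclideanSpace ℝ (Fin N) => infDist x F := measurable_infDist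
  have hw : Measurable fun x : EuclideanSpace ℝ (Fin N) =>
      ENNReal.ofReal (infDist x F ^ (-γ)) := by fun_prop
  have hball : ∀ (y : EuclideanSpace ℝ (Fin N)) (r : ℝ), 0 < r →
      ∫⁻ x in {x | 0 < infDist x F ∧ infDist x F ≤ r}, ENNReal.ofReal (infDist x F ^ (-γ))
        ∂(volume.restrict (closedBall y r)) ≤
      ENNReal.ofReal (K₁ * (C * 2 * 2 ^ ((N : ℝ) - 1)) * r ^ ((N : ℝ) - γ)) := by
    intro y r hr
    refine (h₁ (volume.restrict (closedBall y r)) (fun x => infDist x F)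
      (C * 2 * (2 * r) ^ ((N : ℝ) - 1)) r hδ (by positivity) hr ?_).trans
      (ENNReal.ofReal_le_ofReal (le_of_eq ?_))
    · intro s hs _
      rw [Measure.restrict_apply' measurableSet_closedBall]
      refine (measure_mono ?_).trans ((hvol y (2 * s) (2 * r) (by linarith) (by linarith)).trans
        (ENNReal.ofReal_le_ofReal (le_of_eq ?_)))
      · rintro x ⟨⟨_, hx⟩, hxy⟩
        refine ⟨(mem_thickening_iff_infDist_lt hF).2 (by linarith), ?_⟩
        rw [mem_closedBall] at hxy
        rw [mem_ball]; linarith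
      · rw [Real.rpow_one]; ring
    · rw [Real.mul_rpow (by norm_num) hr.le]
      have : r ^ ((N : ℝ) - γ) = r ^ ((N : ℝ) - 1) * r ^ (1 - γ) := by
        rw [← Real.rpow_add hr]; congr 1; ring
      rw [this]; ring
  set C' := K₁ * (C * 2 * 2 ^ ((N : ℝ) - 1)) with hC'
  refine ⟨K₂ * C' * D ^ ((N : ℝ) - γ - q) + 1, by positivity, fun y => ?_⟩
  set B : Set (EuclideanSpace ℝ (Fin N)) := {x | 0 < infDist x F ∧ infDist x F ≤ dist x y}
    with hB
  have hd : Measurable fun x : EuclideanSpace ℝ (Fin N) => dist x y := by fun_prop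
  have hAm : ∀ s : ℝ, MeasurableSet {x : EuclideanSpace ℝ (Fin N) | 0 < dist x y ∧ dist x y ≤ s} :=
    fun s => (measurableSet_lt measurable_const hd).inter (measurableSet_le hd measurable_const)
  set μ : Measure (EuclideanSpace ℝ (Fin N)) :=
    (volume.restrict B).withDensity fun x => ENNReal.ofReal (infDist x F ^ (-γ)) with hμ
  have key := h₂ μ (fun x => dist x y) C' D hd (by positivity) hD ?_
  · rw [hμ, setLIntegral_withDensity_eq_setLIntegral_mul _ hw (by fun_prop) (hAm D),
      Measure.restrict_restrict (hAm D)] at key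
    exact key.trans (ENNReal.ofReal_le_ofReal (by linarith))
  · intro s hs _
    rw [hμ, withDensity_apply _ (hAm s), Measure.restrict_restrict (hAm s)]
    refine le_trans ?_ (hball y s hs)
    rw [Measure.restrict_restrict' measurableSet_closedBall]
    refine lintegral_mono_set ?_
    rintro x ⟨⟨_, h2⟩, h3, h4⟩
    exact ⟨⟨h3, h4.trans h2⟩, h2⟩

lemma sFinite_of_lintegral_lt_top {X : Type*} [MeasurableSpace X] {ν : Measure X}
    {f : X → ENNReal} (hf : AEMeasurable f ν) (hpos : ∀ᵐ x ∂ν, f x ≠ 0)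
    (hfin : ∫⁻ x, f x ∂ν < ⊤) : SFinite ν := by
  have : IsFiniteMeasure (ν.withDensity f) := isFiniteMeasure_withDensity hfin.ne
  rw [← withDensity_inv_same₀ hf hpos ((ae_lt_top' hf hfin.ne).mono fun _ h => h.ne)]
  infer_instance

/-- Tonelli's theorem turns a bound on `∫ w(x) k(x, y) dμ(x)`, uniform relative to `φ(y)`, into a
bound on the potentials of all measures integrating `φ`. -/
lemma lintegral_mul_lintegral_kernel_le {X Y : Type*} [MeasurableSpace X] [MeasurableSpace Y]
    {μ : Measure X} [SFinite μ] {ν : Measure Y} {w : X → ENNReal} {k : X → Y → ENNReal}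
    {φ : Y → ENNReal} {c : ENNReal} (hc : c ≠ ⊤) (hw : AEMeasurable w μ)
    (hk : Measurable (Function.uncurry k)) (hφ : AEMeasurable φ ν) (hφ0 : ∀ᵐ y ∂ν, φ y ≠ 0)
    (hφfin : ∫⁻ y, φ y ∂ν < ⊤) (h : ∀ᵐ y ∂ν, ∫⁻ x, w x * k x y ∂μ ≤ c * φ y) :
    ∫⁻ x, w x * ∫⁻ y, k x y ∂ν ∂μ ≤ c * ∫⁻ y, φ y ∂ν := by
  have := sFinite_of_lintegral_lt_top hφ hφ0 hφfin
  calc ∫⁻ x, w x * ∫⁻ y, k x y ∂ν ∂μ = ∫⁻ x, ∫⁻ y, w x * k x y ∂ν ∂μ :=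
        lintegral_congr fun x => (lintegral_const_mul _ hk.of_uncurry_left).symm
    _ = ∫⁻ y, ∫⁻ x, w x * k x y ∂μ ∂ν :=
        lintegral_lintegral_swap (hw.comp_fst.mul hk.aemeasurable)
    _ ≤ ∫⁻ y, c * φ y ∂ν := lintegral_mono_ae h
    _ = c * ∫⁻ y, φ y ∂ν := lintegral_const_mul' _ _ hc

lemma isCompact_setOf_le_infDist_frontier {E : Type*} [PseudoMetricSpace E] [ProperSpace E]
    {Ω : Set E} (hΩo : IsOpen Ω) (hΩb : Bornology.IsBounded Ω) {s : ℝ} (hs : 0 < s) :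
    IsCompact {x ∈ Ω | s ≤ infDist x (frontier Ω)} := by
  have : {x ∈ Ω | s ≤ infDist x (frontier Ω)} =
      closure Ω ∩ {x | s ≤ infDist x (frontier Ω)} := by
    refine Subset.antisymm (fun x hx => ⟨subset_closure hx.1, hx.2⟩) fun x hx => ⟨?_, hx.2⟩
    by_contra hxΩ
    have hxf : x ∈ frontier Ω := by rw [hΩo.frontier_eq]; exact ⟨hx.1, hxΩ⟩
    have h2 : s ≤ infDist x (frontier Ω) := hx.2
    rw [infDist_zero_of_mem hxf] at h2
    linarith
  rw [this]
  exact hΩb.isCompact_closure.inter_right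
    (isClosed_le continuous_const (continuous_infDist_pt _))

/-- The kernel bound for `x` away from the boundary. -/
lemma exists_mul_kernel_le_of_le_infDist_frontier {N : ℕ} {Ω : Set (EuclideanSpace ℝ (Fin N))}
    (hΩo : IsOpen Ω) (hΩb : Bornology.IsBounded Ω) (hN : 1 ≤ N)
    {Φ : EuclideanSpace ℝ (Fin N) → ℝ}
    {G : EuclideanSpace ℝ (Fin N) → EuclideanSpace ℝ (Fin N) → ℝ}
    (hΦc : ContinuousOn Φ Ω) (hΦpos : ∀ x ∈ Ω, 0 < Φ x)
    (hGpos : ∀ x ∈ Ω, ∀ y ∈ Ω, x ≠ y → 0 < G x y)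
    (hGsym : ∀ x ∈ Ω, ∀ y ∈ Ω, G x y = G y x)
    (hG3 : ∀ b : ℝ, 0 < b → ∃ Cb : ℝ, 0 < Cb ∧ ∀ x ∈ Ω, ∀ y ∈ Ω,
      0 < dist x y →
      dist x y ≤ b⁻¹ * min (infDist x (frontier Ω)) (infDist y (frontier Ω)) →
      G x y ≤ Cb * dist x y ^ ((2 : ℝ) - N))
    (hG4 : ∀ r : ℝ, 0 < r → ∃ Cr : ℝ, 0 < Cr ∧ ∀ x ∈ Ω, ∀ y ∈ Ω,
      r ≤ infDist y (frontier Ω) → infDist x (frontier Ω) < r / 2 → G x y ≤ Cr * Φ x)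
    {β : ℝ} (hβ : 0 < β) {D : ℝ} (hD : 0 < D) (hΩD : ∀ x ∈ Ω, ∀ y ∈ Ω, dist x y ≤ D) :
    ∃ K : ℝ, 0 < K ∧ ∀ x ∈ Ω, ∀ y ∈ Ω, x ≠ y → β ≤ infDist x (frontier Ω) →
      Φ x / infDist x (frontier Ω) * G x y ≤ K * dist x y ^ (-((N : ℝ) - 1)) * Φ y := by
  obtain ⟨M, hM, hΦM⟩ : ∃ M : ℝ, 0 < M ∧ ∀ x ∈ Ω, β ≤ infDist x (frontier Ω) → Φ x ≤ M := by
    obtain ⟨M, hM⟩ := (isCompact_setOf_le_infDist_frontier hΩo hΩb hβ).bddAbove_image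
      (hΦc.mono fun x hx => hx.1)
    exact ⟨max M 1, by positivity, fun x hx hxβ =>
      (hM (mem_image_of_mem Φ ⟨hx, hxβ⟩)).trans (le_max_left _ _)⟩
  obtain ⟨m, hm, hmΦ⟩ : ∃ m : ℝ, 0 < m ∧ ∀ y ∈ Ω, β / 2 ≤ infDist y (frontier Ω) → m ≤ Φ y := by
    have hcomp := isCompact_setOf_le_infDist_frontier hΩo hΩb (half_pos hβ)
    rcases eq_empty_or_nonempty {x ∈ Ω | β / 2 ≤ infDist x (frontier Ω)} with he | hne
    · refine ⟨1, one_pos, fun y hy hyβ => ?_⟩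
      have : y ∈ {x ∈ Ω | β / 2 ≤ infDist x (frontier Ω)} := ⟨hy, hyβ⟩
      simp [he] at this
    · obtain ⟨z, hz, hmin⟩ := hcomp.exists_isMinOn hne (hΦc.mono fun x hx => hx.1)
      exact ⟨Φ z, hΦpos z hz.1, fun y hy hyβ => hmin ⟨hy, hyβ⟩⟩
  obtain ⟨C₃, hC₃, h₃⟩ := hG3 (β / (2 * D)) (by positivity)
  obtain ⟨C₄, hC₄, h₄⟩ := hG4 β hβ
  refine ⟨M / β * C₄ * D ^ ((N : ℝ) - 1) + M / β * (C₃ * D) / m, by positivity, ?_⟩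
  intro x hx y hy hxy hxβ
  have hd : 0 < dist x y := dist_pos.2 hxy
  have hdD := hΩD x hx y hy
  have hΦy := hΦpos y hy
  have hG := hGpos x hx y hy hxy
  have hN1 : (0 : ℝ) ≤ (N : ℝ) - 1 := by
    have : (1 : ℝ) ≤ N := by exact_mod_cast hN
    linarith
  set P := dist x y ^ (-((N : ℝ) - 1)) with hP
  have hP0 : 0 < P := by positivity
  have hw : Φ x / infDist x (frontier Ω) ≤ M / β := by
    gcongr
    exact hΦM x hx hxβ
  have hstep : Φ x / infDist x (frontier Ω) * G x y ≤ M / β * G x y := by gcongr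
  refine hstep.trans ?_
  rcases lt_or_ge (infDist y (frontier Ω)) (β / 2) with hyβ | hyβ
  · have h1 : G x y ≤ C₄ * Φ y := by
      rw [hGsym x hx y hy]; exact h₄ y hy x hx hxβ hyβ
    have h2 : 1 ≤ D ^ ((N : ℝ) - 1) * P := by
      rw [hP, Real.rpow_neg hd.le, ← div_eq_mul_inv, one_le_div (by positivity)]
      gcongr
    calc M / β * G x y ≤ M / β * (C₄ * Φ y) * 1 := by rw [mul_one]; gcongr
      _ ≤ M / β * (C₄ * Φ y) * (D ^ ((N : ℝ) - 1) * P) := by gcongr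
      _ = M / β * C₄ * D ^ ((N : ℝ) - 1) * P * Φ y := by ring
      _ ≤ _ := by gcongr; exact le_add_of_nonneg_right (by positivity)
  · have h1 : G x y ≤ C₃ * dist x y ^ ((2 : ℝ) - N) := by
      refine h₃ x hx y hy hd (hdD.trans ?_)
      have : β / 2 ≤ min (infDist x (frontier Ω)) (infDist y (frontier Ω)) :=
        le_min (by linarith) hyβ
      calc D = (β / (2 * D))⁻¹ * (β / 2) := by field_simp
        _ ≤ _ := by gcongr
    have h2 : dist x y ^ ((2 : ℝ) - N) = dist x y * P := by
      rw [hP, mul_comm, ← Real.rpow_add_one hd.ne']; congr 1; ring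
    have h3 : 1 ≤ Φ y / m := (one_le_div hm).2 (hmΦ y hy hyβ)
    calc M / β * G x y ≤ M / β * (C₃ * (D * P)) * 1 := by
          rw [h2] at h1
          rw [mul_one]
          gcongr
          exact h1.trans (by gcongr)
      _ ≤ M / β * (C₃ * (D * P)) * (Φ y / m) := by gcongr
      _ = M / β * (C₃ * D) / m * P * Φ y := by ring
      _ ≤ _ := by gcongr; exact le_add_of_nonneg_left (by positivity)

/-- The near-diagonal kernel bound, where the distance `δ` to the boundary controls `d`. -/
lemma div_mul_le_of_dist_lt {N : ℕ} {u g φ δ d a c : ℝ} (hδ : 0 < δ) (hd : 0 < d) (hc : 0 ≤ c)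
    (hφ : 0 ≤ φ) (hda : d < a * δ) (h : u * g ≤ c * d ^ ((2 : ℝ) - N) * φ) :
    u / δ * g ≤ c * a * d ^ (-((N : ℝ) - 1)) * φ := by
  have h1 : d ^ (-((N : ℝ) - 1)) = d ^ ((2 : ℝ) - N) / d := by
    rw [← Real.rpow_sub_one hd.ne']; congr 1; ring
  have h2 : 1 / δ ≤ a / d := by
    rw [div_le_div_iff₀ hδ hd]; linarith
  calc u / δ * g = u * g * (1 / δ) := by ring
    _ ≤ c * d ^ ((2 : ℝ) - N) * φ * (1 / δ) := by gcongr
    _ ≤ c * d ^ ((2 : ℝ) - N) * φ * (a / d) := by gcongr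
    _ = _ := by rw [h1]; ring

/-- The off-diagonal kernel bound, where part of the power of `δ` is traded for a power of `d`. -/
lemma div_mul_le_of_le_dist {N : ℕ} {u g φ δ d c α αs γ : ℝ} (hδ : 0 < δ) (hδd : δ ≤ d)
    (hc : 0 ≤ c) (hφ : 0 ≤ φ) (hγ : 1 - 2 * αs ≤ γ)
    (h : u * g ≤ c * δ ^ (2 * αs) * d ^ ((2 : ℝ) - N - 2 * α) * φ) :
    u / δ * g ≤ c * (δ ^ (-γ) * d ^ (-((N : ℝ) - 1 - γ + 2 * α - 2 * αs))) * φ := by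
  have hd : 0 < d := hδ.trans_le hδd
  have h1 : δ ^ (2 * αs) / δ = δ ^ (-γ) * δ ^ (2 * αs - 1 + γ) := by
    rw [← Real.rpow_sub_one hδ.ne', ← Real.rpow_add hδ]; congr 1; ring
  have h2 : d ^ (-((N : ℝ) - 1 - γ + 2 * α - 2 * αs)) =
      d ^ (2 * αs - 1 + γ) * d ^ ((2 : ℝ) - N - 2 * α) := by
    rw [← Real.rpow_add hd]; congr 1; ring
  have h3 : δ ^ (2 * αs - 1 + γ) ≤ d ^ (2 * αs - 1 + γ) :=
    Real.rpow_le_rpow hδ.le hδd (by linarith)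
  calc u / δ * g = u * g / δ := by ring
    _ ≤ c * δ ^ (2 * αs) * d ^ ((2 : ℝ) - N - 2 * α) * φ / δ := by gcongr
    _ = c * (δ ^ (2 * αs) / δ * d ^ ((2 : ℝ) - N - 2 * α)) * φ := by ring
    _ ≤ c * (δ ^ (-γ) * d ^ (2 * αs - 1 + γ) * d ^ ((2 : ℝ) - N - 2 * α)) * φ := by
        rw [h1]; gcongr
    _ = _ := by rw [h2]; ring

theorem stmt4 {N : ℕ} (hN : 3 ≤ N) (Ω : Set (EuclideanSpace ℝ (Fin N)))
    (hΩo : IsOpen Ω) (hΩb : Bornology.IsBounded Ω) (hΩ2 : HasC2Boundary Ω)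
    (α αs : ℝ) (hα : 0 < α - 1/2) (hαs : α - 1/2 < αs) (hαs' : αs ≤ α)
    (Φ Φ₀ : EuclideanSpace ℝ (Fin N) → ℝ)
    (G : EuclideanSpace ℝ (Fin N) → EuclideanSpace ℝ (Fin N) → ℝ)
    (hΦc : ContinuousOn Φ Ω) (hΦpos : ∀ x ∈ Ω, 0 < Φ x)
    (c₁ β₁ : ℝ) (hc₁ : 1 ≤ c₁) (hβ₁ : 0 < β₁)
    -- (B2): bounds on the ground state near the boundary
    (hΦ : ∀ x ∈ Ω, Metric.infDist x (frontier Ω) < β₁ →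
      c₁⁻¹ * Metric.infDist x (frontier Ω) ^ α ≤ Φ x ∧
      Φ x ≤ c₁ * Metric.infDist x (frontier Ω) ^ αs)
    (cs : ℝ) (hcs : 1 ≤ cs)
    (hΦ₀ : ∀ x ∈ Ω, cs⁻¹ * Metric.infDist x (frontier Ω) ≤ Φ₀ x ∧
      Φ₀ x ≤ cs * Metric.infDist x (frontier Ω))
    (hΦ₀pos : ∀ x ∈ Ω, 0 < Φ₀ x)
    (hGm : Measurable (Function.uncurry G))
    (hGpos : ∀ x ∈ Ω, ∀ y ∈ Ω, x ≠ y → 0 < G x y)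
    (hGsym : ∀ x ∈ Ω, ∀ y ∈ Ω, G x y = G y x)
    (a c₀ : ℝ) (ha : 2 ≤ a) (hc₀ : 1 ≤ c₀)
    -- (i): upper boundary Green estimate near the diagonal
    (hG1 : ∀ β ∈ Set.Ioo (0:ℝ) β₁, ∀ x ∈ Ω, Metric.infDist x (frontier Ω) = β →
      ∀ y ∈ Ω, 0 < dist x y → dist x y < a * β →
        Φ x * G x y ≤ c₀ * dist x y ^ ((2:ℝ) - N) * Φ y)
    -- (ii): upper boundary Green estimate away from the diagonal
    (hG2 : ∀ β ∈ Set.Ioo (0:ℝ) β₁, ∀ x ∈ Ω, Metric.infDist x (frontier Ω) = β →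
      ∀ y ∈ Ω, a * β ≤ dist x y →
        Φ x * G x y ≤ c₀ * β ^ (2 * αs) * dist x y ^ ((2:ℝ) - N - 2 * α) * Φ y)
    -- (iii): interior upper Green estimate
    (hG3 : ∀ b : ℝ, 0 < b → ∃ Cb : ℝ, 0 < Cb ∧ ∀ x ∈ Ω, ∀ y ∈ Ω,
      0 < dist x y →
      dist x y ≤ b⁻¹ * min (Metric.infDist x (frontier Ω)) (Metric.infDist y (frontier Ω)) →
      G x y ≤ Cb * dist x y ^ ((2:ℝ) - N))
    -- (iv): comparison of the Green kernel with the ground state near the boundary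
    (hG4 : ∀ r : ℝ, 0 < r → ∃ Cr : ℝ, 0 < Cr ∧ ∀ x ∈ Ω, ∀ y ∈ Ω,
      r ≤ Metric.infDist y (frontier Ω) → Metric.infDist x (frontier Ω) < r / 2 →
      G x y ≤ Cr * Φ x) :
    ∃ c' : ℝ, 0 < c' ∧ ∀ τ : Measure (EuclideanSpace ℝ (Fin N)), τ Ωᶜ = 0 →
      (∫⁻ x in Ω, ENNReal.ofReal (Φ x) ∂τ) < ⊤ →
      (∫⁻ x in Ω, ENNReal.ofReal (Φ x / Φ₀ x) *
          (∫⁻ y in Ω, ENNReal.ofReal (G x y) ∂τ) ∂volume) ≤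
        ENNReal.ofReal c' * (∫⁻ x in Ω, ENNReal.ofReal (Φ x) ∂τ) := by
  rcases eq_empty_or_nonempty Ω with rfl | hΩne
  · exact ⟨1, one_pos, by simp⟩
  have : Nonempty (Fin N) := ⟨⟨0, by lia⟩⟩
  have hN3 : (3 : ℝ) ≤ N := by exact_mod_cast hN
  have hfr : (frontier Ω).Nonempty := by
    rw [nonempty_iff_ne_empty, Ne, frontier_eq_empty_iff, not_or]
    refine ⟨hΩne.ne_empty, ?_⟩
    rintro rfl
    exact NormedSpace.unbounded_univ ℝ _ hΩb
  have hδpos : ∀ x ∈ Ω, 0 < infDist x (frontier Ω) := fun x hx =>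
    (isClosed_frontier.notMem_iff_infDist_pos hfr).1 fun hxf => by
      rw [hΩo.frontier_eq] at hxf; exact hxf.2 hx
  obtain ⟨D, hD, hΩD⟩ : ∃ D : ℝ, 0 < D ∧ ∀ x ∈ Ω, ∀ y ∈ Ω, dist x y ≤ D := by
    obtain ⟨D, hD⟩ := isBounded_iff.1 hΩb
    exact ⟨max D 1, by positivity, fun x hx y hy => (hD hx hy).trans (le_max_left _ _)⟩
  set γ : ℝ := max 0 (1 - 2 * αs) with hγ
  have hγ0 : 0 ≤ γ := le_max_left _ _
  have hγ1 : γ < 1 := max_lt one_pos (by linarith)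
  have hγs : 1 - 2 * αs ≤ γ := le_max_right _ _
  set q : ℝ := (N : ℝ) - 1 - γ + 2 * α - 2 * αs with hq
  obtain ⟨C, hC, hvol⟩ := hΩ2.exists_volume_thickening_le hΩo hΩb
  obtain ⟨K₁, hK₁, hI₁⟩ := exists_setLIntegral_dist_rpow_neg_le (N := N) (q := (N : ℝ) - 1)
    (by linarith) (by linarith) hD
  obtain ⟨K₂, hK₂, hI₂⟩ := exists_setLIntegral_infDist_rpow_neg_mul_dist_rpow_neg_le
    hfr hC hvol hγ0 hγ1 (q := q) (by linarith) (by linarith) hD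
  obtain ⟨K₃, hK₃, hint⟩ := exists_mul_kernel_le_of_le_infDist_frontier hΩo hΩb (by lia) hΦc hΦpos
    hGpos hGsym hG3 hG4 hβ₁ hD hΩD
  set A : ℝ := c₀ * a + K₃ with hA
  have hA0 : 0 < A := by positivity
  have hpt : ∀ x ∈ Ω, ∀ y ∈ Ω, x ≠ y →
      Φ x / infDist x (frontier Ω) * G x y ≤ A * dist x y ^ (-((N : ℝ) - 1)) * Φ y ∨
      (infDist x (frontier Ω) ≤ dist x y ∧ Φ x / infDist x (frontier Ω) * G x y ≤
        c₀ * (infDist x (frontier Ω) ^ (-γ) * dist x y ^ (-q)) * Φ y) := by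
    intro x hx y hy hxy
    have hδ := hδpos x hx
    have hd : 0 < dist x y := dist_pos.2 hxy
    have hΦy := hΦpos y hy
    rcases lt_or_ge (infDist x (frontier Ω)) β₁ with hxβ | hxβ
    · rcases lt_or_ge (dist x y) (a * infDist x (frontier Ω)) with hxa | hxa
      · left
        refine (div_mul_le_of_dist_lt hδ hd (by linarith) hΦy.le hxa
          (hG1 _ ⟨hδ, hxβ⟩ x hx rfl y hy hd hxa)).trans ?_
        gcongr
        exact le_add_of_nonneg_right hK₃.le
      · right
        have hδd : infDist x (frontier Ω) ≤ dist x y := by nlinarith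
        exact ⟨hδd, div_mul_le_of_le_dist hδ hδd (by linarith) hΦy.le hγs
          (hG2 _ ⟨hδ, hxβ⟩ x hx rfl y hy hxa)⟩
    · left
      refine (hint x hx y hy hxy hxβ).trans ?_
      gcongr
      exact le_add_of_nonneg_left (by positivity)
  have hkernel : ∀ y ∈ Ω,
      ∫⁻ x in Ω, ENNReal.ofReal (cs * (Φ x / infDist x (frontier Ω))) * ENNReal.ofReal (G x y) ≤
        ENNReal.ofReal (cs * (A * K₁ + c₀ * K₂)) * ENNReal.ofReal (Φ y) := by
    intro y hy
    have hΦy := hΦpos y hy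
    set k : EuclideanSpace ℝ (Fin N) → ENNReal := fun x =>
      ENNReal.ofReal (cs * (Φ x / infDist x (frontier Ω))) * ENNReal.ofReal (G x y) with hk
    have hkx : ∀ x ∈ Ω, k x = ENNReal.ofReal (cs * (Φ x / infDist x (frontier Ω) * G x y)) := by
      intro x hx
      have := hδpos x hx
      have := hΦpos x hx
      rw [hk, ← mul_assoc, ENNReal.ofReal_mul (by positivity)]
    set S : Set (EuclideanSpace ℝ (Fin N)) := {x | 0 < dist x y ∧ dist x y ≤ D} with hS
    set T : Set (EuclideanSpace ℝ (Fin N)) := S ∩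
      {x | 0 < infDist x (frontier Ω) ∧ infDist x (frontier Ω) ≤ dist x y} with hT
    set U : Set (EuclideanSpace ℝ (Fin N)) := {x ∈ S | k x ≤
      ENNReal.ofReal (cs * A * Φ y) * ENNReal.ofReal (dist x y ^ (-((N : ℝ) - 1)))} with hU
    set W : Set (EuclideanSpace ℝ (Fin N)) := {x ∈ T | k x ≤
      ENNReal.ofReal (cs * c₀ * Φ y) * (ENNReal.ofReal (infDist x (frontier Ω) ^ (-γ)) *
        ENNReal.ofReal (dist x y ^ (-q)))} with hW
    have hcover : Ω \ {y} ⊆ U ∪ W := by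
      rintro x ⟨hx, hxy⟩
      have hxS : x ∈ S := ⟨dist_pos.2 hxy, hΩD x hx y hy⟩
      have hδ := hδpos x hx
      rcases hpt x hx y hy hxy with h | ⟨hδd, h⟩
      · refine Or.inl ⟨hxS, ?_⟩
        rw [hkx x hx, ← ENNReal.ofReal_mul (by positivity)]
        refine ENNReal.ofReal_le_ofReal ((mul_le_mul_of_nonneg_left h (by linarith)).trans_eq ?_)
        ring
      · refine Or.inr ⟨⟨hxS, hδ, hδd⟩, ?_⟩
        rw [hkx x hx, ← ENNReal.ofReal_mul (by positivity), ← ENNReal.ofReal_mul (by positivity)]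
        refine ENNReal.ofReal_le_ofReal ((mul_le_mul_of_nonneg_left h (by linarith)).trans_eq ?_)
        ring
    calc ∫⁻ x in Ω, k x = ∫⁻ x in Ω \ {y}, k x :=
          setLIntegral_congr (sdiff_null_ae_eq_self (measure_singleton y)).symm
      _ ≤ ∫⁻ x in U ∪ W, k x := lintegral_mono_set hcover
      _ ≤ (∫⁻ x in U, k x) + ∫⁻ x in W, k x := lintegral_union_le _ _ _
      _ ≤ ENNReal.ofReal (cs * A * Φ y) * ENNReal.ofReal K₁ +
            ENNReal.ofReal (cs * c₀ * Φ y) * ENNReal.ofReal K₂ := by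
          gcongr
          · refine (setLIntegral_mono (by fun_prop) fun x hx => hx.2).trans ?_
            rw [lintegral_const_mul' _ _ ENNReal.ofReal_ne_top]
            gcongr
            exact (lintegral_mono_set fun x hx => hx.1).trans (hI₁ y)
          · have hmeas : Measurable fun x : EuclideanSpace ℝ (Fin N) =>
                infDist x (frontier Ω) := measurable_infDist
            refine (setLIntegral_mono (by fun_prop) fun x hx => hx.2).trans ?_
            rw [lintegral_const_mul' _ _ ENNReal.ofReal_ne_top]
            gcongr
            exact (lintegral_mono_set fun x hx => hx.1).trans (hI₂ y)
      _ = ENNReal.ofReal (cs * (A * K₁ + c₀ * K₂)) * ENNReal.ofReal (Φ y) := by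
          rw [← ENNReal.ofReal_mul (by positivity), ← ENNReal.ofReal_mul (by positivity),
            ← ENNReal.ofReal_mul (by positivity),
            ← ENNReal.ofReal_add (by positivity) (by positivity)]
          congr 1; ring
  refine ⟨cs * (A * K₁ + c₀ * K₂), by positivity, fun τ _ hτfin => ?_⟩
  have hΩm := hΩo.measurableSet
  refine (setLIntegral_mono' (g := fun x => ENNReal.ofReal (cs * (Φ x / infDist x (frontier Ω))) *
    ∫⁻ y in Ω, ENNReal.ofReal (G x y) ∂τ) hΩm fun x hx => ?_).trans ?_
  · have hδ := hδpos x hx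
    have hΦx := hΦpos x hx
    gcongr
    have hcs0 : 0 < cs := by linarith
    calc Φ x / Φ₀ x ≤ Φ x / (cs⁻¹ * infDist x (frontier Ω)) := by
          gcongr
          exact (hΦ₀ x hx).1
      _ = cs * (Φ x / infDist x (frontier Ω)) := by field_simp
  · refine lintegral_mul_lintegral_kernel_le ENNReal.ofReal_ne_top ?_ ?_ ?_ ?_ hτfin ?_
    · have := (hΦc.aemeasurable (μ := volume) hΩm).div
        (measurable_infDist (s := frontier Ω)).aemeasurable
      exact (this.const_mul cs).ennreal_ofReal
    · exact hGm.ennreal_ofReal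
    · exact (hΦc.aemeasurable hΩm).ennreal_ofReal
    · exact (ae_restrict_mem hΩm).mono fun y hy => (ENNReal.ofReal_pos.2 (hΦpos y hy)).ne'
    · exact (ae_restrict_mem hΩm).mono hkernel
end

section
/- Let Ω ⊂ ℝ^N (N ≥ 3) be a bounded open set with C² boundary. Let α > 1/2, let Φ : Ω → (0,∞) be continuous with c₁⁻¹ δ(x)^α ≤ Φ(x) ≤ c₁ δ(x)^α for δ(x) < β₁, let Φ₀ satisfy c_*⁻¹ δ ≤ Φ₀ ≤ c_* δ, and let G : {(x,y) ∈ Ω × Ω : x ≠ y} → (0,∞) be Borel, symmetric, and satisfy for all β ∈ (0,β₁), x ∈ Σ_β: (i) Φ(x) G(x,y) ≤ c₀ |x−y|^{2−N} Φ(y) when 0 < |x−y| < aβ, and (ii) Φ(x) G(x,y) ≤ c₀ β^{2α} |x−y|^{2−N−2α} Φ(y) when |x−y| ≥ aβ (some a ≥ 2, c₀ ≥ 1), and (iii) for every r > 0 there is C(r) with G(x,y) ≤ C(r) Φ(x) whenever δ(y) ≥ r and δ(x) < r/2. Then for every positive Borel measure τ on Ω with ∫_Ω Φ dτ < ∞: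 ∫_{Σ_β} (Φ(x)/Φ₀(x)) (∫_Ω G(x,y) dτ(y)) dH^{N−1}(x) → 0 as β → 0⁺. -/
open MeasureTheory Metric Set Filter Topology

section LevelSets

open Module

/-- A ball around a point of an open set that is disjoint from the frontier lies in the set. -/
lemma ball_infDist_frontier_subset {F : Type*} [NormedAddCommGroup F] [NormedSpace ℝ F]
    {Ω : Set F} (hΩ : IsOpen Ω) {x : F} (hx : x ∈ Ω) :
    ball x (infDist x (frontier Ω)) ⊆ Ω := by
  rcases le_or_gt (infDist x (frontier Ω)) 0 with h | h
  · simp [ball_eq_empty.2 h]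
  have hconn : IsPreconnected (ball x (infDist x (frontier Ω))) :=
    (convex_ball _ _).isPreconnected
  by_contra hsub
  obtain ⟨z, hz, hzΩ⟩ := not_subset.1 hsub
  have hcl : z ∈ (closure Ω)ᶜ := by
    intro hzc
    refine disjoint_left.1 disjoint_ball_infDist hz ?_
    rw [hΩ.frontier_eq]
    exact ⟨hzc, hzΩ⟩
  obtain ⟨w, -, hw⟩ := hconn Ω (closure Ω)ᶜ hΩ isClosed_closure.isOpen_compl
    (fun y hy => by
      by_cases hyΩ : y ∈ Ω
      · exact Or.inl hyΩ
      · refine Or.inr fun hyc => disjoint_left.1 disjoint_ball_infDist hy ?_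
        rw [hΩ.frontier_eq]
        exact ⟨hyc, hyΩ⟩)
    ⟨x, mem_ball_self h, hx⟩ ⟨z, hz, hcl⟩
  exact hw.2 (subset_closure hw.1)

/-- Near a boundary point where `Ω` is the sublevel set of a strictly differentiable function,
the differences of points at the same distance from the boundary are almost tangential. -/
lemma exists_radius_abs_fderiv_sub_le {F : Type*} [NormedAddCommGroup F] [NormedSpace ℝ F]
    [ProperSpace F] {Ω U : Set F} {f : F → ℝ} {L : F →L[ℝ] ℝ} {p : F} {c : ℝ}
    (hΩ : IsOpen Ω) (hU : U ∈ 𝓝 p) (hΩU : Ω ∩ U = {x ∈ U | f x < 0})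
    (hf : HasStrictFDerivAt f L p) (hc : 0 < c) :
    ∃ ρ > 0, ∀ β ∈ Ioo 0 ρ,
      ∀ x ∈ Ω, infDist x (frontier Ω) = β → x ∈ ball p ρ →
      ∀ x' ∈ Ω, infDist x' (frontier Ω) = β → x' ∈ ball p ρ →
        |L (x' - x)| ≤ c * ‖x' - x‖ := by
  have hst := hf.isLittleO.def (half_pos hc)
  rw [nhds_prod_eq] at hst
  obtain ⟨R, hR, hRst⟩ : ∃ R > 0, ∀ q ∈ ball p R, ∀ z ∈ ball p R,
      q ∈ U ∧ |f q - f z - L (q - z)| ≤ c / 2 * ‖q - z‖ := by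
    obtain ⟨R₁, hR₁, h₁⟩ := Metric.mem_nhds_iff.1 hU
    obtain ⟨t, ht, h₂⟩ := Filter.eventually_prod_self_iff'.1 hst
    obtain ⟨R₂, hR₂, h₃⟩ := Metric.mem_nhds_iff.1 ht
    refine ⟨min R₁ R₂, lt_min hR₁ hR₂, fun q hq z hz => ⟨h₁ ?_, ?_⟩⟩
    · exact ball_subset_ball (min_le_left _ _) hq
    · exact h₂ q (h₃ (ball_subset_ball (min_le_right _ _) hq))
        z (h₃ (ball_subset_ball (min_le_right _ _) hz))
  refine ⟨R / 2, half_pos hR, ?_⟩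
  have key : ∀ β ∈ Ioo 0 (R / 2),
      ∀ x ∈ Ω, infDist x (frontier Ω) = β → x ∈ ball p (R / 2) →
      ∀ x' ∈ Ω, infDist x' (frontier Ω) = β → x' ∈ ball p (R / 2) →
        -(c * ‖x' - x‖) ≤ L (x' - x) := by
    intro β hβ x hx hxβ hxp x' hx' hxβ' hxp'
    by_contra! hlt
    have hne : (frontier Ω).Nonempty := by
      by_contra hemp
      rw [not_nonempty_iff_eq_empty.1 hemp, infDist_empty] at hxβ
      exact hβ.1.ne hxβ
    obtain ⟨q, hq, hqd⟩ := isClosed_frontier.exists_infDist_eq_dist hne x'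
    have hqn : ‖q - x'‖ = β := by rw [← hxβ', hqd, dist_comm, dist_eq_norm]
    set v := x' - x with hv
    have hB : 0 < -(L v + c / 2 * ‖v‖) := by nlinarith [norm_nonneg v]
    set B := -(L v + c / 2 * ‖v‖) with hBdef
    set A := L (q - x') + c / 2 * β with hA
    obtain ⟨s, hs, hsB⟩ := exists_pos_mul_lt hB (|A| + B)
    have hs1 : s < 1 := by nlinarith [abs_nonneg A, mul_nonneg (abs_nonneg A) hs.le]
    have hsA : s * A < B := by nlinarith [le_abs_self A, mul_pos hB hs]
    set z := x + (1 - s) • (q - x') with hz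
    have hqz : q - z = v + s • (q - x') := by rw [hz, hv]; module
    have hzx : ‖z - x‖ = (1 - s) * β := by
      rw [hz, add_sub_cancel_left, norm_smul, hqn, Real.norm_of_nonneg (by linarith)]
    have hzball : z ∈ ball x (infDist x (frontier Ω)) := by
      rw [mem_ball_iff_norm, hzx, hxβ]
      nlinarith [hβ.1]
    have hzΩ : z ∈ Ω := ball_infDist_frontier_subset hΩ hx hzball
    have hzp : z ∈ ball p R := by
      rw [mem_ball] at *
      linarith [dist_triangle z x p, hβ.2]
    have hqp : q ∈ ball p R := by
      rw [mem_ball, dist_eq_norm] at *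
      have := norm_add_le (q - x') (x' - p)
      rw [sub_add_sub_cancel] at this
      linarith [hβ.2]
    have hfz : f z < 0 := by
      have : z ∈ Ω ∩ U := ⟨hzΩ, (hRst z hzp z hzp).1⟩
      rw [hΩU] at this
      exact this.2
    obtain ⟨hqU, hst⟩ := hRst q hqp z hzp
    have hle : f q - f z ≤ L (q - z) + c / 2 * ‖q - z‖ := by linarith [(abs_le.1 hst).2]
    have hnorm : ‖q - z‖ ≤ ‖v‖ + s * β := by
      rw [hqz]
      refine (norm_add_le _ _).trans ?_
      rw [norm_smul, hqn, Real.norm_of_nonneg hs.le]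
    have hL : L (q - z) = L v + s * L (q - x') := by rw [hqz]; simp
    have hfq : f q < 0 := by nlinarith
    have : q ∈ Ω ∩ U := by rw [hΩU]; exact ⟨hqU, hfq⟩
    rw [hΩ.frontier_eq] at hq
    exact hq.2 this.1
  intro β hβ x hx hxβ hxp x' hx' hxβ' hxp'
  refine abs_le.2 ⟨key β hβ x hx hxβ hxp x' hx' hxβ' hxp', ?_⟩
  have := key β hβ x' hx' hxβ' hxp' x hx hxβ hxp
  rw [← neg_sub x' x, norm_neg, map_neg] at this
  linarith

/-- A set whose chords stay close to the kernel of a nonzero functional `L` has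
codimension-one Hausdorff measure growing at most like that of a hyperplane. -/
lemma exists_hausdorffMeasure_inter_ball_le {F : Type*} [NormedAddCommGroup F] [NormedSpace ℝ F]
    [FiniteDimensional ℝ F] [MeasurableSpace F] [BorelSpace F] {L : F →L[ℝ] ℝ} (hL : L ≠ 0) :
    ∃ c > 0, ∃ C : ENNReal, C ≠ ⊤ ∧ ∀ S : Set F,
      (∀ x ∈ S, ∀ x' ∈ S, |L (x' - x)| ≤ c * ‖x' - x‖) →
      ∀ y : F, ∀ r > 0, μH[(finrank ℝ F : ℝ) - 1] (S ∩ ball y r) ≤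
        C * ENNReal.ofReal r ^ ((finrank ℝ F : ℝ) - 1) := by
  obtain ⟨w, hw⟩ : ∃ w, L w = 1 := by
    obtain ⟨u, hu⟩ : ∃ u, L u ≠ 0 := by
      by_contra! h
      exact hL (ContinuousLinearMap.ext h)
    exact ⟨(L u)⁻¹ • u, by simp [hu]⟩
  have hwn : 0 < ‖w‖ := norm_pos_iff.2 (by rintro rfl; simp at hw)
  set P : F → L.ker := fun x => ⟨x - L x • w, by simp [hw]⟩ with hP
  have hdim : ((finrank ℝ L.ker : ℕ) : ℝ) = (finrank ℝ F : ℝ) - 1 := by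
    have : finrank ℝ L.ker + 1 = finrank ℝ F :=
      Module.Dual.finrank_ker_add_one_of_ne_zero (f := (L : F →ₗ[ℝ] ℝ))
        (by intro h; exact hL (ContinuousLinearMap.coe_injective h))
    rw [← this]; push_cast; ring
  have hd : (0 : ℝ) ≤ (finrank ℝ F : ℝ) - 1 := hdim ▸ Nat.cast_nonneg _
  have hPsub : ∀ x x', ‖P x - P x'‖ = ‖(x - x') - L (x - x') • w‖ := by
    intro x x'
    rw [← Submodule.norm_coe]
    congr 1
    simp only [hP, Submodule.coe_sub, map_sub]
    module
  set K := 1 + ‖L‖ * ‖w‖ with hK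
  have hKpos : 0 < K := by positivity
  have hPlip : ∀ x x', ‖P x - P x'‖ ≤ K * ‖x - x'‖ := by
    intro x x'
    rw [hPsub]
    refine (norm_sub_le _ _).trans ?_
    rw [norm_smul]
    nlinarith [L.le_opNorm (x - x'), norm_nonneg w]
  refine ⟨1 / (2 * ‖w‖), by positivity,
    (2 : NNReal) ^ ((finrank ℝ F : ℝ) - 1) *
      (ENNReal.ofReal K ^ ((finrank ℝ F : ℝ) - 1) *
        μH[(finrank ℝ L.ker : ℝ)] (ball (0 : L.ker) 1)), ?_, ?_⟩
  · refine ENNReal.mul_ne_top ?_ (ENNReal.mul_ne_top ?_ measure_ball_lt_top.ne)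
    · exact ENNReal.rpow_ne_top_of_nonneg hd (by simp)
    · exact ENNReal.rpow_ne_top_of_nonneg hd (by simp)
  intro S hS y r hr
  set T := S ∩ ball y r with hT
  have hanti : AntilipschitzWith 2 (fun x : T => P x) := by
    refine AntilipschitzWith.of_le_mul_dist fun x x' => ?_
    rw [Subtype.dist_eq, dist_eq_norm, dist_eq_norm, hPsub]
    have h1 := hS x'.1 x'.2.1 x.1 x.2.1
    have h2 := norm_sub_norm_le ((x : F) - x') (L ((x : F) - x') • w)
    rw [norm_smul, Real.norm_eq_abs] at h2
    have h3 : |L ((x : F) - x')| * ‖w‖ ≤ ‖(x : F) - x'‖ / 2 := by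
      calc _ ≤ 1 / (2 * ‖w‖) * ‖(x : F) - x'‖ * ‖w‖ := by gcongr
        _ = _ := by field_simp
    push_cast
    linarith
  have himg : (fun x : T => P x) '' univ ⊆ ball (P y) (K * r) := by
    rintro _ ⟨x, -, rfl⟩
    rw [mem_ball, dist_eq_norm]
    have := x.2.2
    rw [mem_ball, dist_eq_norm] at this
    exact (hPlip _ _).trans_lt (by gcongr)
  have hcoe : μH[(finrank ℝ F : ℝ) - 1] T = μH[(finrank ℝ F : ℝ) - 1] (univ : Set T) := by
    rw [← (isometry_subtype_coe (s := T)).hausdorffMeasure_image (Or.inl hd) univ]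
    simp
  calc μH[(finrank ℝ F : ℝ) - 1] T
      ≤ (2 : NNReal) ^ ((finrank ℝ F : ℝ) - 1) *
        μH[(finrank ℝ F : ℝ) - 1] ((fun x : T => P x) '' univ) := by
        rw [hcoe]; exact hanti.le_hausdorffMeasure_image hd univ
    _ ≤ (2 : NNReal) ^ ((finrank ℝ F : ℝ) - 1) *
        μH[(finrank ℝ L.ker : ℝ)] (ball (P y) (K * r)) := by
        rw [hdim]; gcongr
    _ = _ := by
        rw [Measure.addHaar_ball_of_pos _ _ (by positivity), ENNReal.ofReal_pow (by positivity),
          ENNReal.ofReal_mul hKpos.le, ← ENNReal.rpow_natCast, hdim,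
          ENNReal.mul_rpow_of_nonneg _ _ hd]
        ring

/-- The inner parallel surfaces of a bounded open set with `C²` boundary are uniformly
upper Ahlfors regular. -/
lemma HasC2Boundary.exists_hausdorffMeasure_levelSet_inter_ball_le {N : ℕ}
    {Ω : Set (EuclideanSpace ℝ (Fin N))} (hΩ : IsOpen Ω) (hb : Bornology.IsBounded Ω)
    (h2 : HasC2Boundary Ω) :
    ∃ ρ > 0, ∃ C : ENNReal, C ≠ ⊤ ∧ ∀ β ∈ Ioo 0 ρ, ∀ y, ∀ r > 0,
      μH[(N : ℝ) - 1] ({x ∈ Ω | infDist x (frontier Ω) = β} ∩ ball y r) ≤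
        C * ENNReal.ofReal r ^ ((N : ℝ) - 1) := by
  have hloc : ∀ p ∈ frontier Ω, ∃ ρ > 0, ∃ C : ENNReal, C ≠ ⊤ ∧ ∀ β ∈ Ioo 0 ρ, ∀ y, ∀ r > 0,
      μH[(N : ℝ) - 1] ({x ∈ Ω | infDist x (frontier Ω) = β} ∩ ball p ρ ∩ ball y r) ≤
        C * ENNReal.ofReal r ^ ((N : ℝ) - 1) := by
    intro p hp
    obtain ⟨U, f, hU, hpU, hf, hf', hΩU⟩ := h2 p hp
    have hUp := hU.mem_nhds hpU
    have hst := (hf.contDiffAt hUp).hasStrictFDerivAt (by norm_num)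
    obtain ⟨c, hc, C, hC, hCS⟩ := exists_hausdorffMeasure_inter_ball_le (hf' p hpU)
    obtain ⟨ρ, hρ, hρS⟩ := exists_radius_abs_fderiv_sub_le hΩ hUp hΩU hst hc
    refine ⟨ρ, hρ, C, hC, fun β hβ y r hr => ?_⟩
    simpa using hCS ({x ∈ Ω | infDist x (frontier Ω) = β} ∩ ball p ρ)
      (fun x hx x' hx' => hρS β hβ x hx.1.1 hx.1.2 hx.2 x' hx'.1.1 hx'.1.2 hx'.2) y r hr
  choose! ρ hρ C hC hCS using hloc
  have hcomp : IsCompact (frontier Ω) :=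
    Metric.isCompact_of_isClosed_isBounded isClosed_frontier
      (hb.closure.subset frontier_subset_closure)
  obtain ⟨t, htsub, hcov⟩ := hcomp.elim_nhds_subcover (fun p => ball p (ρ p / 2))
    (fun p hp => ball_mem_nhds _ (half_pos (hρ p hp)))
  obtain ⟨ρ₀, hρ₀, hρ₀t⟩ : ∃ ρ₀ > 0, ∀ p ∈ t, ρ₀ ≤ ρ p / 2 := by
    rcases t.eq_empty_or_nonempty with rfl | hne
    · exact ⟨1, one_pos, by simp⟩
    · obtain ⟨p, hp, hmin⟩ := t.exists_min_image (fun p => ρ p / 2) hne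
      exact ⟨ρ p / 2, half_pos (hρ p (htsub p hp)), hmin⟩
  refine ⟨ρ₀, hρ₀, ∑ p ∈ t, C p, ?_, ?_⟩
  · exact ENNReal.sum_ne_top.2 fun p hp => hC p (htsub p hp)
  intro β hβ y r hr
  have hsub : {x ∈ Ω | infDist x (frontier Ω) = β} ∩ ball y r ⊆
      ⋃ p ∈ t, {x ∈ Ω | infDist x (frontier Ω) = β} ∩ ball p (ρ p) ∩ ball y r := by
    rintro x ⟨⟨hx, hxβ⟩, hxr⟩
    have hne : (frontier Ω).Nonempty := by
      by_contra hemp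
      rw [not_nonempty_iff_eq_empty.1 hemp, infDist_empty] at hxβ
      exact hβ.1.ne hxβ
    obtain ⟨q, hq, hqd⟩ := isClosed_frontier.exists_infDist_eq_dist hne x
    obtain ⟨p, hp, hqp⟩ := mem_iUnion₂.1 (hcov hq)
    refine mem_iUnion₂.2 ⟨p, hp, ⟨⟨hx, hxβ⟩, ?_⟩, hxr⟩
    rw [mem_ball] at *
    linarith [dist_triangle x q p, hρ₀t p hp, hβ.2]
  refine (measure_mono hsub).trans ((measure_biUnion_finset_le _ _).trans ?_)
  rw [Finset.sum_mul]
  refine Finset.sum_le_sum fun p hp => hCS p (htsub p hp) β ⟨hβ.1, ?_⟩ y r hr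
  linarith [hρ₀t p hp, hβ.2, hρ p (htsub p hp)]

end LevelSets

section RieszPotentials

open ENNReal

variable {X : Type*} [MetricSpace X] [MeasurableSpace X] [OpensMeasurableSpace X]
  {μ : Measure X} {C : ℝ≥0∞} {n s : ℝ} {y : X}

/-- The mass of a Riesz kernel on a dyadic annulus, for a measure of growth order `n`. -/
lemma setLIntegral_edist_rpow_annulus_le (hn : 0 ≤ n) (hs : 0 ≤ s)
    (hμ : ∀ r > 0, μ (ball y r) ≤ C * ENNReal.ofReal r ^ n) {ρ : ℝ} (hρ : 0 < ρ) :
    ∫⁻ x in {x | ρ ≤ dist x y ∧ dist x y ≤ 2 * ρ}, edist x y ^ (-s) ∂μ ≤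
      C * 3 ^ n * ENNReal.ofReal (ρ ^ (n - s)) := by
  have hmeas : MeasurableSet {x | ρ ≤ dist x y ∧ dist x y ≤ 2 * ρ} :=
    ((isClosed_le continuous_const (continuous_id.dist continuous_const)).inter
      (isClosed_le (continuous_id.dist continuous_const) continuous_const)).measurableSet
  have hsub : {x | ρ ≤ dist x y ∧ dist x y ≤ 2 * ρ} ⊆ ball y (3 * ρ) := by
    intro x hx
    rw [mem_ball]
    linarith [hx.2]
  calc ∫⁻ x in {x | ρ ≤ dist x y ∧ dist x y ≤ 2 * ρ}, edist x y ^ (-s) ∂μ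
      ≤ ∫⁻ _ in {x | ρ ≤ dist x y ∧ dist x y ≤ 2 * ρ}, ENNReal.ofReal ρ ^ (-s) ∂μ := by
        refine setLIntegral_mono' hmeas fun x hx => ?_
        rw [edist_dist]
        rw [ENNReal.rpow_neg, ENNReal.rpow_neg, ENNReal.inv_le_inv]
        exact ENNReal.rpow_le_rpow (ENNReal.ofReal_le_ofReal hx.1) hs
    _ ≤ ENNReal.ofReal ρ ^ (-s) * (C * ENNReal.ofReal (3 * ρ) ^ n) := by
        rw [setLIntegral_const]
        gcongr
        exact (measure_mono hsub).trans (hμ _ (by positivity))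
    _ = C * 3 ^ n * ENNReal.ofReal (ρ ^ (n - s)) := by
        rw [ENNReal.ofReal_mul (by norm_num), ENNReal.mul_rpow_of_nonneg _ _ hn,
          ← ENNReal.ofReal_rpow_of_pos hρ, sub_eq_add_neg,
          ENNReal.rpow_add _ _ (by simpa using hρ) ENNReal.ofReal_ne_top]
        simp only [ENNReal.ofReal_ofNat]
        ring

/-- The constant in the dyadic estimates of Riesz kernels: growth order `n`, growth constant `C`
and homogeneity `t` of the integrated kernel. -/
noncomputable def dyadicConst (C : ℝ≥0∞) (n t : ℝ) : ℝ≥0∞ :=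
  C * 3 ^ n * (1 - ENNReal.ofReal (2 ^ (-t)))⁻¹

lemma dyadicConst_ne_top (hC : C ≠ ⊤) (hn : 0 ≤ n) {t : ℝ} (ht : 0 < t) :
    dyadicConst C n t ≠ ⊤ := by
  refine ENNReal.mul_ne_top (ENNReal.mul_ne_top hC
    (ENNReal.rpow_ne_top_of_nonneg hn (by simp))) ?_
  rw [ENNReal.inv_ne_top]
  refine (tsub_pos_of_lt ?_).ne'
  rw [ENNReal.ofReal_lt_one]
  exact Real.rpow_lt_one_of_one_lt_of_neg (by norm_num) (by linarith)

/-- A Riesz kernel that is locally integrable for a measure of growth order `n`. -/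
lemma setLIntegral_edist_rpow_ball_le (hn : 0 ≤ n) (hs : 0 ≤ s) (hns : s < n)
    (hμ : ∀ r > 0, μ (ball y r) ≤ C * ENNReal.ofReal r ^ n) (hy : μ {y} = 0)
    {R : ℝ} (hR : 0 < R) :
    ∫⁻ x in ball y R, edist x y ^ (-s) ∂μ ≤
      dyadicConst C n (n - s) * ENNReal.ofReal (R ^ (n - s)) := by
  set A : ℕ → Set X := fun k =>
    {x | R * (1 / 2) ^ (k + 1) ≤ dist x y ∧ dist x y ≤ 2 * (R * (1 / 2) ^ (k + 1))} with hA
  have hcov : ball y R ⊆ {y} ∪ ⋃ k, A k := by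
    intro x hx
    rcases eq_or_ne x y with rfl | hxy
    · exact Or.inl rfl
    refine Or.inr (mem_iUnion.2 ?_)
    have hd : 0 < dist x y / R := div_pos (dist_pos.2 hxy) hR
    obtain ⟨k, hk₁, hk₂⟩ := exists_nat_pow_near_of_lt_one hd
      ((div_le_one hR).2 (mem_ball.1 hx).le) (y := (1 / 2 : ℝ)) (by norm_num) (by norm_num)
    rw [lt_div_iff₀ hR] at hk₁
    rw [div_le_iff₀ hR] at hk₂
    refine ⟨k, ?_, ?_⟩
    · linarith
    · rw [pow_succ]; linarith
  calc ∫⁻ x in ball y R, edist x y ^ (-s) ∂μ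
      ≤ ∫⁻ x in {y} ∪ ⋃ k, A k, edist x y ^ (-s) ∂μ := lintegral_mono_set hcov
    _ ≤ ∫⁻ x in {y}, edist x y ^ (-s) ∂μ + ∫⁻ x in ⋃ k, A k, edist x y ^ (-s) ∂μ :=
        lintegral_union_le _ _ _
    _ ≤ 0 + ∑' k, ∫⁻ x in A k, edist x y ^ (-s) ∂μ := by
        gcongr
        · rw [setLIntegral_measure_zero _ _ hy]
        · exact lintegral_iUnion_le _ _
    _ ≤ ∑' k : ℕ, C * 3 ^ n * ENNReal.ofReal (R ^ (n - s)) *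
          ENNReal.ofReal (2 ^ (-(n - s))) ^ k := by
        rw [zero_add]
        refine ENNReal.tsum_le_tsum fun k => ?_
        refine (setLIntegral_edist_rpow_annulus_le hn hs hμ (by positivity)).trans ?_
        rw [mul_assoc _ (ENNReal.ofReal _), ← ENNReal.ofReal_pow (by positivity),
          ← ENNReal.ofReal_mul (by positivity)]
        gcongr
        rw [Real.mul_rpow hR.le (by positivity)]
        gcongr
        rw [← Real.rpow_natCast, ← Real.rpow_natCast, ← Real.rpow_mul (by norm_num),
          ← Real.rpow_mul (by norm_num), one_div, Real.inv_rpow (by norm_num),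
          ← Real.rpow_neg (by norm_num)]
        refine Real.rpow_le_rpow_of_exponent_le (by norm_num) ?_
        push_cast
        nlinarith
    _ = dyadicConst C n (n - s) * ENNReal.ofReal (R ^ (n - s)) := by
        rw [ENNReal.tsum_mul_left, ENNReal.tsum_geometric, dyadicConst]
        ring

/-- A Riesz kernel that is integrable at infinity for a measure of growth order `n`. -/
lemma setLIntegral_edist_rpow_compl_ball_le (hn : 0 ≤ n) (hns : n < s)
    (hμ : ∀ r > 0, μ (ball y r) ≤ C * ENNReal.ofReal r ^ n) {R : ℝ} (hR : 0 < R) :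
    ∫⁻ x in (ball y R)ᶜ, edist x y ^ (-s) ∂μ ≤
      dyadicConst C n (s - n) * ENNReal.ofReal (R ^ (n - s)) := by
  set A : ℕ → Set X := fun k =>
    {x | R * 2 ^ k ≤ dist x y ∧ dist x y ≤ 2 * (R * 2 ^ k)} with hA
  have hcov : (ball y R)ᶜ ⊆ ⋃ k, A k := by
    intro x hx
    rw [mem_compl_iff, mem_ball, not_lt] at hx
    refine mem_iUnion.2 ?_
    obtain ⟨k, hk₁, hk₂⟩ := exists_nat_pow_near ((one_le_div hR).2 hx)
      (y := (2 : ℝ)) (by norm_num)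
    rw [le_div_iff₀ hR] at hk₁
    rw [div_lt_iff₀ hR, pow_succ] at hk₂
    exact ⟨k, by linarith, by linarith⟩
  calc ∫⁻ x in (ball y R)ᶜ, edist x y ^ (-s) ∂μ
      ≤ ∫⁻ x in ⋃ k, A k, edist x y ^ (-s) ∂μ := lintegral_mono_set hcov
    _ ≤ ∑' k, ∫⁻ x in A k, edist x y ^ (-s) ∂μ := lintegral_iUnion_le _ _
    _ ≤ ∑' k : ℕ, C * 3 ^ n * ENNReal.ofReal (R ^ (n - s)) *
          ENNReal.ofReal (2 ^ (-(s - n))) ^ k := by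
        refine ENNReal.tsum_le_tsum fun k => ?_
        refine (setLIntegral_edist_rpow_annulus_le hn (by linarith) hμ (by positivity)).trans ?_
        rw [mul_assoc _ (ENNReal.ofReal _), ← ENNReal.ofReal_pow (by positivity),
          ← ENNReal.ofReal_mul (by positivity)]
        gcongr
        rw [Real.mul_rpow hR.le (by positivity)]
        gcongr
        rw [← Real.rpow_natCast, ← Real.rpow_natCast, ← Real.rpow_mul (by norm_num),
          ← Real.rpow_mul (by norm_num)]
        refine Real.rpow_le_rpow_of_exponent_le (by norm_num) ?_
        linarith
    _ = dyadicConst C n (s - n) * ENNReal.ofReal (R ^ (n - s)) := by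
        rw [ENNReal.tsum_mul_left, ENNReal.tsum_geometric, dyadicConst]
        ring

end RieszPotentials

section BoundaryKernel

open ENNReal

/-- The majorant of the Green kernel seen from the surface at distance `β` from the boundary:
`|x - y| ^ (-s)` for `|x - y| < R` and `β ^ (2α) |x - y| ^ (-(s + 2α))` otherwise. -/
noncomputable def boundaryKernel {X : Type*} [PseudoMetricSpace X] (s α R β : ℝ) (x y : X) :
    ℝ≥0∞ :=
  if dist x y < R then edist x y ^ (-s)
  else ENNReal.ofReal (β ^ (2 * α)) * edist x y ^ (-(s + 2 * α))

/-- Tonelli bound for a kernel restricted to `S` in one variable, perturbed by a constant. -/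
lemma lintegral_lintegral_indicator_add_const_le {X : Type*} [MeasurableSpace X]
    {μ ν : Measure X} [SFinite μ] [SFinite ν]
    {K : X → X → ℝ≥0∞} (hK : Measurable (Function.uncurry K)) {S : Set X}
    (hS : MeasurableSet S) {κ e : ℝ≥0∞} (hκ : ∀ y, ∫⁻ x, K x y ∂μ ≤ κ) :
    ∫⁻ x, ∫⁻ y, (S.indicator (K x) y + e) ∂ν ∂μ ≤ κ * ν S + e * μ univ * ν univ := by
  have hind : Measurable (Function.uncurry fun x y => S.indicator (K x) y + e) := by
    have : (Function.uncurry fun x y => S.indicator (K x) y + e) =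
        fun p => (Prod.snd ⁻¹' S).indicator (Function.uncurry K) p + e := by
      ext ⟨x, y⟩
      by_cases hy : y ∈ S <;> simp [hy]
    rw [this]
    exact (hK.indicator (measurable_snd hS)).add_const _
  rw [lintegral_lintegral_swap hind.aemeasurable]
  calc ∫⁻ y, ∫⁻ x, (S.indicator (K x) y + e) ∂μ ∂ν
      ≤ ∫⁻ y, (S.indicator (fun _ => κ) y + e * μ univ) ∂ν := by
        refine lintegral_mono fun y => ?_
        rw [lintegral_add_right _ measurable_const, lintegral_const]
        gcongr
        by_cases hy : y ∈ S
        · simpa [hy] using hκ y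
        · simp [hy]
    _ = κ * ν S + e * μ univ * ν univ := by
        rw [lintegral_add_right _ measurable_const, lintegral_indicator_const hS,
          lintegral_const]

variable {X : Type*} [MetricSpace X] [MeasurableSpace X] [OpensMeasurableSpace X]

lemma measurable_boundaryKernel [SecondCountableTopology X] (s α R β : ℝ) :
    Measurable (Function.uncurry (boundaryKernel (X := X) s α R β)) := by
  have hd : Measurable fun p : X × X => dist p.1 p.2 := measurable_fst.dist measurable_snd
  have he : Measurable fun p : X × X => edist p.1 p.2 := measurable_fst.edist measurable_snd
  exact Measurable.ite (measurableSet_lt hd measurable_const) (he.pow_const _)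
    ((he.pow_const _).const_mul _)

lemma lintegral_boundaryKernel_le {μ : Measure X} {C : ℝ≥0∞} {s α a β : ℝ} {y : X}
    (hs : 0 ≤ s) (hα : 1 / 2 < α) (ha : 0 < a) (hβ : 0 < β)
    (hμ : ∀ r > 0, μ (ball y r) ≤ C * ENNReal.ofReal r ^ (s + 1)) (hy : μ {y} = 0) :
    ∫⁻ x, boundaryKernel s α (a * β) β x y ∂μ ≤
      (dyadicConst C (s + 1) 1 * ENNReal.ofReal a +
        dyadicConst C (s + 1) (2 * α - 1) * ENNReal.ofReal (a ^ (1 - 2 * α))) *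
        ENNReal.ofReal β := by
  have haβ : 0 < a * β := mul_pos ha hβ
  rw [← lintegral_add_compl _ (measurableSet_ball (x := y) (ε := a * β)), add_mul]
  refine add_le_add ?_ ?_
  · calc ∫⁻ x in ball y (a * β), boundaryKernel s α (a * β) β x y ∂μ
        = ∫⁻ x in ball y (a * β), edist x y ^ (-s) ∂μ :=
          setLIntegral_congr_fun measurableSet_ball fun x hx => if_pos (mem_ball.1 hx)
      _ ≤ dyadicConst C (s + 1) (s + 1 - s) * ENNReal.ofReal ((a * β) ^ (s + 1 - s)) :=
          setLIntegral_edist_rpow_ball_le (by linarith) hs (by linarith) hμ hy haβ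
      _ = _ := by
          rw [add_sub_cancel_left, Real.rpow_one, ENNReal.ofReal_mul ha.le, mul_assoc]
  · calc ∫⁻ x in (ball y (a * β))ᶜ, boundaryKernel s α (a * β) β x y ∂μ
        = ∫⁻ x in (ball y (a * β))ᶜ,
            ENNReal.ofReal (β ^ (2 * α)) * edist x y ^ (-(s + 2 * α)) ∂μ :=
          setLIntegral_congr_fun measurableSet_ball.compl fun x hx =>
            if_neg (by simpa using hx)
      _ = ENNReal.ofReal (β ^ (2 * α)) *
            ∫⁻ x in (ball y (a * β))ᶜ, edist x y ^ (-(s + 2 * α)) ∂μ :=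
          lintegral_const_mul' _ _ ENNReal.ofReal_ne_top
      _ ≤ ENNReal.ofReal (β ^ (2 * α)) * (dyadicConst C (s + 1) (s + 2 * α - (s + 1)) *
            ENNReal.ofReal ((a * β) ^ (s + 1 - (s + 2 * α)))) := by
          gcongr
          exact setLIntegral_edist_rpow_compl_ball_le (by linarith) (by linarith) hμ haβ
      _ = _ := by
          have h₁ : s + 2 * α - (s + 1) = 2 * α - 1 := by ring
          have h₂ : s + 1 - (s + 2 * α) = 1 - 2 * α := by ring
          have h₃ : β ^ (2 * α) * β ^ (1 - 2 * α) = β := by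
            rw [← Real.rpow_add hβ]; simp
          rw [h₁, h₂, Real.mul_rpow ha.le hβ.le, ENNReal.ofReal_mul (by positivity)]
          calc _ = dyadicConst C (s + 1) (2 * α - 1) * ENNReal.ofReal (a ^ (1 - 2 * α)) *
                (ENNReal.ofReal (β ^ (2 * α)) * ENNReal.ofReal (β ^ (1 - 2 * α))) := by ring
            _ = _ := by rw [← ENNReal.ofReal_mul (by positivity), h₃]

end BoundaryKernel

section PotentialEstimates

open ENNReal

/-- A continuous positive function on a bounded open set is bounded below away from the
boundary. -/
lemma exists_pos_le_of_le_infDist_frontier {F : Type*} [PseudoMetricSpace F] [ProperSpace F]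
    {Ω : Set F} (hb : Bornology.IsBounded Ω) {Φ : F → ℝ} (hΩ : IsOpen Ω)
    (hΦc : ContinuousOn Φ Ω) (hΦpos : ∀ x ∈ Ω, 0 < Φ x) {r : ℝ} (hr : 0 < r) :
    ∃ m > 0, ∀ y ∈ Ω, r ≤ infDist y (frontier Ω) → m ≤ Φ y := by
  set S := closure Ω ∩ {y | r ≤ infDist y (frontier Ω)} with hS
  have hSc : IsCompact S := (Metric.isCompact_of_isClosed_isBounded isClosed_closure
    hb.closure).inter_right (isClosed_le continuous_const (continuous_infDist_pt _))
  have hSΩ : S ⊆ Ω := by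
    rintro y ⟨hyc, hyr⟩
    by_contra hyΩ
    have hyf : y ∈ frontier Ω := by rw [hΩ.frontier_eq]; exact ⟨hyc, hyΩ⟩
    have : infDist y (frontier Ω) = 0 := infDist_zero_of_mem hyf
    rw [mem_ofPred_eq, this] at hyr
    linarith
  rcases S.eq_empty_or_nonempty with hemp | hne
  · exact ⟨1, one_pos, fun y hy hyr => (hemp.subset ⟨subset_closure hy, hyr⟩).elim⟩
  · obtain ⟨z, hz, hmin⟩ := hSc.exists_isMinOn hne (hΦc.mono hSΩ)
    exact ⟨Φ z, hΦpos z (hSΩ hz), fun y hy hyr => hmin ⟨subset_closure hy, hyr⟩⟩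

/-- For a finite measure, the inner boundary layers of an open set have small measure. -/
lemma tendsto_measure_boundaryLayer {F : Type*} [PseudoMetricSpace F] [MeasurableSpace F]
    [OpensMeasurableSpace F] (ν : Measure F) [IsFiniteMeasure ν] {Ω : Set F} (hΩ : IsOpen Ω)
    (hne : (frontier Ω).Nonempty) :
    Tendsto (fun k : ℕ => ν {y ∈ Ω | infDist y (frontier Ω) < 1 / ((k : ℝ) + 1)})
      atTop (𝓝 0) := by
  have hempty : ⋂ k : ℕ, {y ∈ Ω | infDist y (frontier Ω) < 1 / ((k : ℝ) + 1)} = ∅ := by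
    refine eq_empty_of_forall_notMem fun y hy => ?_
    rw [mem_iInter] at hy
    have hpos : 0 < infDist y (frontier Ω) := by
      refine (isClosed_frontier.notMem_iff_infDist_pos hne).1 fun hyf => ?_
      rw [hΩ.frontier_eq] at hyf
      exact hyf.2 (hy 0).1
    obtain ⟨k, hk⟩ := exists_nat_one_div_lt hpos
    exact (hy k).2.not_gt hk
  rw [← measure_empty (μ := ν), ← hempty]
  refine tendsto_measure_iInter_atTop (fun k => ?_) (fun i j hij y hy => ⟨hy.1, ?_⟩)
    ⟨0, measure_ne_top _ _⟩
  · exact (hΩ.measurableSet.inter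
      (isOpen_lt (continuous_infDist_pt _) continuous_const).measurableSet).nullMeasurableSet
  · exact hy.2.trans_le (one_div_le_one_div_of_le (by positivity) (by gcongr))

/-- The two-regime Green kernel bound, in terms of `boundaryKernel`. -/
lemma ofReal_le_boundaryKernel {X : Type*} [MetricSpace X] {s α R β c g φ : ℝ} {x y : X}
    (hs : 0 < s) (hc : 0 < c) (hφ : 0 < φ) (hβ : 0 < β) (hR : 0 < R)
    (hnear : 0 < dist x y → dist x y < R → g ≤ c * dist x y ^ (-s) * φ)
    (hfar : R ≤ dist x y → g ≤ c * β ^ (2 * α) * dist x y ^ (-(s + 2 * α)) * φ) :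
    ENNReal.ofReal g ≤
      ENNReal.ofReal c * boundaryKernel s α R β x y * ENNReal.ofReal φ := by
  rcases eq_or_ne x y with rfl | hxy
  · have : boundaryKernel s α R β x x = ⊤ := by
      simp [boundaryKernel, hR, hs]
    rw [this, ENNReal.mul_top (by simpa using hc), ENNReal.top_mul (by simpa using hφ)]
    exact le_top
  have hd := dist_pos.2 hxy
  rcases lt_or_ge (dist x y) R with h | h
  · refine (ENNReal.ofReal_le_ofReal (hnear hd h)).trans_eq ?_
    rw [boundaryKernel, if_pos h, edist_dist, ENNReal.ofReal_rpow_of_pos hd,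
      ENNReal.ofReal_mul (by positivity), ENNReal.ofReal_mul hc.le]
  · refine (ENNReal.ofReal_le_ofReal (hfar h)).trans_eq ?_
    rw [boundaryKernel, if_neg h.not_gt, edist_dist, ENNReal.ofReal_rpow_of_pos hd,
      ENNReal.ofReal_mul (by positivity), ENNReal.ofReal_mul (by positivity),
      ENNReal.ofReal_mul hc.le, mul_assoc (ENNReal.ofReal c)]

end PotentialEstimates

theorem stmt5 {N : ℕ} (hN : 3 ≤ N) (Ω : Set (EuclideanSpace ℝ (Fin N)))
    (hΩo : IsOpen Ω) (hΩb : Bornology.IsBounded Ω) (hΩ2 : HasC2Boundary Ω)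
    (α : ℝ) (hα : 1/2 < α)
    (Φ Φ₀ : EuclideanSpace ℝ (Fin N) → ℝ)
    (G : EuclideanSpace ℝ (Fin N) → EuclideanSpace ℝ (Fin N) → ℝ)
    (hΦc : ContinuousOn Φ Ω) (hΦpos : ∀ x ∈ Ω, 0 < Φ x)
    (c₁ β₁ : ℝ) (hc₁ : 1 ≤ c₁) (hβ₁ : 0 < β₁)
    -- `Φ ∼ δ^α` near the boundary
    (hΦ : ∀ x ∈ Ω, Metric.infDist x (frontier Ω) < β₁ →
      c₁⁻¹ * Metric.infDist x (frontier Ω) ^ α ≤ Φ x ∧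
      Φ x ≤ c₁ * Metric.infDist x (frontier Ω) ^ α)
    (cs : ℝ) (hcs : 1 ≤ cs)
    (hΦ₀ : ∀ x ∈ Ω, cs⁻¹ * Metric.infDist x (frontier Ω) ≤ Φ₀ x ∧
      Φ₀ x ≤ cs * Metric.infDist x (frontier Ω))
    (hΦ₀pos : ∀ x ∈ Ω, 0 < Φ₀ x)
    (hGm : Measurable (Function.uncurry G))
    (hGpos : ∀ x ∈ Ω, ∀ y ∈ Ω, x ≠ y → 0 < G x y)
    (hGsym : ∀ x ∈ Ω, ∀ y ∈ Ω, G x y = G y x)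
    (a c₀ : ℝ) (ha : 2 ≤ a) (hc₀ : 1 ≤ c₀)
    -- (i): upper boundary Green estimate near the diagonal
    (hG1 : ∀ β ∈ Set.Ioo (0:ℝ) β₁, ∀ x ∈ Ω, Metric.infDist x (frontier Ω) = β →
      ∀ y ∈ Ω, 0 < dist x y → dist x y < a * β →
        Φ x * G x y ≤ c₀ * dist x y ^ ((2:ℝ) - N) * Φ y)
    -- (ii): upper boundary Green estimate away from the diagonal
    (hG2 : ∀ β ∈ Set.Ioo (0:ℝ) β₁, ∀ x ∈ Ω, Metric.infDist x (frontier Ω) = β →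
      ∀ y ∈ Ω, a * β ≤ dist x y →
        Φ x * G x y ≤ c₀ * β ^ (2 * α) * dist x y ^ ((2:ℝ) - N - 2 * α) * Φ y)
    -- (iii): comparison of the Green kernel with the ground state near the boundary
    (hG3 : ∀ r : ℝ, 0 < r → ∃ Cr : ℝ, 0 < Cr ∧ ∀ x ∈ Ω, ∀ y ∈ Ω,
      r ≤ Metric.infDist y (frontier Ω) → Metric.infDist x (frontier Ω) < r / 2 →
      G x y ≤ Cr * Φ x)
    (τ : Measure (EuclideanSpace ℝ (Fin N))) (hτ : τ Ωᶜ = 0)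
    (hτΦ : (∫⁻ x in Ω, ENNReal.ofReal (Φ x) ∂τ) < ⊤) :
    Tendsto (fun β : ℝ =>
        ∫⁻ x in {x ∈ Ω | Metric.infDist x (frontier Ω) = β},
          ENNReal.ofReal (Φ x / Φ₀ x) *
            (∫⁻ y in Ω, ENNReal.ofReal (G x y) ∂τ) ∂(μH[(N:ℝ) - 1]))
      (𝓝[>] (0:ℝ)) (𝓝 0) := by
  rcases (frontier Ω).eq_empty_or_nonempty with hfr | hfr
  · refine tendsto_const_nhds.congr' ?_
    filter_upwards [self_mem_nhdsWithin] with β (hβ : 0 < β)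
    have : {x ∈ Ω | infDist x (frontier Ω) = β} = ∅ := by
      simp [hfr, infDist_empty, hβ.ne]
    rw [this]
    simp
  have hN' : (3 : ℝ) ≤ N := by exact_mod_cast hN
  have hc₀' : 0 < c₀ := by linarith
  have hc₁' : 0 < c₁ := by linarith
  have hcs' : 0 < cs := by linarith
  have ha' : 0 < a := by linarith
  obtain ⟨ρ, hρ, C, hC, hgrowth⟩ :=
    hΩ2.exists_hausdorffMeasure_levelSet_inter_ball_le hΩo hΩb
  obtain ⟨R₀, hR₀, hΩR₀⟩ : ∃ R₀ > 0, Ω ⊆ ball 0 R₀ := by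
    obtain ⟨R₀, hR₀⟩ := hΩb.subset_ball 0
    exact ⟨max R₀ 1, by positivity, hR₀.trans (ball_subset_ball (le_max_left _ _))⟩
  have hΦae : AEMeasurable (fun y => ENNReal.ofReal (Φ y)) (τ.restrict Ω) :=
    (hΦc.aemeasurable hΩo.measurableSet).ennreal_ofReal
  set ν := (τ.restrict Ω).withDensity fun y => ENNReal.ofReal (Φ y) with hν
  have : IsFiniteMeasure ν := isFiniteMeasure_withDensity hτΦ.ne
  set M := C * ENNReal.ofReal R₀ ^ ((N : ℝ) - 1) with hM
  have hMtop : M ≠ ⊤ :=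
    ENNReal.mul_ne_top hC (ENNReal.rpow_ne_top_of_nonneg (by linarith) ENNReal.ofReal_ne_top)
  set D := dyadicConst C ((N : ℝ) - 2 + 1) 1 * ENNReal.ofReal a +
    dyadicConst C ((N : ℝ) - 2 + 1) (2 * α - 1) * ENNReal.ofReal (a ^ (1 - 2 * α)) with hD
  have hDtop : D ≠ ⊤ := by
    refine ENNReal.add_ne_top.2 ⟨ENNReal.mul_ne_top ?_ ENNReal.ofReal_ne_top,
      ENNReal.mul_ne_top ?_ ENNReal.ofReal_ne_top⟩
    · exact dyadicConst_ne_top hC (by linarith) one_pos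
    · exact dyadicConst_ne_top hC (by linarith) (by linarith)
  -- the potential is split into the contributions of a boundary layer and of its complement
  have main : ∀ r > 0, ∃ B : ENNReal, B ≠ ⊤ ∧ ∀ β, 0 < β → β < ρ → β < β₁ → β < r / 2 →
      ∫⁻ x in {x ∈ Ω | infDist x (frontier Ω) = β}, ENNReal.ofReal (Φ x / Φ₀ x) *
        (∫⁻ y in Ω, ENNReal.ofReal (G x y) ∂τ) ∂(μH[(N : ℝ) - 1]) ≤
      ENNReal.ofReal cs * (ENNReal.ofReal c₀ * D) *
        ν {y ∈ Ω | infDist y (frontier Ω) < r} + B * ENNReal.ofReal (β ^ (2 * α - 1)) := by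
    intro r hr
    obtain ⟨m, hm, hmΦ⟩ := exists_pos_le_of_le_infDist_frontier hΩb hΩo hΦc hΦpos hr
    obtain ⟨Cr, hCr, hGCr⟩ := hG3 r hr
    set E := Cr * c₁ ^ 2 / m with hE
    have hEpos : 0 < E := by positivity
    refine ⟨ENNReal.ofReal cs * (ENNReal.ofReal E * M * ν univ), by finiteness, ?_⟩
    intro β hβ hβρ hββ₁ hβr
    set Sβ := {x ∈ Ω | infDist x (frontier Ω) = β} with hSβ
    have hSβm : MeasurableSet Sβ := hΩo.measurableSet.inter
      (isClosed_eq (continuous_infDist_pt _) continuous_const).measurableSet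
    set μ := (μH[(N : ℝ) - 1] : Measure (EuclideanSpace ℝ (Fin N))).restrict Sβ with hμ
    have hμball : ∀ y, ∀ t > 0, μ (ball y t) ≤ C * ENNReal.ofReal t ^ ((N : ℝ) - 1) := by
      intro y t ht
      rw [hμ, Measure.restrict_apply measurableSet_ball, inter_comm]
      exact hgrowth β ⟨hβ, hβρ⟩ y t ht
    have hμuniv : μ univ ≤ M := by
      have : Sβ = Sβ ∩ ball 0 R₀ := (inter_eq_left.2 fun x hx => hΩR₀ hx.1).symm
      rw [hμ, Measure.restrict_apply_univ, this]
      exact hgrowth β ⟨hβ, hβρ⟩ 0 R₀ hR₀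
    have : IsFiniteMeasure μ := ⟨hμuniv.trans_lt hMtop.lt_top⟩
    have hμsing : ∀ y, μ {y} = 0 := by
      intro y
      have := Measure.nullSingletonClass_hausdorff (EuclideanSpace ℝ (Fin N))
        (d := (N : ℝ) - 1) (by linarith)
      exact nonpos_iff_eq_zero.1 ((Measure.restrict_apply_le _ _).trans_eq (measure_singleton y))
    set L := {y ∈ Ω | infDist y (frontier Ω) < r} with hL
    have hLm : MeasurableSet L := hΩo.measurableSet.inter
      (isOpen_lt (continuous_infDist_pt _) continuous_const).measurableSet
    set K : EuclideanSpace ℝ (Fin N) → EuclideanSpace ℝ (Fin N) → ENNReal :=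
      fun x y => ENNReal.ofReal c₀ * boundaryKernel ((N : ℝ) - 2) α (a * β) β x y with hK
    have hKm : Measurable (Function.uncurry K) :=
      (measurable_boundaryKernel _ _ _ _).const_mul _
    set e := ENNReal.ofReal (E * β ^ (2 * α)) with he
    have hpoint : ∀ x ∈ Sβ, ∀ y ∈ Ω, ENNReal.ofReal (Φ x * G x y) ≤
        ENNReal.ofReal (Φ y) * (L.indicator (K x) y + e) := by
      rintro x ⟨hx, hxβ⟩ y hy
      rw [mul_comm (ENNReal.ofReal (Φ y))]
      rcases lt_or_ge (infDist y (frontier Ω)) r with hyr | hyr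
      · rw [indicator_of_mem (show y ∈ L from ⟨hy, hyr⟩)]
        refine (ofReal_le_boundaryKernel (s := (N : ℝ) - 2) (α := α) (R := a * β) (β := β)
          (by linarith) hc₀' (hΦpos y hy) hβ (by positivity) (fun h₁ h₂ => ?_)
          (fun h => ?_)).trans (by gcongr; exact le_self_add)
        · rw [neg_sub]
          exact hG1 β ⟨hβ, hββ₁⟩ x hx hxβ y hy h₁ h₂
        · have : -((N : ℝ) - 2 + 2 * α) = 2 - N - 2 * α := by ring
          rw [this]
          exact hG2 β ⟨hβ, hββ₁⟩ x hx hxβ y hy h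
      · have hG := hGCr x hx y hy hyr (hxβ ▸ hβr)
        have hΦx : Φ x ≤ c₁ * β ^ α := hxβ ▸ (hΦ x hx (hxβ ▸ hββ₁)).2
        have hΦx₀ := hΦpos x hx
        have hreal : Φ x * G x y ≤ E * β ^ (2 * α) * Φ y :=
          calc Φ x * G x y ≤ Φ x * (Cr * Φ x) := by gcongr
            _ = Cr * Φ x ^ 2 := by ring
            _ ≤ Cr * (c₁ * β ^ α) ^ 2 := by gcongr
            _ = E * β ^ (2 * α) * m := by
              rw [mul_pow, ← Real.rpow_mul_natCast hβ.le, hE]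
              push_cast
              rw [mul_comm α 2]
              field_simp
            _ ≤ E * β ^ (2 * α) * Φ y := by gcongr; exact hmΦ y hy hyr
        refine (ENNReal.ofReal_le_ofReal hreal).trans ?_
        rw [ENNReal.ofReal_mul (by positivity)]
        gcongr
        exact le_add_self
    have hinner : ∀ x ∈ Sβ, ENNReal.ofReal (Φ x / Φ₀ x) *
        (∫⁻ y in Ω, ENNReal.ofReal (G x y) ∂τ) ≤
        ENNReal.ofReal (cs / β) * ∫⁻ y, (L.indicator (K x) y + e) ∂ν := by
      intro x hx
      have hΦx := hΦpos x hx.1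
      have hquot : Φ x / Φ₀ x ≤ cs / β * Φ x := by
        have h₀ := (hΦ₀ x hx.1).1
        rw [hx.2] at h₀
        rw [div_le_iff₀ (hΦ₀pos x hx.1)]
        calc Φ x = cs / β * Φ x * (cs⁻¹ * β) := by field_simp
          _ ≤ cs / β * Φ x * Φ₀ x := by gcongr
      calc ENNReal.ofReal (Φ x / Φ₀ x) * (∫⁻ y in Ω, ENNReal.ofReal (G x y) ∂τ)
          ≤ ENNReal.ofReal (cs / β * Φ x) * (∫⁻ y in Ω, ENNReal.ofReal (G x y) ∂τ) := by
            gcongr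
        _ = ENNReal.ofReal (cs / β) * ∫⁻ y in Ω, ENNReal.ofReal (Φ x * G x y) ∂τ := by
            rw [ENNReal.ofReal_mul (by positivity), mul_assoc,
              ← lintegral_const_mul' _ _ ENNReal.ofReal_ne_top]
            simp_rw [ENNReal.ofReal_mul hΦx.le]
        _ ≤ ENNReal.ofReal (cs / β) *
              ∫⁻ y in Ω, ENNReal.ofReal (Φ y) * (L.indicator (K x) y + e) ∂τ := by
            gcongr 1
            exact setLIntegral_mono' hΩo.measurableSet fun y hy => hpoint x hx y hy
        _ = ENNReal.ofReal (cs / β) * ∫⁻ y, (L.indicator (K x) y + e) ∂ν := by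
            have hKx : Measurable (K x) := hKm.of_uncurry_left
            rw [hν, lintegral_withDensity_eq_lintegral_mul₀ hΦae
              ((hKx.indicator hLm).add_const e).aemeasurable]
            rfl
    have hκ : ∀ y, ∫⁻ x, K x y ∂μ ≤ ENNReal.ofReal c₀ * (D * ENNReal.ofReal β) := by
      intro y
      rw [lintegral_const_mul' _ _ ENNReal.ofReal_ne_top]
      gcongr
      refine lintegral_boundaryKernel_le (by linarith) hα ha' hβ (fun t ht => ?_) (hμsing y)
      have : (N : ℝ) - 2 + 1 = N - 1 := by ring
      rw [this]
      exact hμball y t ht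
    have hβcs : ENNReal.ofReal (cs / β) * ENNReal.ofReal β = ENNReal.ofReal cs := by
      rw [← ENNReal.ofReal_mul (by positivity), div_mul_cancel₀ _ hβ.ne']
    have hβe : ENNReal.ofReal (cs / β) * e =
        ENNReal.ofReal cs * ENNReal.ofReal E * ENNReal.ofReal (β ^ (2 * α - 1)) := by
      rw [he, ← ENNReal.ofReal_mul (by positivity), ← ENNReal.ofReal_mul (by positivity),
        ← ENNReal.ofReal_mul (by positivity), Real.rpow_sub_one hβ.ne']
      congr 1
      field_simp
    calc ∫⁻ x in Sβ, ENNReal.ofReal (Φ x / Φ₀ x) *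
          (∫⁻ y in Ω, ENNReal.ofReal (G x y) ∂τ) ∂(μH[(N : ℝ) - 1])
        ≤ ∫⁻ x in Sβ, ENNReal.ofReal (cs / β) *
            ∫⁻ y, (L.indicator (K x) y + e) ∂ν ∂(μH[(N : ℝ) - 1]) :=
          setLIntegral_mono' hSβm hinner
      _ = ENNReal.ofReal (cs / β) * ∫⁻ x, ∫⁻ y, (L.indicator (K x) y + e) ∂ν ∂μ :=
          lintegral_const_mul' _ _ ENNReal.ofReal_ne_top
      _ ≤ ENNReal.ofReal (cs / β) *
            (ENNReal.ofReal c₀ * (D * ENNReal.ofReal β) * ν L + e * M * ν univ) := by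
          gcongr
          refine (lintegral_lintegral_indicator_add_const_le hKm hLm hκ).trans ?_
          gcongr
      _ = ENNReal.ofReal (cs / β) * ENNReal.ofReal β * (ENNReal.ofReal c₀ * D) * ν L +
            ENNReal.ofReal (cs / β) * e * (M * ν univ) := by ring
      _ = _ := by rw [hβcs, hβe]; ring
  rw [ENNReal.tendsto_nhds_zero]
  intro ε hε
  have hε2 : 0 < ε / 2 := ENNReal.half_pos hε.ne'
  have hlayer := ENNReal.Tendsto.const_mul (a := ENNReal.ofReal cs * (ENNReal.ofReal c₀ * D))
    (tendsto_measure_boundaryLayer ν hΩo hfr) (Or.inr (by finiteness))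
  rw [mul_zero] at hlayer
  obtain ⟨k, hk⟩ := (ENNReal.tendsto_nhds_zero.1 hlayer _ hε2).exists
  have hr : (0 : ℝ) < 1 / ((k : ℝ) + 1) := by positivity
  obtain ⟨B, hB, hmain⟩ := main _ hr
  have hpow : Tendsto (fun β : ℝ => B * ENNReal.ofReal (β ^ (2 * α - 1))) (𝓝[>] 0) (𝓝 0) := by
    have h₁ : Tendsto (fun β : ℝ => β ^ (2 * α - 1)) (𝓝[>] 0) (𝓝 0) := by
      have := (Real.continuousAt_rpow_const 0 (2 * α - 1) (Or.inr (by linarith))).tendsto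
      rw [Real.zero_rpow (by linarith)] at this
      exact this.mono_left nhdsWithin_le_nhds
    have h₂ := ENNReal.Tendsto.const_mul (a := B) (ENNReal.tendsto_ofReal h₁) (Or.inr hB)
    simpa using h₂
  have hsmall : ∀ c : ℝ, 0 < c → ∀ᶠ β in 𝓝[>] (0 : ℝ), β < c := fun c hc =>
    nhdsWithin_le_nhds (Iio_mem_nhds hc)
  filter_upwards [self_mem_nhdsWithin, hsmall ρ hρ, hsmall β₁ hβ₁, hsmall _ (half_pos hr),
    ENNReal.tendsto_nhds_zero.1 hpow _ hε2] with β hβ h₁ h₂ h₃ h₄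
  calc _ ≤ _ := hmain β hβ h₁ h₂ h₃
    _ ≤ ε / 2 + ε / 2 := add_le_add hk h₄
    _ = ε := ENNReal.add_halves ε
end
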